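/- arXiv:0711.4457 — 2 statements merged into one kernel-verified Lean document; each statement's English description precedes it below -/
import Mathlib

section
/- Let α ∈ (1,2), let f, g ∈ L^α(S, μ) be nonzero and satisfy Assumptions (A1) and (A2) with constants ε₁, ε₂, and let ξ, η be jointly SαS with spectral pair (f, g). Let K and L be functions satisfying Assumptions (K1), (K2) and (K3). Then K(ξ) and L(η) are square-integrable and there exists a constant C (depending only on ε₁, ε₂, α, K, L, ‖f‖_α and ‖g‖_α) such that |Cov(K(ξ), L(η))| ≤ C ([f,g]₁ + [f,g]₂). (Paper's Theorem 2.4.) -/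
open MeasureTheory Real Set Filter
open scoped ENNReal Topology

noncomputable def nrm (α : ℝ) {S : Type*} [MeasurableSpace S] (μ : Measure S) (f : S → ℝ) : ℝ :=
  (∫ s, |f s| ^ α ∂μ) ^ (1 / α)

noncomputable def dep2 (α : ℝ) {S : Type*} [MeasurableSpace S] (μ : Measure S) (f g : S → ℝ) : ℝ :=
  ∫ s, |f s * g s| ^ (α / 2) ∂μ

noncomputable def dep1s (α : ℝ) {S : Type*} [MeasurableSpace S] (μ : Measure S) (f g : S → ℝ) : ℝ :=
  ∫ s, |f s| ^ (α - 1) * |g s| ∂μ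

noncomputable def dep1 (α : ℝ) {S : Type*} [MeasurableSpace S] (μ : Measure S) (f g : S → ℝ) : ℝ :=
  dep1s α μ f g + dep1s α μ g f

/-- `f ∈ L^α(S, μ)`. -/
def MemLalpha (α : ℝ) {S : Type*} [MeasurableSpace S] (μ : Measure S) (f : S → ℝ) : Prop :=
  AEStronglyMeasurable f μ ∧ Integrable (fun s => |f s| ^ α) μ

/-- Assumption (A1) with constant ε₁. -/
def A1 (α ε₁ : ℝ) {S : Type*} [MeasurableSpace S] (μ : Measure S) (f g : S → ℝ) : Prop :=
  nrm α μ f ^ (α / 2) * nrm α μ g ^ (α / 2) - dep2 α μ f g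
    ≥ ε₁ * (nrm α μ f ^ (α / 2) * nrm α μ g ^ (α / 2))

/-- Assumption (A2) with constant ε₂. -/
def A2 (α ε₂ : ℝ) {S : Type*} [MeasurableSpace S] (μ : Measure S) (f g : S → ℝ) : Prop :=
  ∀ u v : ℝ, nrm α μ (fun s => u * f s + v * g s) ^ α
    ≥ ε₂ * (|u| ^ α * nrm α μ f ^ α + |v| ^ α * nrm α μ g ^ α)

noncomputable def Ufun (α : ℝ) {S : Type*} [MeasurableSpace S] (μ : Measure S)
    (f g : S → ℝ) (u v : ℝ) : ℝ :=
  Real.exp (-(nrm α μ (fun s => u * f s + v * g s) ^ α)) -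
    Real.exp (-(nrm α μ (fun s => u * f s) ^ α) - nrm α μ (fun s => v * g s) ^ α)

/-- signed power `a^⟨p⟩ = sign(a)|a|^p`. -/
noncomputable def spow (a p : ℝ) : ℝ := Real.sign a * |a| ^ p

noncomputable def D1 (α : ℝ) {S : Type*} [MeasurableSpace S] (μ : Measure S)
    (f g : S → ℝ) (u v : ℝ) : ℝ :=
  -α * (∫ s, spow (u * f s + v * g s) (α - 1) * f s ∂μ) *
      Real.exp (-(nrm α μ (fun s => u * f s + v * g s) ^ α)) +
    α * (∫ s, spow (u * f s) (α - 1) * f s ∂μ) *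
      Real.exp (-(nrm α μ (fun s => u * f s) ^ α) - nrm α μ (fun s => v * g s) ^ α)

noncomputable def D2 (α : ℝ) {S : Type*} [MeasurableSpace S] (μ : Measure S)
    (f g : S → ℝ) (u v : ℝ) : ℝ :=
  -(α * (α - 1)) * (∫ s, (if f s = 0 ∨ g s = 0 then (0:ℝ) else
        |u * f s + v * g s| ^ (α - 2) * (f s * g s)) ∂μ) *
      Real.exp (-(nrm α μ (fun s => u * f s + v * g s) ^ α)) +
    α ^ 2 * (∫ s, spow (u * f s + v * g s) (α - 1) * f s ∂μ) *
      (∫ s, spow (u * f s + v * g s) (α - 1) * g s ∂μ) *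
      Real.exp (-(nrm α μ (fun s => u * f s + v * g s) ^ α)) -
    α ^ 2 * (∫ s, spow (u * f s) (α - 1) * f s ∂μ) *
      (∫ s, spow (v * g s) (α - 1) * g s ∂μ) *
      Real.exp (-(nrm α μ (fun s => u * f s) ^ α) - nrm α μ (fun s => v * g s) ^ α)

/-- `(ξ, η)` is jointly SαS with spectral pair `(f, g)`. -/
def JointSAS (α : ℝ) {S : Type*} [MeasurableSpace S] (μ : Measure S) (f g : S → ℝ)
    {Ω : Type*} [MeasurableSpace Ω] (P : Measure Ω) (ξ η : Ω → ℝ) : Prop :=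
  ∀ u v : ℝ, (∫ ω, Complex.exp (Complex.I * ((u * ξ ω + v * η ω : ℝ) : ℂ)) ∂P)
    = Complex.exp (-((nrm α μ (fun s => u * f s + v * g s) ^ α : ℝ) : ℂ))

lemma shift_contour (G : ℂ → ℂ) (hG : Differentiable ℂ G) (b : ℝ → ℝ) (hb : Integrable b)
    (hb0 : Tendsto b atTop (𝓝 0)) (hb1 : Tendsto b atBot (𝓝 0))
    (hGb : ∀ u τ : ℝ, |τ| ≤ 1 → ‖G (u + τ * Complex.I)‖ ≤ b u) (τ : ℝ) (hτ : |τ| ≤ 1) :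
    ∫ u : ℝ, G u = ∫ u : ℝ, G (u + τ * Complex.I) := by
  have hintg : ∀ τ : ℝ, |τ| ≤ 1 → Integrable (fun u : ℝ => G (u + τ * Complex.I)) := by
    intro τ hτ
    refine hb.mono' ?_ (Eventually.of_forall fun u => hGb u τ hτ)
    exact (hG.continuous.comp (by fun_prop)).aestronglyMeasurable
  have h0 : Tendsto (fun T : ℝ => ∫ u in (-T)..T, G (u + (0:ℝ) * Complex.I)) atTop
      (𝓝 (∫ u : ℝ, G (u + (0:ℝ) * Complex.I))) :=
    intervalIntegral_tendsto_integral (hintg 0 (by simp)) tendsto_neg_atTop_atBot tendsto_id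
  have h1 : Tendsto (fun T : ℝ => ∫ u in (-T)..T, G (u + τ * Complex.I)) atTop
      (𝓝 (∫ u : ℝ, G (u + τ * Complex.I))) :=
    intervalIntegral_tendsto_integral (hintg τ hτ) tendsto_neg_atTop_atBot tendsto_id
  have habs : ∀ y ∈ uIoc (0:ℝ) τ, |y| ≤ 1 := by
    intro y hy
    have := abs_sub_left_of_mem_uIcc (uIoc_subset_uIcc hy)
    simp at this
    linarith
  have hv : ∀ T : ℝ, ‖∫ y in (0:ℝ)..τ, G (T + y * Complex.I)‖ ≤ b T * |τ - 0| := by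
    intro T
    exact intervalIntegral.norm_integral_le_of_norm_le_const (fun y hy => hGb T y (habs y hy))
  have hv0 : Tendsto (fun T : ℝ => ∫ y in (0:ℝ)..τ, G (T + y * Complex.I)) atTop (𝓝 0) := by
    refine squeeze_zero_norm hv ?_
    simpa using hb0.mul_const |τ - 0|
  have hv1 : Tendsto (fun T : ℝ => ∫ y in (0:ℝ)..τ, G (((-T : ℝ) : ℂ) + y * Complex.I)) atTop (𝓝 0) := by
    refine squeeze_zero_norm (fun T => hv (-T)) ?_
    simpa using (hb1.comp tendsto_neg_atTop_atBot).mul_const |τ - 0|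
  have key : ∀ T : ℝ, (∫ u in (-T)..T, G (u + (0:ℝ) * Complex.I)) - (∫ u in (-T)..T, G (u + τ * Complex.I))
      + Complex.I • (∫ y in (0:ℝ)..τ, G (T + y * Complex.I))
      - Complex.I • (∫ y in (0:ℝ)..τ, G (((-T : ℝ) : ℂ) + y * Complex.I)) = 0 := by
    intro T
    have := Complex.integral_boundary_rect_eq_zero_of_differentiableOn G ((-T : ℝ) : ℂ) (T + τ * Complex.I)
      hG.differentiableOn
    simpa using this
  have hlim := ((h0.sub h1).add (hv0.const_smul Complex.I)).sub (hv1.const_smul Complex.I)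
  have hlim0 := tendsto_nhds_unique (hlim.congr key) tendsto_const_nhds
  simp at hlim0
  exact (sub_eq_zero.mp hlim0)

noncomputable def ee (c u : ℝ) : ℝ := (1 + |u|) * Real.exp (-c * |u|)

lemma ee_nonneg (c u : ℝ) : 0 ≤ ee c u := by unfold ee; positivity

lemma ee_cont (c : ℝ) : Continuous (ee c) := by unfold ee; fun_prop

lemma ee_le (c : ℝ) (hc : 0 < c) (u : ℝ) : ee c u ≤ (1 + 2 / c) * Real.exp (-(c / 2) * |u|) := by
  unfold ee
  have h1 : c / 2 * |u| + 1 ≤ Real.exp (c / 2 * |u|) := Real.add_one_le_exp _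
  have h2 : 1 + |u| ≤ (1 + 2 / c) * Real.exp (c / 2 * |u|) := by
    have h3 : 0 ≤ c / 2 * |u| := by positivity
    have h4 : 1 ≤ Real.exp (c / 2 * |u|) := by linarith
    have h5 : |u| = 2 / c * (c / 2 * |u|) := by field_simp
    have h6 : 2 / c * (c / 2 * |u|) ≤ 2 / c * Real.exp (c / 2 * |u|) := by
      apply mul_le_mul_of_nonneg_left _ (by positivity); linarith
    nlinarith
  calc (1 + |u|) * Real.exp (-c * |u|)
      ≤ ((1 + 2 / c) * Real.exp (c / 2 * |u|)) * Real.exp (-c * |u|) := by gcongr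
    _ = _ := by rw [mul_assoc, ← Real.exp_add]; congr 2; ring

lemma exp_abs_integrable (c : ℝ) (hc : 0 < c) : Integrable (fun u : ℝ => Real.exp (-c * |u|)) := by
  rw [← integrableOn_univ, ← Iic_union_Ioi (a := (0:ℝ))]
  refine IntegrableOn.union ?_ ?_
  · refine (integrableOn_exp_mul_Iic hc 0).congr_fun (fun x hx => ?_) measurableSet_Iic
    have hx' : x ≤ 0 := hx
    simp only [abs_of_nonpos hx']; congr 1; ring
  · refine (integrableOn_exp_mul_Ioi (show -c < 0 by linarith) 0).congr_fun (fun x hx => ?_) measurableSet_Ioi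
    have hx' : 0 < x := hx
    simp only [abs_of_pos hx']

lemma ee_integrable (c : ℝ) (hc : 0 < c) : Integrable (ee c) := by
  refine ((exp_abs_integrable (c/2) (by linarith)).const_mul (1 + 2 / c)).mono'
    (ee_cont c).aestronglyMeasurable (Eventually.of_forall fun u => ?_)
  rw [Real.norm_of_nonneg (ee_nonneg c u)]
  exact ee_le c hc u

lemma ee_tendsto (c : ℝ) (hc : 0 < c) (l : Filter ℝ) (hl : Tendsto (fun u : ℝ => |u|) l atTop) :
    Tendsto (ee c) l (𝓝 0) := by
  refine squeeze_zero (ee_nonneg c) (ee_le c hc) ?_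
  have : Tendsto (fun u : ℝ => Real.exp (-(c/2) * |u|)) l (𝓝 0) := by
    refine Real.tendsto_exp_atBot.comp ?_
    exact hl.const_mul_atTop_of_neg (by linarith)
  simpa using this.const_mul (1 + 2 / c)

noncomputable def nn (x : ℝ × ℝ) : ℝ := |x.1| + |x.2|

lemma nn_nonneg (x : ℝ × ℝ) : 0 ≤ nn x := by unfold nn; positivity

lemma norm_sin_le (ζ : ℂ) : ‖Complex.sin ζ‖ ≤ ‖ζ‖ * Real.exp ‖ζ‖ := by
  have h : ∀ w : ℂ, ‖Complex.exp w - 1‖ ≤ ‖w‖ * Real.exp ‖w‖ := by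
    intro w
    have := Complex.norm_exp_sub_sum_le_norm_mul_exp w 1
    simpa using this
  have h1 := h (-ζ * Complex.I)
  have h2 := h (ζ * Complex.I)
  simp at h1 h2
  have : Complex.sin ζ = ((Complex.exp (-ζ * Complex.I) - 1) - (Complex.exp (ζ * Complex.I) - 1)) * Complex.I / 2 := by
    rw [Complex.sin]; ring
  rw [this]
  simp only [norm_div, norm_mul, Complex.norm_I]
  have h3 := norm_sub_le (Complex.exp (-ζ * Complex.I) - 1) (Complex.exp (ζ * Complex.I) - 1)
  simp at h3 ⊢
  linarith

lemma norm_one_sub_cos_le (ζ : ℂ) : ‖1 - Complex.cos ζ‖ ≤ ‖ζ‖ ^ 2 * Real.exp ‖ζ‖ := by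
  have h : 1 - Complex.cos ζ = 2 * Complex.sin (ζ / 2) ^ 2 := by
    have h1 := Complex.cos_two_mul (ζ / 2)
    have h2 := Complex.sin_sq_add_cos_sq (ζ / 2)
    rw [show 2 * (ζ / 2) = ζ by ring] at h1
    rw [h1]; linear_combination (-2 : ℂ) * h2
  have h3 := norm_sin_le (ζ / 2)
  rw [h, norm_mul, norm_pow]
  have h4 : ‖ζ / 2‖ = ‖ζ‖ / 2 := by simp
  rw [h4] at h3
  have h5 : ‖Complex.sin (ζ / 2)‖ ^ 2 ≤ (‖ζ‖ / 2 * Real.exp (‖ζ‖ / 2)) ^ 2 := by gcongr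
  have h6 : Real.exp (‖ζ‖ / 2) ^ 2 = Real.exp ‖ζ‖ := by
    rw [← Real.exp_nat_mul]; congr 1; push_cast; ring
  rw [mul_pow, h6] at h5
  have h7 : 0 ≤ ‖ζ‖ ^ 2 * Real.exp ‖ζ‖ := by positivity
  simp
  nlinarith

lemma diff_param (ν : Measure (ℝ × ℝ)) (hs : ∀ᵐ x ∂ν, nn x ≤ 1)
    (hi : Integrable (fun x => nn x ^ 2) ν) (p q : ℝ × ℝ → ℂ) (hp : Measurable p) (hq : Measurable q)
    (Q : ℝ) (hQ : 0 ≤ Q) (hpn : ∀ x, ‖p x‖ ≤ nn x) (hqn : ∀ x, ‖q x‖ ≤ Q * nn x) :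
    Differentiable ℂ (fun t : ℂ => ∫ x, (1 - Complex.cos (t * p x + q x)) ∂ν) := by
  intro t₀
  have hζ : ∀ t x, ‖t * p x + q x‖ ≤ (‖t‖ + Q) * nn x := by
    intro t x
    calc ‖t * p x + q x‖ ≤ ‖t‖ * ‖p x‖ + ‖q x‖ := by
          refine (norm_add_le _ _).trans ?_; rw [norm_mul]
      _ ≤ ‖t‖ * nn x + Q * nn x := by gcongr; exacts [hpn x, hqn x]
      _ = _ := by ring
  have := hasDerivAt_integral_of_dominated_loc_of_deriv_le (𝕜 := ℂ) (μ := ν)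
    (F := fun t x => 1 - Complex.cos (t * p x + q x))
    (F' := fun t x => Complex.sin (t * p x + q x) * p x) (x₀ := t₀) (s := Metric.ball t₀ 1)
    (bound := fun x => ((‖t₀‖ + 1 + Q) * Real.exp (‖t₀‖ + 1 + Q)) * nn x ^ 2)
    (Metric.ball_mem_nhds _ one_pos)
    (Eventually.of_forall fun t => by
      apply Measurable.aestronglyMeasurable; fun_prop)
    (by
      refine (hi.const_mul ((‖t₀‖ + Q) ^ 2 * Real.exp (‖t₀‖ + Q))).mono' (by
        apply Measurable.aestronglyMeasurable; fun_prop) ?_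
      filter_upwards [hs] with x hx
      refine (norm_one_sub_cos_le _).trans ?_
      have h1 := hζ t₀ x
      have h0 := nn_nonneg x
      have h2 : ‖t₀ * p x + q x‖ ≤ ‖t₀‖ + Q := h1.trans (by
        have : 0 ≤ ‖t₀‖ + Q := by positivity
        nlinarith)
      calc _ ≤ ((‖t₀‖ + Q) * nn x) ^ 2 * Real.exp (‖t₀‖ + Q) := by gcongr
        _ = _ := by ring)
    (by apply Measurable.aestronglyMeasurable; fun_prop)
    (by
      filter_upwards [hs] with x hx t ht
      have ht' : ‖t‖ ≤ ‖t₀‖ + 1 := by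
        have : ‖t - t₀‖ < 1 := by simpa [dist_eq_norm] using ht
        have := norm_le_norm_add_norm_sub' t t₀
        linarith
      rw [norm_mul]
      have h1 := hζ t x
      have h0 := nn_nonneg x
      have h3 : ‖t * p x + q x‖ ≤ (‖t₀‖ + 1 + Q) * nn x := h1.trans (by gcongr)
      have h2 : ‖t * p x + q x‖ ≤ ‖t₀‖ + 1 + Q := h3.trans (by
        have : 0 ≤ ‖t₀‖ + 1 + Q := by positivity
        nlinarith)
      calc _ ≤ (‖t * p x + q x‖ * Real.exp (‖t * p x + q x‖)) * nn x := by
            gcongr; exacts [norm_sin_le _, hpn x]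
        _ ≤ (((‖t₀‖ + 1 + Q) * nn x) * Real.exp (‖t₀‖ + 1 + Q)) * nn x := by gcongr
        _ = _ := by ring)
    (hi.const_mul _)
    (Eventually.of_forall fun x t _ => by
      have h1 : HasDerivAt (fun t : ℂ => t * p x + q x) (p x) t := by
        simpa using ((hasDerivAt_id t).mul_const (p x)).add_const (q x)
      have h2 := (h1.ccos).const_sub 1
      convert h2 using 1; ring)
  exact this.2.differentiableAt

noncomputable def psC (ν : Measure (ℝ × ℝ)) (z w : ℂ) : ℂ :=
  ∫ x, (1 - Complex.cos (z * (x.1 : ℂ) + w * (x.2 : ℂ))) ∂ν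

noncomputable def psR (ν : Measure (ℝ × ℝ)) (u v : ℝ) : ℝ :=
  ∫ x, (1 - Real.cos (u * x.1 + v * x.2)) ∂ν

lemma psC_real (ν : Measure (ℝ × ℝ)) (u v : ℝ) : psC ν u v = ((psR ν u v : ℝ) : ℂ) := by
  unfold psC psR
  rw [← integral_complex_ofReal]
  congr 1; ext x; push_cast; rfl

lemma psC_diff1 (ν : Measure (ℝ × ℝ)) (hs : ∀ᵐ x ∂ν, nn x ≤ 1)
    (hi : Integrable (fun x => nn x ^ 2) ν) (w : ℂ) : Differentiable ℂ (fun z => psC ν z w) := by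
  refine diff_param ν hs hi (fun x => (x.1 : ℂ)) (fun x => w * (x.2 : ℂ)) (by fun_prop) (by fun_prop)
    ‖w‖ (norm_nonneg _) ?_ ?_
  · intro x; simp [nn]
  · intro x; simp only [norm_mul, nn]; gcongr; simp

lemma psC_diff2 (ν : Measure (ℝ × ℝ)) (hs : ∀ᵐ x ∂ν, nn x ≤ 1)
    (hi : Integrable (fun x => nn x ^ 2) ν) (z : ℂ) : Differentiable ℂ (fun w => psC ν z w) := by
  have := diff_param ν hs hi (fun x => (x.2 : ℂ)) (fun x => z * (x.1 : ℂ)) (by fun_prop) (by fun_prop)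
    ‖z‖ (norm_nonneg _) (by intro x; simp [nn]) (by
      intro x; simp only [norm_mul, nn]; gcongr; simp)
  unfold psC
  simpa only [add_comm] using this

lemma psC_integrable (ν : Measure (ℝ × ℝ)) (hs : ∀ᵐ x ∂ν, nn x ≤ 1)
    (hi : Integrable (fun x => nn x ^ 2) ν) (z w : ℂ) :
    Integrable (fun x : ℝ × ℝ => 1 - Complex.cos (z * (x.1 : ℂ) + w * (x.2 : ℂ))) ν := by
  refine (hi.const_mul ((‖z‖ + ‖w‖) ^ 2 * Real.exp (‖z‖ + ‖w‖))).mono' (by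
        apply Measurable.aestronglyMeasurable; fun_prop) ?_
  filter_upwards [hs] with x hx
  refine (norm_one_sub_cos_le _).trans ?_
  have h0 := nn_nonneg x
  have h1 : ‖z * (x.1 : ℂ) + w * (x.2 : ℂ)‖ ≤ (‖z‖ + ‖w‖) * nn x := by
    refine (norm_add_le _ _).trans ?_
    simp only [norm_mul, nn, Complex.norm_real, Real.norm_eq_abs]
    nlinarith [norm_nonneg z, norm_nonneg w, abs_nonneg x.1, abs_nonneg x.2,
      mul_nonneg (norm_nonneg z) (abs_nonneg x.2), mul_nonneg (norm_nonneg w) (abs_nonneg x.1)]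
  have h2 : ‖z * (x.1 : ℂ) + w * (x.2 : ℂ)‖ ≤ ‖z‖ + ‖w‖ := h1.trans (by
    have : 0 ≤ ‖z‖ + ‖w‖ := by positivity
    nlinarith)
  calc _ ≤ ((‖z‖ + ‖w‖) * nn x) ^ 2 * Real.exp (‖z‖ + ‖w‖) := by gcongr
    _ = _ := by ring

lemma psC_re_ge (ν : Measure (ℝ × ℝ)) (hs : ∀ᵐ x ∂ν, nn x ≤ 1)
    (hi : Integrable (fun x => nn x ^ 2) ν) (u v τ σ : ℝ) (hτ : |τ| ≤ 1) (hσ : |σ| ≤ 1) :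
    psR ν u v - ∫ x, nn x ^ 2 ∂ν ≤ (psC ν (u + τ * Complex.I) (v + σ * Complex.I)).re := by
  have h1 := psC_integrable ν hs hi (u + τ * Complex.I) (v + σ * Complex.I)
  have h2 := (psC_integrable ν hs hi u v).re
  have h3 : Integrable (fun x : ℝ × ℝ => (1 - Real.cos (u * x.1 + v * x.2))) ν := by
    refine h2.congr (Eventually.of_forall fun x => ?_)
    have : (1 - Complex.cos (u * (x.1 : ℂ) + v * (x.2 : ℂ))) = ((1 - Real.cos (u * x.1 + v * x.2) : ℝ) : ℂ) := by
      push_cast; rfl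
    simp only [this]; exact Complex.ofReal_re _
  have h4 : (psC ν (u + τ * Complex.I) (v + σ * Complex.I)).re
      = ∫ x : ℝ × ℝ, (1 - Complex.cos ((u + τ * Complex.I) * (x.1 : ℂ) + (v + σ * Complex.I) * (x.2 : ℂ))).re ∂ν := by
    unfold psC
    exact (integral_re h1).symm
  rw [h4]
  unfold psR
  rw [← integral_sub h3 hi]
  refine integral_mono_ae (h3.sub hi) h1.re ?_
  filter_upwards [hs] with x hx
  have h5 : ((u + τ * Complex.I) * (x.1 : ℂ) + (v + σ * Complex.I) * (x.2 : ℂ))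
      = ((u * x.1 + v * x.2 : ℝ) : ℂ) + ((τ * x.1 + σ * x.2 : ℝ) : ℂ) * Complex.I := by
    push_cast; ring
  rw [h5, Complex.cos_add_mul_I]
  set a := u * x.1 + v * x.2
  set b := τ * x.1 + σ * x.2 with hb
  rw [← Complex.ofReal_cos, ← Complex.ofReal_cosh, ← Complex.ofReal_sin, ← Complex.ofReal_sinh]
  have h6 : ∀ p q r s : ℝ, (1 - ((p : ℂ) * (q : ℂ) - (r : ℂ) * (s : ℂ) * Complex.I)).re = 1 - p * q := by
    intro p q r s; simp
  change _ ≤ (1 - (((Real.cos a : ℝ) : ℂ) * ((Real.cosh b : ℝ) : ℂ) - ((Real.sin a : ℝ) : ℂ) * ((Real.sinh b : ℝ) : ℂ) * Complex.I)).re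
  rw [h6]
  have hbn : |b| ≤ nn x := by
    calc |b| ≤ |τ * x.1| + |σ * x.2| := abs_add_le _ _
      _ = |τ| * |x.1| + |σ| * |x.2| := by rw [abs_mul, abs_mul]
      _ ≤ 1 * |x.1| + 1 * |x.2| := by gcongr
      _ = nn x := by unfold nn; ring
  have hb1 : |b| ≤ 1 := hbn.trans hx
  have hch : Real.cosh b - 1 ≤ b ^ 2 := by
    have e1 := Real.abs_exp_sub_one_sub_id_le hb1
    have e2 := Real.abs_exp_sub_one_sub_id_le (x := -b) (by simpa using hb1)
    rw [Real.cosh_eq]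
    have := (abs_le.mp e1).2
    have := (abs_le.mp e2).2
    nlinarith
  have hb2 : b ^ 2 ≤ nn x ^ 2 := by
    rw [← sq_abs b]; gcongr
  have hc1 := Real.cos_le_one a
  have hcm := Real.neg_one_le_cos a
  have hch1 := Real.one_le_cosh b
  nlinarith

noncomputable def FI (Φ : ℝ × ℝ → ℂ) (x : ℝ × ℝ) : ℂ :=
  ∫ z : ℝ × ℝ, Complex.exp (-(Complex.I * ((z.1 : ℂ) * (x.1 : ℂ) + (z.2 : ℂ) * (x.2 : ℂ)))) * Φ z

lemma norm_kernel (a b : ℝ) (x : ℝ × ℝ) :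
    ‖Complex.exp (-(Complex.I * ((a : ℂ) * (x.1 : ℂ) + (b : ℂ) * (x.2 : ℂ))))‖ = 1 := by
  rw [Complex.norm_exp]
  simp

lemma psC_meas (ν : Measure (ℝ × ℝ)) [SFinite ν] {X : Type*} [MeasurableSpace X] (p q : X → ℂ)
    (hp : Measurable p) (hq : Measurable q) : Measurable (fun t => psC ν (p t) (q t)) := by
  have : StronglyMeasurable (fun t : X => ∫ x : ℝ × ℝ, (1 - Complex.cos (p t * (x.1 : ℂ) + q t * (x.2 : ℂ))) ∂ν) := by
    apply StronglyMeasurable.integral_prod_right' (f := fun y : X × (ℝ × ℝ) =>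
      (1 - Complex.cos (p y.1 * (y.2.1 : ℂ) + q y.1 * (y.2.2 : ℂ))))
    apply Measurable.stronglyMeasurable
    fun_prop
  exact this.measurable

lemma psi_decay (ν : Measure (ℝ × ℝ)) (hs : ∀ᵐ x ∂ν, nn x ≤ 1)
    (hi : Integrable (fun x => nn x ^ 2) ν) (c C0 C1 : ℝ)
    (hC0 : ∫ x, nn x ^ 2 ∂ν ≤ C0)
    (hlow : ∀ u v : ℝ, c * (|u| + |v|) - C1 ≤ psR ν u v)
    (u v τ σ : ℝ) (hτ : |τ| ≤ 1) (hσ : |σ| ≤ 1) :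
    ‖Complex.exp (-psC ν (u + τ * Complex.I) (v + σ * Complex.I))‖
      ≤ Real.exp (C0 + C1) * (Real.exp (-c * |u|) * Real.exp (-c * |v|)) := by
  rw [Complex.norm_exp, ← Real.exp_add, ← Real.exp_add]
  apply Real.exp_le_exp.mpr
  have := psC_re_ge ν hs hi u v τ σ hτ hσ
  have := hlow u v
  rw [Complex.neg_re]
  linarith

lemma lemmaQ (ν : Measure (ℝ × ℝ)) [SFinite ν] (hs : ∀ᵐ x ∂ν, nn x ≤ 1)
    (hi : Integrable (fun x => nn x ^ 2) ν) (c C0 C1 : ℝ) (hc : 0 < c)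
    (hC0 : ∫ x, nn x ^ 2 ∂ν ≤ C0)
    (hlow : ∀ u v : ℝ, c * (|u| + |v|) - C1 ≤ psR ν u v)
    (s1 s2 : ℂ → ℂ) (hs1 : Differentiable ℂ s1) (hs2 : Differentiable ℂ s2) (M1 M2 : ℝ)
    (hM1 : 0 ≤ M1) (hM2 : 0 ≤ M2)
    (hb1 : ∀ u τ : ℝ, |τ| ≤ 1 → ‖s1 (u + τ * Complex.I)‖ ≤ M1 * (1 + |u|))
    (hb2 : ∀ u τ : ℝ, |τ| ≤ 1 → ‖s2 (u + τ * Complex.I)‖ ≤ M2 * (1 + |u|)) (x : ℝ × ℝ) :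
    Integrable (fun z : ℝ × ℝ => s1 z.1 * s2 z.2 * Complex.exp (-psC ν z.1 z.2)) ∧
    ‖FI (fun z : ℝ × ℝ => s1 z.1 * s2 z.2 * Complex.exp (-psC ν z.1 z.2)) x‖
      ≤ M1 * M2 * (Real.exp (C0 + C1) * (∫ u, ee c u) ^ 2) * (Real.exp (-|x.1|) * Real.exp (-|x.2|)) := by
  set D := M1 * M2 * Real.exp (C0 + C1) with hD
  have hD0 : 0 ≤ D := by positivity
  have hΦ : ∀ u v τ σ : ℝ, |τ| ≤ 1 → |σ| ≤ 1 →
      ‖s1 (u + τ * Complex.I) * s2 (v + σ * Complex.I) *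
        Complex.exp (-psC ν (u + τ * Complex.I) (v + σ * Complex.I))‖ ≤ D * (ee c u * ee c v) := by
    intro u v τ σ hτ hσ
    rw [norm_mul, norm_mul]
    calc _ ≤ (M1 * (1 + |u|)) * (M2 * (1 + |v|)) *
          (Real.exp (C0 + C1) * (Real.exp (-c * |u|) * Real.exp (-c * |v|))) := by
          gcongr
          · exact hb1 u τ hτ
          · exact hb2 v σ hσ
          · exact psi_decay ν hs hi c C0 C1 hC0 hlow u v τ σ hτ hσ
      _ = _ := by unfold ee; rw [hD]; ring
  have heint : Integrable (fun z : ℝ × ℝ => ee c z.1 * ee c z.2) :=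
    (ee_integrable c hc).mul_prod (ee_integrable c hc)
  have hm : ∀ τ σ : ℝ, Measurable (fun z : ℝ × ℝ => s1 (z.1 + τ * Complex.I) * s2 (z.2 + σ * Complex.I) *
        Complex.exp (-psC ν (z.1 + τ * Complex.I) (z.2 + σ * Complex.I))) := by
    intro τ σ
    have m1 := hs1.continuous.measurable
    have m2 := hs2.continuous.measurable
    have m3 := psC_meas ν (fun z : ℝ × ℝ => (z.1 : ℂ) + τ * Complex.I) (fun z : ℝ × ℝ => (z.2 : ℂ) + σ * Complex.I)
      (by fun_prop) (by fun_prop)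
    fun_prop
  constructor
  · refine (heint.const_mul D).mono' ?_ (Eventually.of_forall fun z => ?_)
    · have := hm 0 0
      simp at this
      exact this.aestronglyMeasurable
    · have := hΦ z.1 z.2 0 0 (by simp) (by simp)
      simpa using this
  set H : ℂ → ℂ → ℂ := fun z w => Complex.exp (-(Complex.I * (z * (x.1 : ℂ) + w * (x.2 : ℂ)))) *
    (s1 z * s2 w * Complex.exp (-psC ν z w)) with hH
  have hHn : ∀ u v τ σ : ℝ, |τ| ≤ 1 → |σ| ≤ 1 → ‖H (u + τ * Complex.I) (v + σ * Complex.I)‖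
      ≤ Real.exp (τ * x.1 + σ * x.2) * (D * (ee c u * ee c v)) := by
    intro u v τ σ hτ hσ
    rw [hH]; simp only
    rw [norm_mul]
    gcongr
    · rw [Complex.norm_exp]
      apply le_of_eq; congr 1; simp
    · exact hΦ u v τ σ hτ hσ
  have hHd1 : ∀ w, Differentiable ℂ (fun z => H z w) := by
    intro w
    have := psC_diff1 ν hs hi w
    rw [hH]; fun_prop
  have hHd2 : ∀ z, Differentiable ℂ (fun w => H z w) := by
    intro z
    have := psC_diff2 ν hs hi z
    rw [hH]; fun_prop
  have hHint : ∀ τ σ : ℝ, |τ| ≤ 1 → |σ| ≤ 1 →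
      Integrable (fun z : ℝ × ℝ => H (z.1 + τ * Complex.I) (z.2 + σ * Complex.I)) := by
    intro τ σ hτ hσ
    refine ((heint.const_mul D).const_mul (Real.exp (τ * x.1 + σ * x.2))).mono' ?_
      (Eventually.of_forall fun z => hHn z.1 z.2 τ σ hτ hσ)
    have := hm τ σ
    rw [hH]
    apply Measurable.aestronglyMeasurable
    fun_prop
  have hexp : ∀ τ σ : ℝ, |τ| ≤ 1 → |σ| ≤ 1 → Real.exp (τ * x.1 + σ * x.2) ≤ Real.exp (|x.1| + |x.2|) := by
    intro τ σ hτ hσ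
    apply Real.exp_le_exp.mpr
    have e1 : τ * x.1 ≤ |x.1| := by
      refine (le_abs_self _).trans ?_; rw [abs_mul]; nlinarith [abs_nonneg x.1]
    have e2 : σ * x.2 ≤ |x.2| := by
      refine (le_abs_self _).trans ?_; rw [abs_mul]; nlinarith [abs_nonneg x.2]
    linarith
  have htop : Tendsto (ee c) atTop (𝓝 0) := ee_tendsto c hc _ tendsto_abs_atTop_atTop
  have hbot : Tendsto (ee c) atBot (𝓝 0) := ee_tendsto c hc _ tendsto_abs_atBot_atTop
  -- choose the shifts
  obtain ⟨τ, hτ, hτx⟩ : ∃ τ : ℝ, |τ| ≤ 1 ∧ τ * x.1 = -|x.1| := by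
    rcases le_total 0 x.1 with h | h
    · exact ⟨-1, by simp, by rw [abs_of_nonneg h]; ring⟩
    · exact ⟨1, by simp, by rw [abs_of_nonpos h]; ring⟩
  obtain ⟨σ, hσ, hσx⟩ : ∃ σ : ℝ, |σ| ≤ 1 ∧ σ * x.2 = -|x.2| := by
    rcases le_total 0 x.2 with h | h
    · exact ⟨-1, by simp, by rw [abs_of_nonneg h]; ring⟩
    · exact ⟨1, by simp, by rw [abs_of_nonpos h]; ring⟩
  have step1 : ∀ u : ℝ, ∫ v : ℝ, H u v = ∫ v : ℝ, H u (v + σ * Complex.I) := by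
    intro u
    refine shift_contour (fun w => H u w) (hHd2 u)
      (fun v => (Real.exp (|x.1| + |x.2|) * D * ee c u) * ee c v)
      ((ee_integrable c hc).const_mul _) (by simpa using htop.const_mul _)
      (by simpa using hbot.const_mul _) ?_ σ hσ
    intro v σ' hσ'
    have := hHn u v 0 σ' (by simp) hσ'
    simp only [Complex.ofReal_zero, zero_mul, add_zero] at this
    refine this.trans ?_
    have h9 := hexp 0 σ' (by simp) hσ'
    simp only [zero_mul] at h9
    calc _ ≤ Real.exp (|x.1| + |x.2|) * (D * (ee c u * ee c v)) := by
          have := ee_nonneg c u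
          have := ee_nonneg c v
          gcongr
      _ = _ := by ring
  have step2 : ∀ v : ℝ, ∫ u : ℝ, H u (v + σ * Complex.I) = ∫ u : ℝ, H (u + τ * Complex.I) (v + σ * Complex.I) := by
    intro v
    refine shift_contour (fun z => H z (v + σ * Complex.I)) (hHd1 _)
      (fun u => (Real.exp (|x.1| + |x.2|) * D * ee c v) * ee c u)
      ((ee_integrable c hc).const_mul _) (by simpa using htop.const_mul _)
      (by simpa using hbot.const_mul _) ?_ τ hτ
    intro u τ' hτ'
    refine (hHn u v τ' σ hτ' hσ).trans ?_
    have h9 := hexp τ' σ hτ' hσ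
    calc _ ≤ Real.exp (|x.1| + |x.2|) * (D * (ee c u * ee c v)) := by
          have := ee_nonneg c u
          have := ee_nonneg c v
          gcongr
      _ = _ := by ring
  have i00 : Integrable (fun z : ℝ × ℝ => H z.1 z.2) := by
    simpa using hHint 0 0 (by simp) (by simp)
  have i0σ : Integrable (fun z : ℝ × ℝ => H z.1 (z.2 + σ * Complex.I)) := by
    simpa using hHint 0 σ (by simp) hσ
  have iτσ := hHint τ σ hτ hσ
  have hFI : FI (fun z : ℝ × ℝ => s1 z.1 * s2 z.2 * Complex.exp (-psC ν z.1 z.2)) x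
      = ∫ z : ℝ × ℝ, H (z.1 + τ * Complex.I) (z.2 + σ * Complex.I) := by
    calc _ = ∫ z : ℝ × ℝ, H z.1 z.2 := rfl
      _ = ∫ u : ℝ, ∫ v : ℝ, H u v := integral_prod _ i00
      _ = ∫ u : ℝ, ∫ v : ℝ, H u (v + σ * Complex.I) := by simp_rw [step1]
      _ = ∫ v : ℝ, ∫ u : ℝ, H u (v + σ * Complex.I) := integral_integral_swap i0σ
      _ = ∫ v : ℝ, ∫ u : ℝ, H (u + τ * Complex.I) (v + σ * Complex.I) := by simp_rw [step2]
      _ = ∫ u : ℝ, ∫ v : ℝ, H (u + τ * Complex.I) (v + σ * Complex.I) := (integral_integral_swap iτσ).symm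
      _ = _ := (integral_prod _ iτσ).symm
  rw [hFI]
  refine (norm_integral_le_of_norm_le ((heint.const_mul D).const_mul (Real.exp (τ * x.1 + σ * x.2)))
    (Eventually.of_forall fun z => hHn z.1 z.2 τ σ hτ hσ)).trans (le_of_eq ?_)
  rw [integral_const_mul, integral_const_mul]
  have : ∫ z : ℝ × ℝ, ee c z.1 * ee c z.2 = (∫ u, ee c u) * ∫ u, ee c u := integral_prod_mul (ee c) (ee c)
  rw [this, hτx, hσx, Real.exp_add, hD]
  ring

noncomputable def wt (β : ℝ) (x : ℝ × ℝ) : ℝ := (1 + |x.1|) ^ β * (1 + |x.2|) ^ β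

noncomputable def WN (β : ℝ) (F : ℝ × ℝ → ℂ) : ℝ≥0∞ :=
  ∫⁻ x : ℝ × ℝ, ENNReal.ofReal (wt β x) * ‖F x‖ₑ

lemma wt_nonneg (β : ℝ) (x : ℝ × ℝ) : 0 ≤ wt β x := by unfold wt; positivity

lemma wt_meas (β : ℝ) : Measurable (wt β) := by unfold wt; fun_prop

lemma w1_add (β : ℝ) (hβ : 0 ≤ β) (a b : ℝ) : (1 + |a + b|) ^ β ≤ (1 + |a|) ^ β * (1 + |b|) ^ β := by
  rw [← Real.mul_rpow (by positivity) (by positivity)]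
  apply Real.rpow_le_rpow (by positivity) _ hβ
  have := abs_add_le a b
  nlinarith [abs_nonneg a, abs_nonneg b, mul_nonneg (abs_nonneg a) (abs_nonneg b)]

lemma wt_add (β : ℝ) (hβ : 0 ≤ β) (x y : ℝ × ℝ) : wt β (x + y) ≤ wt β x * wt β y := by
  have h1 := w1_add β hβ x.1 y.1
  have h2 := w1_add β hβ x.2 y.2
  unfold wt
  calc _ ≤ ((1 + |x.1|) ^ β * (1 + |y.1|) ^ β) * ((1 + |x.2|) ^ β * (1 + |y.2|) ^ β) := by
        simp only [Prod.fst_add, Prod.snd_add]; gcongr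
    _ = _ := by ring

lemma wt_neg (β : ℝ) (x : ℝ × ℝ) : wt β (-x) = wt β x := by simp [wt]

lemma FI_meas (Φ : ℝ × ℝ → ℂ) (hΦ : Measurable Φ) : Measurable (FI Φ) := by
  unfold FI
  apply StronglyMeasurable.measurable
  apply StronglyMeasurable.integral_prod_right' (f := fun y : (ℝ × ℝ) × (ℝ × ℝ) =>
    Complex.exp (-(Complex.I * ((y.2.1 : ℂ) * (y.1.1 : ℂ) + (y.2.2 : ℂ) * (y.1.2 : ℂ)))) * Φ y.2)
  apply Measurable.stronglyMeasurable
  fun_prop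

lemma FI_integrand (Φ : ℝ × ℝ → ℂ) (hi : Integrable Φ) (x : ℝ × ℝ) : Integrable (fun z : ℝ × ℝ =>
    Complex.exp (-(Complex.I * ((z.1 : ℂ) * (x.1 : ℂ) + (z.2 : ℂ) * (x.2 : ℂ)))) * Φ z) := by
  refine hi.norm.mono' ?_ (Eventually.of_forall fun z => ?_)
  · have := hi.1
    fun_prop
  · rw [norm_mul, norm_kernel, one_mul]

lemma WN_shift (β : ℝ) (hβ : 0 ≤ β) (F : ℝ × ℝ → ℂ) (hF : Measurable F) (y : ℝ × ℝ) :
    WN β (fun x => F (x + y)) ≤ ENNReal.ofReal (wt β y) * WN β F := by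
  unfold WN
  rw [← lintegral_const_mul _ (by have := wt_meas β; fun_prop),
    ← lintegral_sub_right_eq_self (fun x : ℝ × ℝ => ENNReal.ofReal (wt β x) * ‖F (x + y)‖ₑ) y]
  apply lintegral_mono
  intro x
  simp only [sub_add_cancel]
  rw [← mul_assoc, ← ENNReal.ofReal_mul (wt_nonneg _ _)]
  gcongr
  have := wt_add β hβ (-y) x
  rw [wt_neg] at this
  convert this using 2; abel

noncomputable def cl (ν : Measure (ℝ × ℝ)) (z : ℝ × ℝ) : ℝ := ∫ y, Real.cos (z.1 * y.1 + z.2 * y.2) ∂ν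

lemma cl_meas (ν : Measure (ℝ × ℝ)) [SFinite ν] : Measurable (cl ν) := by
  unfold cl
  apply StronglyMeasurable.measurable
  apply StronglyMeasurable.integral_prod_right' (f := fun y : (ℝ × ℝ) × (ℝ × ℝ) =>
    Real.cos (y.1.1 * y.2.1 + y.1.2 * y.2.2))
  apply Measurable.stronglyMeasurable
  fun_prop

lemma cl_le (ν : Measure (ℝ × ℝ)) [IsFiniteMeasure ν] (z : ℝ × ℝ) : |cl ν z| ≤ ν.real univ := by
  have := norm_integral_le_of_norm_le_const (μ := ν) (C := 1)
    (f := fun y : ℝ × ℝ => Real.cos (z.1 * y.1 + z.2 * y.2)) (Eventually.of_forall fun y => by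
      simpa using Real.abs_cos_le_one _)
  simpa [cl] using this

lemma FI_mul_cl (ν : Measure (ℝ × ℝ)) [IsFiniteMeasure ν] (Φ : ℝ × ℝ → ℂ) (hm : Measurable Φ)
    (hi : Integrable Φ) (x : ℝ × ℝ) :
    FI (fun z => Φ z * (cl ν z : ℂ)) x = ∫ y, (FI Φ (x + y) + FI Φ (x - y)) / 2 ∂ν := by
  have hpt : ∀ y : ℝ × ℝ, (FI Φ (x + y) + FI Φ (x - y)) / 2 = ∫ z : ℝ × ℝ,
      Complex.exp (-(Complex.I * ((z.1 : ℂ) * (x.1 : ℂ) + (z.2 : ℂ) * (x.2 : ℂ)))) *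
        (Φ z * ((Real.cos (z.1 * y.1 + z.2 * y.2) : ℝ) : ℂ)) := by
    intro y
    unfold FI
    rw [← integral_add (FI_integrand Φ hi (x + y)) (FI_integrand Φ hi (x - y)), ← integral_div]
    congr 1; ext z
    have : ((Real.cos (z.1 * y.1 + z.2 * y.2) : ℝ) : ℂ) = (Complex.exp (-(Complex.I * ((z.1 : ℂ) * (y.1 : ℂ) + (z.2 : ℂ) * (y.2 : ℂ))))
      + Complex.exp ((Complex.I * ((z.1 : ℂ) * (y.1 : ℂ) + (z.2 : ℂ) * (y.2 : ℂ))))) / 2 := by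
      rw [Complex.ofReal_cos, Complex.cos]; push_cast; rw [add_comm]
      congr 2 <;> congr 1 <;> ring
    rw [this, ← add_mul]
    have e1 : Complex.exp (-(Complex.I * ((z.1 : ℂ) * ((x + y).1 : ℂ) + (z.2 : ℂ) * ((x + y).2 : ℂ))))
      = Complex.exp (-(Complex.I * ((z.1 : ℂ) * (x.1 : ℂ) + (z.2 : ℂ) * (x.2 : ℂ)))) *
        Complex.exp (-(Complex.I * ((z.1 : ℂ) * (y.1 : ℂ) + (z.2 : ℂ) * (y.2 : ℂ)))) := by
      rw [← Complex.exp_add]; congr 1; push_cast [Prod.fst_add, Prod.snd_add]; ring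
    have e2 : Complex.exp (-(Complex.I * ((z.1 : ℂ) * ((x - y).1 : ℂ) + (z.2 : ℂ) * ((x - y).2 : ℂ))))
      = Complex.exp (-(Complex.I * ((z.1 : ℂ) * (x.1 : ℂ) + (z.2 : ℂ) * (x.2 : ℂ)))) *
        Complex.exp ((Complex.I * ((z.1 : ℂ) * (y.1 : ℂ) + (z.2 : ℂ) * (y.2 : ℂ)))) := by
      rw [← Complex.exp_add]; congr 1; push_cast [Prod.fst_sub, Prod.snd_sub]; ring
    rw [e1, e2]; ring
  simp_rw [hpt]
  unfold FI
  rw [← integral_integral_swap]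
  · congr 1; ext z
    rw [integral_const_mul, integral_const_mul, integral_complex_ofReal]; rfl
  · refine (Integrable.mul_prod hi.norm (integrable_const (μ := ν) (1:ℝ))).mono' ?_
      (Eventually.of_forall fun p => ?_)
    · apply Measurable.aestronglyMeasurable
      unfold Function.uncurry
      fun_prop
    · simp only [Function.uncurry]
      rw [norm_mul, norm_kernel, one_mul, norm_mul, mul_one]
      have : ‖((Real.cos (p.1.1 * p.2.1 + p.1.2 * p.2.2) : ℝ) : ℂ)‖ ≤ 1 := by
        rw [Complex.norm_real]; exact Real.abs_cos_le_one _
      nlinarith [norm_nonneg (Φ p.1)]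

lemma WN_mul_cl (β : ℝ) (hβ : 0 ≤ β) (ν : Measure (ℝ × ℝ)) [IsFiniteMeasure ν] (Φ : ℝ × ℝ → ℂ)
    (hm : Measurable Φ) (hi : Integrable Φ) :
    WN β (FI (fun z => Φ z * (cl ν z : ℂ))) ≤ (∫⁻ y, ENNReal.ofReal (wt β y) ∂ν) * WN β (FI Φ) := by
  have hF := FI_meas Φ hm
  have hw := wt_meas β
  calc WN β (FI (fun z => Φ z * (cl ν z : ℂ)))
      ≤ ∫⁻ x : ℝ × ℝ, ∫⁻ y, ENNReal.ofReal (wt β x) * (2⁻¹ * (‖FI Φ (x + y)‖ₑ + ‖FI Φ (x - y)‖ₑ)) ∂ν := by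
        unfold WN
        apply lintegral_mono
        intro x
        simp only
        rw [lintegral_const_mul _ (by fun_prop)]
        gcongr
        rw [FI_mul_cl ν Φ hm hi x]
        refine (enorm_integral_le_lintegral_enorm _).trans ?_
        apply lintegral_mono
        intro y
        simp only
        rw [div_eq_inv_mul, enorm_mul]
        gcongr
        · rw [enorm_inv (by norm_num)]
          simp [enorm_eq_nnnorm]
        · exact enorm_add_le _ _
    _ = ∫⁻ y, (∫⁻ x : ℝ × ℝ, ENNReal.ofReal (wt β x) * (2⁻¹ * (‖FI Φ (x + y)‖ₑ + ‖FI Φ (x - y)‖ₑ))) ∂ν := by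
        apply lintegral_lintegral_swap
        unfold Function.uncurry
        fun_prop
    _ ≤ ∫⁻ y, ENNReal.ofReal (wt β y) * WN β (FI Φ) ∂ν := by
        apply lintegral_mono
        intro y
        have h1 := WN_shift β hβ (FI Φ) hF y
        have h2 := WN_shift β hβ (FI Φ) hF (-y)
        rw [wt_neg] at h2
        simp only [← sub_eq_add_neg] at h2
        calc ∫⁻ x : ℝ × ℝ, ENNReal.ofReal (wt β x) * (2⁻¹ * (‖FI Φ (x + y)‖ₑ + ‖FI Φ (x - y)‖ₑ))
            = 2⁻¹ * (WN β (fun x => FI Φ (x + y)) + WN β (fun x => FI Φ (x - y))) := by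
              unfold WN
              rw [← lintegral_add_left (by fun_prop), ← lintegral_const_mul _ (by fun_prop)]
              congr 1; ext x; ring
          _ ≤ 2⁻¹ * (ENNReal.ofReal (wt β y) * WN β (FI Φ) + ENNReal.ofReal (wt β y) * WN β (FI Φ)) := by
              gcongr
          _ = _ := by
              rw [← two_mul, ← mul_assoc, ENNReal.inv_mul_cancel (by norm_num) (by norm_num), one_mul]
    _ = _ := lintegral_mul_const _ (by fun_prop)

lemma cl_pow_integrable (ν : Measure (ℝ × ℝ)) [IsFiniteMeasure ν] (Φ : ℝ × ℝ → ℂ)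
    (hm : Measurable Φ) (hi : Integrable Φ) (n : ℕ) : Integrable (fun z => Φ z * (cl ν z : ℂ) ^ n) := by
  refine (hi.norm.mul_const ((ν.real univ) ^ n)).mono' ?_ (Eventually.of_forall fun z => ?_)
  · have := cl_meas ν
    apply Measurable.aestronglyMeasurable; fun_prop
  · rw [norm_mul, norm_pow, Complex.norm_real, Real.norm_eq_abs]
    gcongr
    exact cl_le ν z

lemma WN_mul_cl_pow (β : ℝ) (hβ : 0 ≤ β) (ν : Measure (ℝ × ℝ)) [IsFiniteMeasure ν] (Φ : ℝ × ℝ → ℂ)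
    (hm : Measurable Φ) (hi : Integrable Φ) (n : ℕ) :
    WN β (FI (fun z => Φ z * (cl ν z : ℂ) ^ n)) ≤ (∫⁻ y, ENNReal.ofReal (wt β y) ∂ν) ^ n * WN β (FI Φ) := by
  induction n with
  | zero => simp
  | succ n ih =>
    have := cl_meas ν
    have h := WN_mul_cl β hβ ν (fun z => Φ z * (cl ν z : ℂ) ^ n) (by fun_prop) (cl_pow_integrable ν Φ hm hi n)
    simp only [pow_succ, ← mul_assoc]
    refine h.trans ?_
    calc _ ≤ (∫⁻ y, ENNReal.ofReal (wt β y) ∂ν) * ((∫⁻ y, ENNReal.ofReal (wt β y) ∂ν) ^ n * WN β (FI Φ)) := by gcongr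
      _ = _ := by ring

lemma WN_mul_exp (β : ℝ) (hβ : 0 ≤ β) (ν : Measure (ℝ × ℝ)) [IsFiniteMeasure ν] (Φ : ℝ × ℝ → ℂ)
    (hm : Measurable Φ) (hi : Integrable Φ) (A : ℝ) (hA : 0 ≤ A)
    (hν : ∫⁻ y, ENNReal.ofReal (wt β y) ∂ν ≤ ENNReal.ofReal A) :
    WN β (FI (fun z => Φ z * Complex.exp (cl ν z : ℂ))) ≤ ENNReal.ofReal (Real.exp A) * WN β (FI Φ) := by
  have hc := cl_meas ν
  have hw := wt_meas β
  have hpt : ∀ x, ‖FI (fun z => Φ z * Complex.exp (cl ν z : ℂ)) x‖ₑ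
      ≤ ∑' n : ℕ, ENNReal.ofReal ((n.factorial : ℝ)⁻¹) * ‖FI (fun z => Φ z * (cl ν z : ℂ) ^ n) x‖ₑ := by
    intro x
    have hsum : FI (fun z => Φ z * Complex.exp (cl ν z : ℂ)) x
        = ∑' n : ℕ, ((n.factorial : ℂ)⁻¹) * FI (fun z => Φ z * (cl ν z : ℂ) ^ n) x := by
      have hI : ∀ n : ℕ, Integrable (fun z : ℝ × ℝ => ((n.factorial : ℂ)⁻¹) *
          (Complex.exp (-(Complex.I * ((z.1 : ℂ) * (x.1 : ℂ) + (z.2 : ℂ) * (x.2 : ℂ)))) * (Φ z * (cl ν z : ℂ) ^ n))) :=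
        fun n => (FI_integrand _ (cl_pow_integrable ν Φ hm hi n) x).const_mul _
      have hS := integral_tsum_of_summable_integral_norm hI (by
        refine Summable.of_nonneg_of_le (fun n => integral_nonneg fun z => norm_nonneg _) (fun n => ?_)
          ((Real.summable_pow_div_factorial (ν.real univ)).mul_right (∫ z, ‖Φ z‖))
        rw [← integral_const_mul]
        refine integral_mono (hI n).norm (hi.norm.const_mul _) (fun z => ?_)
        simp only
        rw [norm_mul, norm_mul, norm_kernel, one_mul, norm_mul, norm_pow, Complex.norm_real, Real.norm_eq_abs,
          norm_inv, Complex.norm_natCast]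
        have := cl_le ν z
        calc _ ≤ (n.factorial : ℝ)⁻¹ * (‖Φ z‖ * (ν.real univ) ^ n) := by gcongr
          _ = _ := by rw [div_eq_inv_mul]; ring)
      unfold FI
      simp_rw [← integral_const_mul]
      rw [hS]
      congr 1; ext z
      rw [Complex.exp_eq_exp_ℂ, NormedSpace.exp_eq_tsum_div (𝔸 := ℂ)]
      simp only
      rw [← mul_assoc, ← tsum_mul_left]
      congr 1; ext n
      rw [div_eq_inv_mul]; ring
    rw [hsum]
    refine (enorm_tsum_le_tsum_enorm).trans (le_of_eq ?_)
    congr 1; ext n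
    rw [enorm_mul]
    congr 1
    rw [← ofReal_norm, norm_inv, Complex.norm_natCast]
  have hmeas : ∀ n : ℕ, Measurable (FI (fun z => Φ z * (cl ν z : ℂ) ^ n)) := fun n => FI_meas _ (by fun_prop)
  calc WN β (FI (fun z => Φ z * Complex.exp (cl ν z : ℂ)))
      ≤ ∫⁻ x : ℝ × ℝ, ∑' n : ℕ, ENNReal.ofReal ((n.factorial : ℝ)⁻¹) * (ENNReal.ofReal (wt β x) *
          ‖FI (fun z => Φ z * (cl ν z : ℂ) ^ n) x‖ₑ) := by
        unfold WN
        apply lintegral_mono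
        intro x
        calc _ ≤ ENNReal.ofReal (wt β x) * ∑' n : ℕ, ENNReal.ofReal ((n.factorial : ℝ)⁻¹) * ‖FI (fun z => Φ z * (cl ν z : ℂ) ^ n) x‖ₑ := by
              exact mul_le_mul_right (hpt x) _
          _ = _ := by
              rw [← ENNReal.tsum_mul_left]; congr 1; ext n; ring
    _ = ∑' n : ℕ, ENNReal.ofReal ((n.factorial : ℝ)⁻¹) * WN β (FI (fun z => Φ z * (cl ν z : ℂ) ^ n)) := by
        rw [lintegral_tsum (fun n => by have := hmeas n; fun_prop)]
        congr 1; ext n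
        rw [lintegral_const_mul _ (by have := hmeas n; fun_prop)]; rfl
    _ ≤ ∑' n : ℕ, ENNReal.ofReal (A ^ n / n.factorial) * WN β (FI Φ) := by
        apply ENNReal.tsum_le_tsum
        intro n
        calc _ ≤ ENNReal.ofReal ((n.factorial : ℝ)⁻¹) * ((ENNReal.ofReal A) ^ n * WN β (FI Φ)) := by
              gcongr
              refine (WN_mul_cl_pow β hβ ν Φ hm hi n).trans ?_
              gcongr
          _ = _ := by
              rw [← mul_assoc, ← ENNReal.ofReal_pow hA, ← ENNReal.ofReal_mul (by positivity), div_eq_inv_mul]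
    _ = _ := by
        rw [ENNReal.tsum_mul_right, ← ENNReal.ofReal_tsum_of_nonneg (fun n => by positivity)
          (Real.summable_pow_div_factorial A)]
        congr 2
        rw [Real.exp_eq_exp_ℝ, NormedSpace.exp_eq_tsum_div]

noncomputable def hh (β : ℝ) (x : ℝ × ℝ) : ℝ := min (nn x ^ 2) (nn x ^ (2 * β))

lemma nn_meas : Measurable nn := by unfold nn; fun_prop

lemma hh_meas (β : ℝ) : Measurable (hh β) := by
  have := nn_meas
  unfold hh; fun_prop

lemma hh_nonneg (β : ℝ) (x : ℝ × ℝ) : 0 ≤ hh β x := by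
  have := nn_nonneg x
  unfold hh; positivity

lemma hh_small (β : ℝ) (hβ0 : 0 < β) (hβ1 : β < 1) (x : ℝ × ℝ) (hx : nn x ≤ 1) : hh β x = nn x ^ 2 := by
  unfold hh
  apply min_eq_left
  have h0 := nn_nonneg x
  rcases h0.eq_or_lt with h | h
  · rw [← h]; rw [Real.zero_rpow (by positivity)]; norm_num
  · rw [← Real.rpow_natCast]
    exact Real.rpow_le_rpow_of_exponent_ge h hx (by push_cast; linarith)

lemma hh_large (β : ℝ) (hβ0 : 0 < β) (hβ1 : β < 1) (x : ℝ × ℝ) (hx : 1 < nn x) : hh β x = nn x ^ (2 * β) := by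
  unfold hh
  apply min_eq_right
  rw [← Real.rpow_natCast]
  exact Real.rpow_le_rpow_of_exponent_le hx.le (by push_cast; linarith)

lemma hh_large_one (β : ℝ) (hβ0 : 0 < β) (hβ1 : β < 1) (x : ℝ × ℝ) (hx : 1 < nn x) : 1 ≤ hh β x := by
  rw [hh_large β hβ0 hβ1 x hx]
  exact Real.one_le_rpow hx.le (by positivity)

lemma lin_le_nn (u v : ℝ) (x : ℝ × ℝ) : |u * x.1 + v * x.2| ≤ (|u| + |v|) * nn x := by
  unfold nn
  calc _ ≤ |u * x.1| + |v * x.2| := abs_add_le _ _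
    _ ≤ _ := by
      rw [abs_mul, abs_mul]
      nlinarith [mul_nonneg (abs_nonneg u) (abs_nonneg x.2), mul_nonneg (abs_nonneg v) (abs_nonneg x.1)]

lemma one_sub_cos_le_hh (β : ℝ) (hβ0 : 0 < β) (hβ1 : β < 1) (u v : ℝ) (x : ℝ × ℝ) :
    |1 - Real.cos (u * x.1 + v * x.2)| ≤ (2 + (|u| + |v|) ^ 2) * hh β x := by
  have hp : 0 ≤ 1 - Real.cos (u * x.1 + v * x.2) := by linarith [Real.cos_le_one (u * x.1 + v * x.2)]
  rw [abs_of_nonneg hp]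
  by_cases hx : nn x ≤ 1
  · rw [hh_small β hβ0 hβ1 x hx]
    have h1 := Real.one_sub_sq_div_two_le_cos (x := u * x.1 + v * x.2)
    have h2 := lin_le_nn u v x
    have h3 : (u * x.1 + v * x.2) ^ 2 ≤ ((|u| + |v|) * nn x) ^ 2 := by
      rw [← sq_abs]; gcongr
    nlinarith [sq_nonneg (nn x), sq_nonneg ((|u| + |v|) * nn x)]
  · have := hh_large_one β hβ0 hβ1 x (not_le.mp hx)
    have h4 := Real.neg_one_le_cos (u * x.1 + v * x.2)
    nlinarith [sq_nonneg (|u| + |v|), mul_nonneg (sq_nonneg (|u| + |v|)) (hh_nonneg β x)]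

lemma hh_integrable (β : ℝ) (ν : Measure (ℝ × ℝ)) (C0 : ℝ)
    (hν : ∫⁻ x, ENNReal.ofReal (hh β x) ∂ν ≤ ENNReal.ofReal C0) : Integrable (hh β) ν := by
  refine ⟨(hh_meas β).aestronglyMeasurable, ?_⟩
  rw [hasFiniteIntegral_iff_ofReal (Eventually.of_forall (hh_nonneg β))]
  exact hν.trans_lt ENNReal.ofReal_lt_top

lemma cos_integrable (β : ℝ) (hβ0 : 0 < β) (hβ1 : β < 1) (ν : Measure (ℝ × ℝ)) (h : Integrable (hh β) ν)
    (u v : ℝ) : Integrable (fun x : ℝ × ℝ => 1 - Real.cos (u * x.1 + v * x.2)) ν := by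
  refine (h.const_mul (2 + (|u| + |v|) ^ 2)).mono' ?_ (Eventually.of_forall fun x => ?_)
  · apply Measurable.aestronglyMeasurable; fun_prop
  · exact one_sub_cos_le_hh β hβ0 hβ1 u v x

lemma wt_large (β : ℝ) (hβ0 : 0 < β) (hβ1 : β < 1) (x : ℝ × ℝ) (hx : 1 < nn x) : wt β x ≤ 4 * hh β x := by
  rw [hh_large β hβ0 hβ1 x hx]
  have h0 := nn_nonneg x
  have a1 : 1 + |x.1| ≤ 2 * nn x := by
    have : nn x = |x.1| + |x.2| := rfl
    linarith [abs_nonneg x.2]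
  have a2 : 1 + |x.2| ≤ 2 * nn x := by
    have : nn x = |x.1| + |x.2| := rfl
    linarith [abs_nonneg x.1]
  calc wt β x ≤ (2 * nn x) ^ β * (2 * nn x) ^ β := by unfold wt; gcongr
    _ = (2 * nn x) ^ (2 * β) := by rw [← Real.rpow_add (by linarith)]; ring_nf
    _ = 2 ^ (2 * β) * nn x ^ (2 * β) := Real.mul_rpow (by norm_num) h0
    _ ≤ 4 * nn x ^ (2 * β) := by
      gcongr
      calc (2:ℝ) ^ (2 * β) ≤ 2 ^ (2:ℝ) := Real.rpow_le_rpow_of_exponent_le (by norm_num) (by linarith)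
        _ = 4 := by norm_num

lemma WN_exp (β : ℝ) (hβ0 : 0 < β) (hβ1 : β < 1) (F : ℝ × ℝ → ℂ) (D : ℝ) (hD : 0 ≤ D)
    (hF : ∀ x, ‖F x‖ ≤ D * (Real.exp (-|x.1|) * Real.exp (-|x.2|))) :
    WN β F ≤ ENNReal.ofReal (D * (∫ u, ee 1 u) ^ 2) := by
  have hi : Integrable (fun x : ℝ × ℝ => D * (ee 1 x.1 * ee 1 x.2)) :=
    ((ee_integrable 1 one_pos).mul_prod (ee_integrable 1 one_pos)).const_mul D
  have h1 : ∀ a : ℝ, (1 + |a|) ^ β ≤ 1 + |a| := fun a => by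
    calc (1 + |a|) ^ β ≤ (1 + |a|) ^ (1:ℝ) :=
          Real.rpow_le_rpow_of_exponent_le (by linarith [abs_nonneg a]) hβ1.le
      _ = _ := Real.rpow_one _
  calc WN β F ≤ ∫⁻ x : ℝ × ℝ, ENNReal.ofReal (D * (ee 1 x.1 * ee 1 x.2)) := by
        unfold WN
        apply lintegral_mono
        intro x
        simp only
        rw [← ofReal_norm, ← ENNReal.ofReal_mul (wt_nonneg _ _)]
        apply ENNReal.ofReal_le_ofReal
        calc wt β x * ‖F x‖ ≤ ((1 + |x.1|) * (1 + |x.2|)) * (D * (Real.exp (-|x.1|) * Real.exp (-|x.2|))) := by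
              have := hF x
              unfold wt
              gcongr
              · exact h1 _
              · exact h1 _
          _ = _ := by unfold ee; simp only [neg_one_mul]; ring
    _ = ENNReal.ofReal (∫ x : ℝ × ℝ, D * (ee 1 x.1 * ee 1 x.2)) := by
        rw [ofReal_integral_eq_lintegral_ofReal hi (Eventually.of_forall fun x => by
          have := ee_nonneg 1 x.1
          have := ee_nonneg 1 x.2
          simp only [Pi.zero_apply]; positivity)]
    _ = _ := by
        congr 1
        rw [integral_const_mul, sq]
        congr 1
        exact integral_prod_mul (ee 1) (ee 1)

noncomputable def CB (c C0 C1 : ℝ) : ℝ :=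
  Real.exp (4 * C0) * (Real.exp (C0 + (C1 + 2 * C0)) * (∫ u, ee c u) ^ 2 * (∫ u, ee 1 u) ^ 2)

lemma CB_nonneg (c C0 C1 : ℝ) : 0 ≤ CB c C0 C1 := by unfold CB; positivity

lemma psR_meas (ν : Measure (ℝ × ℝ)) [SFinite ν] : Measurable (fun z : ℝ × ℝ => psR ν z.1 z.2) := by
  unfold psR
  apply StronglyMeasurable.measurable
  apply StronglyMeasurable.integral_prod_right' (f := fun y : (ℝ × ℝ) × (ℝ × ℝ) =>
    1 - Real.cos (y.1.1 * y.2.1 + y.1.2 * y.2.2))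
  apply Measurable.stronglyMeasurable
  fun_prop

lemma WN_const_mul (β : ℝ) (Φ : ℝ × ℝ → ℂ) (k : ℂ) :
    WN β (FI (fun z => k * Φ z)) = ‖k‖ₑ * WN β (FI Φ) := by
  have : ∀ x, FI (fun z => k * Φ z) x = k * FI Φ x := by
    intro x
    unfold FI
    rw [← integral_const_mul]
    congr 1; ext z; ring
  unfold WN
  simp_rw [this, enorm_mul]
  rw [← lintegral_const_mul']
  · congr 1; ext x; ring
  · exact enorm_ne_top

lemma WN_base (β : ℝ) (hβ0 : 0 < β) (hβ1 : β < 1) (ν : Measure (ℝ × ℝ)) [SFinite ν] (c C0 C1 : ℝ) (hc : 0 < c)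
    (hC0 : 0 ≤ C0) (hν : ∫⁻ x, ENNReal.ofReal (hh β x) ∂ν ≤ ENNReal.ofReal C0)
    (hlow : ∀ u v : ℝ, c * (|u| + |v|) - C1 ≤ psR ν u v)
    (s1 s2 : ℂ → ℂ) (hs1 : Differentiable ℂ s1) (hs2 : Differentiable ℂ s2) (M1 M2 : ℝ)
    (hM1 : 0 ≤ M1) (hM2 : 0 ≤ M2)
    (hb1 : ∀ u τ : ℝ, |τ| ≤ 1 → ‖s1 (u + τ * Complex.I)‖ ≤ M1 * (1 + |u|))
    (hb2 : ∀ u τ : ℝ, |τ| ≤ 1 → ‖s2 (u + τ * Complex.I)‖ ≤ M2 * (1 + |u|)) :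
    WN β (FI (fun z : ℝ × ℝ => s1 z.1 * s2 z.2 * Complex.exp (-(psR ν z.1 z.2 : ℂ))))
      ≤ ENNReal.ofReal (M1 * M2 * CB c C0 C1) := by
  have hhi := hh_integrable β ν C0 hν
  have hI0 : ∫ x, hh β x ∂ν ≤ C0 := by
    rw [integral_eq_lintegral_of_nonneg_ae (Eventually.of_forall (hh_nonneg β)) hhi.1]
    exact ENNReal.toReal_le_of_le_ofReal hC0 hν
  set E : Set (ℝ × ℝ) := {x | nn x ≤ 1} with hE
  have hEm : MeasurableSet E := measurableSet_le nn_meas measurable_const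
  set νs := ν.restrict E with hνs
  set νl := ν.restrict Eᶜ with hνl
  have hs : ∀ᵐ x ∂νs, nn x ≤ 1 := ae_restrict_mem hEm
  have hl : ∀ᵐ x ∂νl, 1 < nn x := by
    filter_upwards [ae_restrict_mem hEm.compl] with x hx
    exact not_le.mp hx
  have hi : Integrable (fun x => nn x ^ 2) νs := by
    refine (hhi.restrict (s := E)).congr ?_
    filter_upwards [hs] with x hx using hh_small β hβ0 hβ1 x hx
  have hi2 : ∫ x, nn x ^ 2 ∂νs ≤ C0 := by
    calc ∫ x, nn x ^ 2 ∂νs = ∫ x, hh β x ∂νs := by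
          apply integral_congr_ae
          filter_upwards [hs] with x hx using (hh_small β hβ0 hβ1 x hx).symm
      _ ≤ ∫ x, hh β x ∂ν := setIntegral_le_integral hhi (Eventually.of_forall (hh_nonneg β))
      _ ≤ C0 := hI0
  have hlmass : νl univ ≤ ENNReal.ofReal C0 := by
    calc νl univ = ∫⁻ x, 1 ∂νl := by simp
      _ ≤ ∫⁻ x, ENNReal.ofReal (hh β x) ∂νl := by
          apply lintegral_mono_ae
          filter_upwards [hl] with x hx
          rw [← ENNReal.ofReal_one]
          exact ENNReal.ofReal_le_ofReal (hh_large_one β hβ0 hβ1 x hx)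
      _ ≤ ∫⁻ x, ENNReal.ofReal (hh β x) ∂ν := setLIntegral_le_lintegral _ _
      _ ≤ _ := hν
  haveI : IsFiniteMeasure νl := ⟨hlmass.trans_lt ENNReal.ofReal_lt_top⟩
  have hlw : ∫⁻ y, ENNReal.ofReal (wt β y) ∂νl ≤ ENNReal.ofReal (4 * C0) := by
    calc ∫⁻ y, ENNReal.ofReal (wt β y) ∂νl ≤ ∫⁻ y, ENNReal.ofReal 4 * ENNReal.ofReal (hh β y) ∂νl := by
          apply lintegral_mono_ae
          filter_upwards [hl] with x hx
          rw [← ENNReal.ofReal_mul (by norm_num)]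
          exact ENNReal.ofReal_le_ofReal (wt_large β hβ0 hβ1 x hx)
      _ = ENNReal.ofReal 4 * ∫⁻ y, ENNReal.ofReal (hh β y) ∂νl :=
          lintegral_const_mul _ (by have := hh_meas β; fun_prop)
      _ ≤ ENNReal.ofReal 4 * ENNReal.ofReal C0 := by
          gcongr
          exact (setLIntegral_le_lintegral _ _).trans hν
      _ = _ := (ENNReal.ofReal_mul (by norm_num)).symm
  have hlreal : νl.real univ ≤ C0 := ENNReal.toReal_le_of_le_ofReal hC0 hlmass
  have hsum : ∀ u v, psR ν u v = psR νs u v + psR νl u v := fun u v =>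
    (integral_add_compl hEm (cos_integrable β hβ0 hβ1 ν hhi u v)).symm
  have hcl : ∀ z : ℝ × ℝ, psR νl z.1 z.2 = νl.real univ - cl νl z := by
    intro z
    unfold psR cl
    rw [integral_sub (integrable_const _)]
    · simp
    · refine (integrable_const (1:ℝ)).mono' ?_ (Eventually.of_forall fun x => Real.abs_cos_le_one _)
      apply Measurable.aestronglyMeasurable; fun_prop
  have hlow' : ∀ u v : ℝ, c * (|u| + |v|) - (C1 + 2 * C0) ≤ psR νs u v := by
    intro u v
    have h1 := hlow u v
    have h2 := hcl (u, v)
    have h3 := abs_le.mp (cl_le νl (u, v))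
    rw [hsum] at h1
    simp only at h2
    linarith
  have hQ := lemmaQ νs hs hi c C0 (C1 + 2 * C0) hc hi2 hlow' s1 s2 hs1 hs2 M1 M2 hM1 hM2 hb1 hb2
  set Φ := fun z : ℝ × ℝ => s1 z.1 * s2 z.2 * Complex.exp (-psC νs z.1 z.2) with hΦ
  have hΦm : Measurable Φ := by
    have := hs1.continuous.measurable
    have := hs2.continuous.measurable
    have := psR_meas νs
    simp only [hΦ, psC_real]
    fun_prop
  have heq : (fun z : ℝ × ℝ => s1 z.1 * s2 z.2 * Complex.exp (-(psR ν z.1 z.2 : ℂ)))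
      = fun z => Complex.exp (-(νl.real univ : ℂ)) * (Φ z * Complex.exp (cl νl z : ℂ)) := by
    ext z
    simp only [hΦ, psC_real]
    rw [hsum, hcl]
    have : Complex.exp (-((psR νs z.1 z.2 + (νl.real univ - cl νl z) : ℝ) : ℂ)) =
      Complex.exp (-(νl.real univ : ℂ)) * Complex.exp (-(psR νs z.1 z.2 : ℂ)) * Complex.exp (cl νl z : ℂ) := by
      rw [← Complex.exp_add, ← Complex.exp_add]; congr 1; push_cast; ring
    rw [this]; ring
  rw [heq, WN_const_mul]
  have hk : ‖Complex.exp (-(νl.real univ : ℂ))‖ₑ ≤ 1 := by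
    rw [← ofReal_norm, Complex.norm_exp, ← ENNReal.ofReal_one]
    apply ENNReal.ofReal_le_ofReal
    simp
  calc _ ≤ 1 * WN β (FI fun z => Φ z * Complex.exp (cl νl z : ℂ)) := by gcongr
    _ ≤ ENNReal.ofReal (Real.exp (4 * C0)) * WN β (FI Φ) := by
        rw [one_mul]
        exact WN_mul_exp β hβ0.le νl Φ hΦm (hQ 0).1 (4 * C0) (by positivity) hlw
    _ ≤ ENNReal.ofReal (Real.exp (4 * C0)) * ENNReal.ofReal (M1 * M2 * (Real.exp (C0 + (C1 + 2 * C0)) * (∫ u, ee c u) ^ 2) * (∫ u, ee 1 u) ^ 2) := by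
        gcongr
        exact WN_exp β hβ0 hβ1 _ _ (by positivity) (fun x => (hQ x).2)
    _ = _ := by
        rw [← ENNReal.ofReal_mul (by positivity)]
        congr 1
        unfold CB
        ring

noncomputable def sa (a : ℝ) (z : ℂ) : ℂ := Complex.exp (Complex.I * a * z) - 1

noncomputable def mm (β a : ℝ) : ℝ := min |a| (|a| ^ β)

lemma mm_nonneg (β a : ℝ) : 0 ≤ mm β a := by unfold mm; positivity

lemma mm_meas (β : ℝ) : Measurable (mm β) := by unfold mm; fun_prop

lemma mm_small (β : ℝ) (hβ0 : 0 < β) (hβ1 : β < 1) (a : ℝ) (ha : |a| ≤ 1) : mm β a = |a| := by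
  unfold mm
  apply min_eq_left
  rcases (abs_nonneg a).eq_or_lt with h | h
  · rw [← h, Real.zero_rpow hβ0.ne']
  · calc |a| = |a| ^ (1:ℝ) := (Real.rpow_one _).symm
      _ ≤ _ := Real.rpow_le_rpow_of_exponent_ge h ha hβ1.le

lemma mm_large (β : ℝ) (hβ1 : β < 1) (a : ℝ) (ha : 1 < |a|) : mm β a = |a| ^ β := by
  unfold mm
  apply min_eq_right
  calc |a| ^ β ≤ |a| ^ (1:ℝ) := Real.rpow_le_rpow_of_exponent_le ha.le hβ1.le
    _ = |a| := Real.rpow_one _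

lemma sa_diff (a : ℝ) : Differentiable ℂ (sa a) := by unfold sa; fun_prop

lemma norm_sa_real (a u : ℝ) : ‖sa a u‖ ≤ |a * u| := by
  unfold sa
  have := Real.norm_exp_I_mul_ofReal_sub_one_le (x := a * u)
  rw [Real.norm_eq_abs] at this
  convert this using 4
  push_cast; ring

lemma norm_sa_real2 (a u : ℝ) : ‖sa a u‖ ≤ 2 := by
  unfold sa
  refine (norm_sub_le _ _).trans ?_
  have : ‖Complex.exp (Complex.I * a * u)‖ = 1 := by
    rw [Complex.norm_exp]; simp
  rw [this]; norm_num

lemma norm_sa_strip (a : ℝ) (ha : |a| ≤ 1) (u τ : ℝ) (hτ : |τ| ≤ 1) :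
    ‖sa a (u + τ * Complex.I)‖ ≤ (3 * |a|) * (1 + |u|) := by
  have h1 : sa a (u + τ * Complex.I) = Complex.exp ((-(a * τ) : ℝ)) * sa a u + (Complex.exp ((-(a * τ) : ℝ)) - 1) := by
    unfold sa
    have : Complex.exp (Complex.I * a * (u + τ * Complex.I)) = Complex.exp ((-(a * τ) : ℝ)) * Complex.exp (Complex.I * a * u) := by
      rw [← Complex.exp_add]; congr 1; push_cast; linear_combination (a * τ : ℂ) * Complex.I_sq
    rw [this]; ring
  rw [h1]
  have hat : |-(a * τ)| ≤ |a| := by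
    rw [abs_neg, abs_mul]; nlinarith [abs_nonneg a]
  have h2 : ‖Complex.exp ((-(a * τ) : ℝ))‖ ≤ 3 := by
    rw [Complex.norm_exp, Complex.ofReal_re]
    calc Real.exp (-(a * τ)) ≤ Real.exp 1 := by
          apply Real.exp_le_exp.mpr
          exact (le_abs_self _).trans (hat.trans ha)
      _ ≤ 3 := by linarith [Real.exp_one_lt_d9]
  have h3 : ‖Complex.exp ((-(a * τ) : ℝ)) - 1‖ ≤ 2 * |a| := by
    have := Complex.norm_exp_sub_one_le (x := ((-(a * τ) : ℝ) : ℂ)) (by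
      rw [Complex.norm_real, Real.norm_eq_abs]; exact hat.trans ha)
    rw [Complex.norm_real, Real.norm_eq_abs] at this
    linarith
  have h4 := norm_sa_real a u
  rw [abs_mul] at h4
  calc _ ≤ ‖Complex.exp ((-(a * τ) : ℝ))‖ * ‖sa a u‖ + ‖Complex.exp ((-(a * τ) : ℝ)) - 1‖ := by
        refine (norm_add_le _ _).trans ?_
        rw [norm_mul]
    _ ≤ 3 * (|a| * |u|) + 2 * |a| := by gcongr
    _ ≤ _ := by nlinarith [abs_nonneg a]

lemma exp_psi_bound (c C1 Ψ u v : ℝ) (h : c * (|u| + |v|) - C1 ≤ Ψ) :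
    (1 + |u|) * (1 + |v|) * Real.exp (-Ψ) ≤ Real.exp C1 * (ee c u * ee c v) := by
  have : Real.exp (-Ψ) ≤ Real.exp C1 * (Real.exp (-c * |u|) * Real.exp (-c * |v|)) := by
    rw [← Real.exp_add, ← Real.exp_add]
    apply Real.exp_le_exp.mpr; linarith
  calc _ ≤ (1 + |u|) * (1 + |v|) * (Real.exp C1 * (Real.exp (-c * |u|) * Real.exp (-c * |v|))) := by gcongr
    _ = _ := by unfold ee; ring

lemma ee_prod_integrable (c : ℝ) (hc : 0 < c) : Integrable (fun z : ℝ × ℝ => ee c z.1 * ee c z.2) :=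
  (ee_integrable c hc).mul_prod (ee_integrable c hc)

lemma q_integrable (Ψ : ℝ × ℝ → ℝ) (hΨ : Measurable Ψ) (c C1 : ℝ) (hc : 0 < c)
    (hlow : ∀ z : ℝ × ℝ, c * (|z.1| + |z.2|) - C1 ≤ Ψ z) (q : ℝ × ℝ → ℂ) (hq : Measurable q) (M : ℝ) (hM : 0 ≤ M)
    (hb : ∀ z : ℝ × ℝ, ‖q z‖ ≤ M * ((1 + |z.1|) * (1 + |z.2|))) :
    Integrable (fun z => q z * Complex.exp (-(Ψ z : ℂ))) := by
  refine ((ee_prod_integrable c hc).const_mul (M * Real.exp C1)).mono' ?_ (Eventually.of_forall fun z => ?_)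
  · apply Measurable.aestronglyMeasurable; fun_prop
  · rw [norm_mul]
    have : ‖Complex.exp (-(Ψ z : ℂ))‖ = Real.exp (-Ψ z) := by
      rw [Complex.norm_exp]; simp
    rw [this]
    calc _ ≤ (M * ((1 + |z.1|) * (1 + |z.2|))) * Real.exp (-Ψ z) := by
          have := hb z
          gcongr
      _ = M * ((1 + |z.1|) * (1 + |z.2|) * Real.exp (-Ψ z)) := by ring
      _ ≤ M * (Real.exp C1 * (ee c z.1 * ee c z.2)) := by
          exact mul_le_mul_of_nonneg_left (exp_psi_bound c C1 _ _ _ (hlow z)) hM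
      _ = _ := by ring

lemma FI_add (Φ Φ' : ℝ × ℝ → ℂ) (h : Integrable Φ) (h' : Integrable Φ') (x : ℝ × ℝ) :
    FI (fun z => Φ z + Φ' z) x = FI Φ x + FI Φ' x := by
  unfold FI
  rw [← integral_add (FI_integrand Φ h x) (FI_integrand Φ' h' x)]
  congr 1; ext z; ring

lemma WN_add (β : ℝ) (F G : ℝ × ℝ → ℂ) (hF : Measurable F) :
    WN β (fun x => F x + G x) ≤ WN β F + WN β G := by
  have := wt_meas β
  unfold WN
  rw [← lintegral_add_left (by fun_prop)]
  apply lintegral_mono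
  intro x
  simp only
  rw [← mul_add]
  gcongr
  exact enorm_add_le _ _

/-- multiply by `e^{i(a z₁ + b z₂)} - 1`. -/
lemma WN_phase (β : ℝ) (hβ : 0 ≤ β) (Φ : ℝ × ℝ → ℂ) (hm : Measurable Φ) (hi : Integrable Φ) (y : ℝ × ℝ) :
    WN β (FI (fun z => (Complex.exp (Complex.I * (z.1 * y.1 + z.2 * y.2)) - 1) * Φ z))
      ≤ ENNReal.ofReal (wt β y + 1) * WN β (FI Φ) := by
  have hpt : ∀ x, FI (fun z => (Complex.exp (Complex.I * (z.1 * y.1 + z.2 * y.2)) - 1) * Φ z) x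
      = FI Φ (x + -y) + - FI Φ x := by
    intro x
    unfold FI
    rw [← sub_eq_add_neg, ← integral_sub (FI_integrand Φ hi (x + -y)) (FI_integrand Φ hi x)]
    congr 1; ext z
    have : Complex.exp (-(Complex.I * ((z.1 : ℂ) * ((x + -y).1 : ℂ) + (z.2 : ℂ) * ((x + -y).2 : ℂ))))
      = Complex.exp (-(Complex.I * ((z.1 : ℂ) * (x.1 : ℂ) + (z.2 : ℂ) * (x.2 : ℂ)))) *
        Complex.exp (Complex.I * (z.1 * y.1 + z.2 * y.2)) := by
      rw [← Complex.exp_add]; congr 1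
      simp only [Prod.fst_add, Prod.snd_add, Prod.fst_neg, Prod.snd_neg]; push_cast; ring
    rw [this]
    ring
  have hF := FI_meas Φ hm
  calc _ = WN β (fun x => FI Φ (x + -y) + - FI Φ x) := by congr 1; ext x; exact hpt x
    _ ≤ WN β (fun x => FI Φ (x + -y)) + WN β (fun x => - FI Φ x) := WN_add β _ _ (by fun_prop)
    _ ≤ ENNReal.ofReal (wt β y) * WN β (FI Φ) + WN β (FI Φ) := by
        gcongr
        · have := WN_shift β hβ (FI Φ) hF (-y)
          rwa [wt_neg] at this
        · unfold WN; simp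
    _ = _ := by
        rw [ENNReal.ofReal_add (wt_nonneg _ _) zero_le_one, ENNReal.ofReal_one]; ring

lemma w1_large (β : ℝ) (hβ0 : 0 < β) (hβ1 : β < 1) (a : ℝ) (ha : 1 < |a|) : (1 + |a|) ^ β + 1 ≤ 3 * mm β a := by
  rw [mm_large β hβ1 a ha]
  have h1 : (1 + |a|) ^ β ≤ 2 * |a| ^ β := by
    calc (1 + |a|) ^ β ≤ (2 * |a|) ^ β := by
          apply Real.rpow_le_rpow (by positivity) (by linarith) hβ0.le
      _ = 2 ^ β * |a| ^ β := Real.mul_rpow (by norm_num) (abs_nonneg a)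
      _ ≤ 2 * |a| ^ β := by
          gcongr
          calc (2:ℝ) ^ β ≤ 2 ^ (1:ℝ) := Real.rpow_le_rpow_of_exponent_le (by norm_num) hβ1.le
            _ = 2 := Real.rpow_one _
  have h2 : 1 ≤ |a| ^ β := Real.one_le_rpow ha.le hβ0.le
  linarith

lemma WN_sa1 (β : ℝ) (hβ0 : 0 < β) (hβ1 : β < 1) (ν : Measure (ℝ × ℝ)) [SFinite ν] (c C0 C1 : ℝ) (hc : 0 < c)
    (hC0 : 0 ≤ C0) (hν : ∫⁻ x, ENNReal.ofReal (hh β x) ∂ν ≤ ENNReal.ofReal C0)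
    (hlow : ∀ u v : ℝ, c * (|u| + |v|) - C1 ≤ psR ν u v)
    (a : ℝ) (s2 : ℂ → ℂ) (hs2 : Differentiable ℂ s2) (M2 : ℝ) (hM2 : 0 ≤ M2)
    (hb2 : ∀ u τ : ℝ, |τ| ≤ 1 → ‖s2 (u + τ * Complex.I)‖ ≤ M2 * (1 + |u|)) :
    WN β (FI (fun z : ℝ × ℝ => sa a z.1 * s2 z.2 * Complex.exp (-(psR ν z.1 z.2 : ℂ))))
      ≤ ENNReal.ofReal (3 * mm β a * M2 * CB c C0 C1) := by
  by_cases ha : |a| ≤ 1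
  · rw [mm_small β hβ0 hβ1 a ha]
    exact WN_base β hβ0 hβ1 ν c C0 C1 hc hC0 hν hlow (sa a) s2 (sa_diff a) hs2 _ M2 (by positivity) hM2
      (norm_sa_strip a ha) hb2
  · push Not at ha
    have h1 := WN_base β hβ0 hβ1 ν c C0 C1 hc hC0 hν hlow (fun _ => 1) s2 (by fun_prop) hs2 1 M2 zero_le_one hM2
      (fun u τ _ => by simp) hb2
    have hm2 := hs2.continuous.measurable
    have hpm := psR_meas ν
    have hr2 : ∀ u : ℝ, ‖s2 u‖ ≤ M2 * (1 + |u|) := fun u => by simpa using hb2 u 0 (by simp)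
    have h2 := WN_phase β hβ0.le (fun z : ℝ × ℝ => 1 * s2 z.2 * Complex.exp (-(psR ν z.1 z.2 : ℂ))) (by fun_prop)
      (q_integrable (fun z => psR ν z.1 z.2) hpm c C1 hc (fun z => hlow _ _) _ (by fun_prop) M2 hM2 (fun z => by
        rw [one_mul]
        refine (hr2 z.2).trans ?_
        have := abs_nonneg z.1
        have := mul_nonneg hM2 (by positivity : 0 ≤ 1 + |z.2|)
        nlinarith)) (a, 0)
    calc _ = WN β (FI fun z : ℝ × ℝ => (Complex.exp (Complex.I * (z.1 * (a, (0:ℝ)).1 + z.2 * (a, (0:ℝ)).2)) - 1) *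
          (1 * s2 z.2 * Complex.exp (-(psR ν z.1 z.2 : ℂ)))) := by
          congr 2; ext z
          unfold sa
          have : Complex.I * a * z.1 = Complex.I * (z.1 * a + z.2 * (0:ℝ)) := by push_cast; ring
          rw [this]; ring
      _ ≤ _ := h2
      _ ≤ ENNReal.ofReal (3 * mm β a) * ENNReal.ofReal (1 * M2 * CB c C0 C1) := by
          gcongr
          have := w1_large β hβ0 hβ1 a ha
          simpa [wt] using this
      _ = _ := by
          have := mm_nonneg β a
          rw [← ENNReal.ofReal_mul (by positivity)]; congr 1; ring

lemma WN_sa (β : ℝ) (hβ0 : 0 < β) (hβ1 : β < 1) (ν : Measure (ℝ × ℝ)) [SFinite ν] (c C0 C1 : ℝ) (hc : 0 < c)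
    (hC0 : 0 ≤ C0) (hν : ∫⁻ x, ENNReal.ofReal (hh β x) ∂ν ≤ ENNReal.ofReal C0)
    (hlow : ∀ u v : ℝ, c * (|u| + |v|) - C1 ≤ psR ν u v)
    (a b : ℝ) :
    WN β (FI (fun z : ℝ × ℝ => sa a z.1 * sa b z.2 * Complex.exp (-(psR ν z.1 z.2 : ℂ))))
      ≤ ENNReal.ofReal (9 * CB c C0 C1 * (mm β a * mm β b)) := by
  by_cases hb : |b| ≤ 1
  · refine (WN_sa1 β hβ0 hβ1 ν c C0 C1 hc hC0 hν hlow a (sa b) (sa_diff b) _ (by positivity)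
      (norm_sa_strip b hb)).trans (le_of_eq ?_)
    rw [mm_small β hβ0 hβ1 b hb]
    congr 1; ring
  · push Not at hb
    have h1 := WN_sa1 β hβ0 hβ1 ν c C0 C1 hc hC0 hν hlow a (fun _ => 1) (by fun_prop) 1 zero_le_one
      (fun u τ _ => by simp)
    have hm2 := (sa_diff a).continuous.measurable
    have hpm := psR_meas ν
    have h2 := WN_phase β hβ0.le (fun z : ℝ × ℝ => sa a z.1 * 1 * Complex.exp (-(psR ν z.1 z.2 : ℂ))) (by fun_prop)
      (q_integrable (fun z => psR ν z.1 z.2) hpm c C1 hc (fun z => hlow _ _) _ (by fun_prop) 2 zero_le_two (fun z => by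
        rw [mul_one]
        refine (norm_sa_real2 a z.1).trans ?_
        have := abs_nonneg z.1
        have := abs_nonneg z.2
        nlinarith [mul_nonneg (abs_nonneg z.1) (abs_nonneg z.2)])) (0, b)
    calc _ = WN β (FI fun z : ℝ × ℝ => (Complex.exp (Complex.I * (z.1 * ((0:ℝ), b).1 + z.2 * ((0:ℝ), b).2)) - 1) *
          (sa a z.1 * 1 * Complex.exp (-(psR ν z.1 z.2 : ℂ)))) := by
          congr 2; ext z
          have : sa b z.2 = Complex.exp (Complex.I * (z.1 * (0:ℝ) + z.2 * b)) - 1 := by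
            unfold sa; congr 2; push_cast; ring
          rw [this]; ring
      _ ≤ _ := h2
      _ ≤ ENNReal.ofReal (3 * mm β b) * ENNReal.ofReal (3 * mm β a * 1 * CB c C0 C1) := by
          gcongr
          have := w1_large β hβ0 hβ1 b hb
          simpa [wt] using this
      _ = _ := by
          have := mm_nonneg β b
          rw [← ENNReal.ofReal_mul (by positivity)]; congr 1; ring

lemma WN_FI_integral {X : Type*} [MeasurableSpace X] (β : ℝ) (ρ : Measure X) [SFinite ρ] (Θ : (ℝ × ℝ) × X → ℂ)
    (hm : Measurable Θ) (hi : Integrable Θ ((volume : Measure (ℝ × ℝ)).prod ρ)) :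
    WN β (FI (fun z => ∫ p, Θ (z, p) ∂ρ)) ≤ ∫⁻ p, WN β (FI (fun z => Θ (z, p))) ∂ρ := by
  have hJ : Measurable (fun q : (ℝ × ℝ) × X => FI (fun z => Θ (z, q.2)) q.1) := by
    unfold FI
    apply StronglyMeasurable.measurable
    apply StronglyMeasurable.integral_prod_right' (f := fun y : ((ℝ × ℝ) × X) × (ℝ × ℝ) =>
      Complex.exp (-(Complex.I * ((y.2.1 : ℂ) * (y.1.1.1 : ℂ) + (y.2.2 : ℂ) * (y.1.1.2 : ℂ)))) * Θ (y.2, y.1.2))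
    apply Measurable.stronglyMeasurable
    fun_prop
  have hw := wt_meas β
  have hpt : ∀ x, FI (fun z => ∫ p, Θ (z, p) ∂ρ) x = ∫ p, FI (fun z => Θ (z, p)) x ∂ρ := by
    intro x
    unfold FI
    simp_rw [← integral_const_mul]
    rw [integral_integral_swap]
    refine hi.norm.mono' ?_ (Eventually.of_forall fun p => ?_)
    · apply Measurable.aestronglyMeasurable
      unfold Function.uncurry
      fun_prop
    · simp only [Function.uncurry]
      rw [norm_mul, norm_kernel, one_mul]
  calc _ ≤ ∫⁻ x : ℝ × ℝ, ∫⁻ p, ENNReal.ofReal (wt β x) * ‖FI (fun z => Θ (z, p)) x‖ₑ ∂ρ := by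
        unfold WN
        apply lintegral_mono
        intro x
        simp only
        have hx : Measurable (fun p => FI (fun z => Θ (z, p)) x) :=
          hJ.comp (f := fun p : X => (x, p)) (by fun_prop)
        rw [lintegral_const_mul _ hx.enorm, hpt]
        gcongr
        exact enorm_integral_le_lintegral_enorm _
    _ = ∫⁻ p, (∫⁻ x : ℝ × ℝ, ENNReal.ofReal (wt β x) * ‖FI (fun z => Θ (z, p)) x‖ₑ) ∂ρ := by
        apply lintegral_lintegral_swap
        unfold Function.uncurry
        fun_prop
    _ = _ := rfl

noncomputable def nut (ν : Measure (ℝ × ℝ)) (t : ℝ) : Measure (ℝ × ℝ) :=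
  ENNReal.ofReal t • ν + ENNReal.ofReal (1 - t) •
    (ν.map (fun x => (x.1, (0:ℝ))) + ν.map (fun x => ((0:ℝ), x.2)))

instance (ν : Measure (ℝ × ℝ)) [SFinite ν] (t : ℝ) : SFinite (nut ν t) := by
  unfold nut; infer_instance

lemma hh_mono (β : ℝ) (hβ : 0 < β) (x y : ℝ × ℝ) (h : nn x ≤ nn y) : hh β x ≤ hh β y := by
  unfold hh
  have := nn_nonneg x
  gcongr

lemma hh_map1 (β : ℝ) (hβ : 0 < β) (ν : Measure (ℝ × ℝ)) :
    ∫⁻ x, ENNReal.ofReal (hh β x) ∂(ν.map (fun x => (x.1, (0:ℝ)))) ≤ ∫⁻ x, ENNReal.ofReal (hh β x) ∂ν := by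
  have := hh_meas β
  rw [lintegral_map (by fun_prop) (by fun_prop)]
  apply lintegral_mono
  intro x
  apply ENNReal.ofReal_le_ofReal
  apply hh_mono β hβ
  simp [nn]

lemma hh_map2 (β : ℝ) (hβ : 0 < β) (ν : Measure (ℝ × ℝ)) :
    ∫⁻ x, ENNReal.ofReal (hh β x) ∂(ν.map (fun x => ((0:ℝ), x.2))) ≤ ∫⁻ x, ENNReal.ofReal (hh β x) ∂ν := by
  have := hh_meas β
  rw [lintegral_map (by fun_prop) (by fun_prop)]
  apply lintegral_mono
  intro x
  apply ENNReal.ofReal_le_ofReal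
  apply hh_mono β hβ
  simp [nn]

lemma nut_hh (β : ℝ) (hβ : 0 < β) (ν : Measure (ℝ × ℝ)) (C0 : ℝ) (hC0 : 0 ≤ C0)
    (hν : ∫⁻ x, ENNReal.ofReal (hh β x) ∂ν ≤ ENNReal.ofReal C0) (t : ℝ) (ht : t ∈ Icc (0:ℝ) 1) :
    ∫⁻ x, ENNReal.ofReal (hh β x) ∂(nut ν t) ≤ ENNReal.ofReal (2 * C0) := by
  unfold nut
  rw [lintegral_add_measure, lintegral_smul_measure, lintegral_smul_measure, lintegral_add_measure]
  have h1 := (hh_map1 β hβ ν).trans hν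
  have h2 := (hh_map2 β hβ ν).trans hν
  have h3 : 0 ≤ 1 - t := by linarith [ht.2]
  calc _ ≤ ENNReal.ofReal t • ENNReal.ofReal C0 + ENNReal.ofReal (1 - t) • (ENNReal.ofReal C0 + ENNReal.ofReal C0) := by
        simp only [smul_eq_mul]
        gcongr
    _ = ENNReal.ofReal (t * C0 + (1 - t) * (C0 + C0)) := by
        simp only [smul_eq_mul]
        rw [ENNReal.ofReal_add (mul_nonneg ht.1 hC0) (by positivity), ENNReal.ofReal_mul ht.1, ENNReal.ofReal_mul h3,
          ENNReal.ofReal_add hC0 hC0]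
    _ ≤ _ := by
        apply ENNReal.ofReal_le_ofReal
        nlinarith [ht.1, mul_nonneg ht.1 hC0]

noncomputable def Bs (ν : Measure (ℝ × ℝ)) (u v : ℝ) : ℝ := psR ν u 0 + psR ν 0 v

lemma nut_psR (β : ℝ) (hβ0 : 0 < β) (hβ1 : β < 1) (ν : Measure (ℝ × ℝ)) (C0 : ℝ)
    (hν : ∫⁻ x, ENNReal.ofReal (hh β x) ∂ν ≤ ENNReal.ofReal C0) (t : ℝ) (ht : t ∈ Icc (0:ℝ) 1) (u v : ℝ) :
    psR (nut ν t) u v = t * psR ν u v + (1 - t) * Bs ν u v := by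
  have h3 : 0 ≤ 1 - t := by linarith [ht.2]
  have i0 := cos_integrable β hβ0 hβ1 ν (hh_integrable β ν C0 hν) u v
  have i1 := cos_integrable β hβ0 hβ1 _ (hh_integrable β _ C0 ((hh_map1 β hβ0 ν).trans hν)) u v
  have i2 := cos_integrable β hβ0 hβ1 _ (hh_integrable β _ C0 ((hh_map2 β hβ0 ν).trans hν)) u v
  unfold Bs psR nut
  rw [integral_add_measure (i0.smul_measure ENNReal.ofReal_ne_top)
    ((i1.add_measure i2).smul_measure ENNReal.ofReal_ne_top), integral_smul_measure, integral_smul_measure,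
    integral_add_measure i1 i2, integral_map (by fun_prop) i1.1, integral_map (by fun_prop) i2.1,
    ENNReal.toReal_ofReal ht.1, ENNReal.toReal_ofReal h3]
  simp

/-- the mixed second difference kernel -/
noncomputable def kk (y z : ℝ × ℝ) : ℂ := (2:ℂ)⁻¹ * (sa y.1 z.1 * sa y.2 z.2 + sa (-y.1) z.1 * sa (-y.2) z.2)

lemma kk_eq (y z : ℝ × ℝ) : kk y z = ((1 - Real.cos (z.1 * y.1) + (1 - Real.cos (z.2 * y.2)) -
    (1 - Real.cos (z.1 * y.1 + z.2 * y.2)) : ℝ) : ℂ) := by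
  unfold kk sa
  have e1 : Complex.exp (Complex.I * y.1 * z.1) * Complex.exp (Complex.I * y.2 * z.2) =
    Complex.exp ((z.1 * y.1 + z.2 * y.2) * Complex.I) := by
    rw [← Complex.exp_add]; congr 1; ring
  have e2 : Complex.exp (Complex.I * (-y.1 : ℝ) * z.1) * Complex.exp (Complex.I * (-y.2 : ℝ) * z.2) =
    Complex.exp (-(z.1 * y.1 + z.2 * y.2) * Complex.I) := by
    rw [← Complex.exp_add]; congr 1; push_cast; ring
  have e3 : Complex.exp (Complex.I * y.1 * z.1) = Complex.exp (z.1 * y.1 * Complex.I) := by congr 1; ring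
  have e4 : Complex.exp (Complex.I * y.2 * z.2) = Complex.exp (z.2 * y.2 * Complex.I) := by congr 1; ring
  have e5 : Complex.exp (Complex.I * (-y.1 : ℝ) * z.1) = Complex.exp (-(z.1 * y.1) * Complex.I) := by
    congr 1; push_cast; ring
  have e6 : Complex.exp (Complex.I * (-y.2 : ℝ) * z.2) = Complex.exp (-(z.2 * y.2) * Complex.I) := by
    congr 1; push_cast; ring
  push_cast
  simp only [Complex.cos]
  rw [← e3, ← e4]
  rw [e3, e4] at e1 ⊢
  rw [e5, e6] at e2
  push_cast at e5 e6
  rw [e5, e6]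
  rw [← e1, ← e2]
  ring

lemma norm_sa_min (a u : ℝ) : ‖sa a u‖ ≤ 2 * (1 + |u|) * min 1 |a| := by
  rcases le_total 1 |a| with h | h
  · rw [min_eq_left h]
    have := norm_sa_real2 a u
    linarith [abs_nonneg u]
  · rw [min_eq_right h]
    have := norm_sa_real a u
    rw [abs_mul] at this
    nlinarith [abs_nonneg a, abs_nonneg u, mul_nonneg (abs_nonneg a) (abs_nonneg u)]

lemma min_min_le_hh (β : ℝ) (hβ0 : 0 < β) (hβ1 : β < 1) (y : ℝ × ℝ) : min 1 |y.1| * min 1 |y.2| ≤ hh β y := by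
  have p1 : 0 ≤ min 1 |y.1| := by positivity
  have p2 : 0 ≤ min 1 |y.2| := by positivity
  by_cases h : nn y ≤ 1
  · rw [hh_small β hβ0 hβ1 y h, sq]
    have a1 : min 1 |y.1| ≤ nn y := (min_le_right _ _).trans (by unfold nn; linarith [abs_nonneg y.2])
    have a2 : min 1 |y.2| ≤ nn y := (min_le_right _ _).trans (by unfold nn; linarith [abs_nonneg y.1])
    exact mul_le_mul a1 a2 p2 (nn_nonneg y)
  · have := hh_large_one β hβ0 hβ1 y (not_le.mp h)
    have a1 : min 1 |y.1| ≤ 1 := min_le_left _ _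
    have a2 : min 1 |y.2| ≤ 1 := min_le_left _ _
    nlinarith

lemma kk_bound (β : ℝ) (hβ0 : 0 < β) (hβ1 : β < 1) (y z : ℝ × ℝ) :
    ‖kk y z‖ ≤ (4 * hh β y) * ((1 + |z.1|) * (1 + |z.2|)) := by
  unfold kk
  have h1 := norm_sa_min y.1 z.1
  have h2 := norm_sa_min y.2 z.2
  have h3 := norm_sa_min (-y.1) z.1
  have h4 := norm_sa_min (-y.2) z.2
  rw [abs_neg] at h3 h4
  have h5 := min_min_le_hh β hβ0 hβ1 y
  rw [norm_mul, norm_inv, Complex.norm_ofNat]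
  calc _ ≤ 2⁻¹ * (2 * (1 + |z.1|) * min 1 |y.1| * (2 * (1 + |z.2|) * min 1 |y.2|) +
        2 * (1 + |z.1|) * min 1 |y.1| * (2 * (1 + |z.2|) * min 1 |y.2|)) := by
        gcongr
        refine (norm_add_le _ _).trans ?_
        rw [norm_mul, norm_mul]
        gcongr
    _ = (4 * (min 1 |y.1| * min 1 |y.2|)) * ((1 + |z.1|) * (1 + |z.2|)) := by ring
    _ ≤ _ := by gcongr

lemma kk_meas : Measurable (fun p : (ℝ × ℝ) × (ℝ × ℝ) => kk p.1 p.2) := by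
  unfold kk sa
  fun_prop

lemma exp_interp (A B : ℝ) : Complex.exp (-(A : ℂ)) - Complex.exp (-(B : ℂ)) =
    ∫ t in Ioc (0:ℝ) 1, ((B - A : ℝ) : ℂ) * Complex.exp (-((t * A + (1 - t) * B : ℝ) : ℂ)) := by
  have hd : ∀ t : ℝ, HasDerivAt (fun t : ℝ => Complex.exp (-((t * A + (1 - t) * B : ℝ) : ℂ)))
      (((B - A : ℝ) : ℂ) * Complex.exp (-((t * A + (1 - t) * B : ℝ) : ℂ))) t := by
    intro t
    have h1 : HasDerivAt (fun t : ℝ => -(t * A + (1 - t) * B)) (B - A) t := by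
      have := (((hasDerivAt_id t).mul_const A).add (((hasDerivAt_id t).const_sub 1).mul_const B)).neg
      refine this.congr_deriv ?_
      ring
    have h2 := h1.ofReal_comp.cexp
    convert h2 using 1
    · ext t; push_cast; rfl
    · push_cast; ring
  have := intervalIntegral.integral_eq_sub_of_hasDerivAt (a := 0) (b := 1) (fun t _ => hd t)
    (by apply Continuous.intervalIntegrable; fun_prop)
  rw [intervalIntegral.integral_of_le zero_le_one] at this
  rw [this]
  simp

lemma WN_diff (β : ℝ) (hβ0 : 0 < β) (hβ1 : β < 1) (ν : Measure (ℝ × ℝ)) [SFinite ν] (c C0 C1 : ℝ) (hc : 0 < c)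
    (hC0 : 0 ≤ C0) (hC1 : 0 ≤ C1) (hν : ∫⁻ x, ENNReal.ofReal (hh β x) ∂ν ≤ ENNReal.ofReal C0)
    (hlow : ∀ u v : ℝ, c * (|u| + |v|) - C1 ≤ psR ν u v) :
    WN β (FI (fun z => Complex.exp (-(psR ν z.1 z.2 : ℂ)) - Complex.exp (-(Bs ν z.1 z.2 : ℂ))))
      ≤ ENNReal.ofReal (9 * CB c (2 * C0) (2 * C1)) * ∫⁻ y, ENNReal.ofReal (mm β y.1 * mm β y.2) ∂ν := by
  have hhi := hh_integrable β ν C0 hν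
  have hAm := psR_meas ν
  have hBm : Measurable (fun z : ℝ × ℝ => Bs ν z.1 z.2) := by
    unfold Bs
    have h1 : Measurable (fun z : ℝ × ℝ => psR ν z.1 0) := hAm.comp (g := fun z : ℝ × ℝ => psR ν z.1 z.2) (f := fun z : ℝ × ℝ => (z.1, (0:ℝ))) (by fun_prop)
    have h2 : Measurable (fun z : ℝ × ℝ => psR ν 0 z.2) := hAm.comp (g := fun z : ℝ × ℝ => psR ν z.1 z.2) (f := fun z : ℝ × ℝ => ((0:ℝ), z.2)) (by fun_prop)
    exact h1.add h2
  have hBlow : ∀ u v : ℝ, c * (|u| + |v|) - 2 * C1 ≤ Bs ν u v := by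
    intro u v
    have h1 := hlow u 0
    have h2 := hlow 0 v
    simp only [abs_zero] at h1 h2
    unfold Bs; linarith
  have htlow : ∀ t ∈ Icc (0:ℝ) 1, ∀ u v : ℝ, c * (|u| + |v|) - 2 * C1 ≤ t * psR ν u v + (1 - t) * Bs ν u v := by
    intro t ht u v
    have h1 := hlow u v
    have h2 := hBlow u v
    have h3 : 0 ≤ 1 - t := by linarith [ht.2]
    have h1' : c * (|u| + |v|) - 2 * C1 ≤ psR ν u v := by linarith
    nlinarith [mul_le_mul_of_nonneg_left h1' ht.1, mul_le_mul_of_nonneg_left h2 h3]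
  set ρ := ((volume : Measure ℝ).restrict (Ioc (0:ℝ) 1)).prod ν with hρ
  set Θ : (ℝ × ℝ) × (ℝ × (ℝ × ℝ)) → ℂ := fun q => kk q.2.2 q.1 *
    Complex.exp (-((q.2.1 * psR ν q.1.1 q.1.2 + (1 - q.2.1) * Bs ν q.1.1 q.1.2 : ℝ) : ℂ)) with hΘ
  have hk := kk_meas
  have hΘm : Measurable Θ := by
    have h1 : Measurable (fun q : (ℝ × ℝ) × (ℝ × (ℝ × ℝ)) => psR ν q.1.1 q.1.2) := hAm.comp measurable_fst
    have h2 : Measurable (fun q : (ℝ × ℝ) × (ℝ × (ℝ × ℝ)) => Bs ν q.1.1 q.1.2) := hBm.comp measurable_fst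
    have h3 : Measurable (fun q : (ℝ × ℝ) × (ℝ × (ℝ × ℝ)) => kk q.2.2 q.1) :=
      hk.comp (f := fun q : (ℝ × ℝ) × (ℝ × (ℝ × ℝ)) => (q.2.2, q.1)) (by fun_prop)
    simp only [hΘ]
    fun_prop
  have hmem : ∀ᵐ p ∂ρ, p.1 ∈ Icc (0:ℝ) 1 := by
    have : ∀ᵐ t ∂((volume : Measure ℝ).restrict (Ioc (0:ℝ) 1)), t ∈ Icc (0:ℝ) 1 := by
      filter_upwards [ae_restrict_mem measurableSet_Ioc] with t ht using Ioc_subset_Icc_self ht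
    exact Measure.quasiMeasurePreserving_fst.ae this
  have hρi : Integrable (fun p : ℝ × (ℝ × ℝ) => hh β p.2) ρ := by
    have := (integrable_const (μ := (volume : Measure ℝ).restrict (Ioc (0:ℝ) 1)) (1:ℝ)).mul_prod hhi
    simpa using this
  have hΘi : Integrable Θ ((volume : Measure (ℝ × ℝ)).prod ρ) := by
    have hdom := ((ee_prod_integrable c hc).mul_prod hρi).const_mul (4 * Real.exp (2 * C1))
    refine hdom.mono' hΘm.aestronglyMeasurable ?_
    have : ∀ᵐ q ∂((volume : Measure (ℝ × ℝ)).prod ρ), q.2.1 ∈ Icc (0:ℝ) 1 :=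
      Measure.quasiMeasurePreserving_snd.ae hmem
    filter_upwards [this] with q hq
    simp only [hΘ]
    rw [norm_mul, Complex.norm_exp, ← Complex.ofReal_neg, Complex.ofReal_re]
    have h1 := exp_psi_bound c (2 * C1) _ _ _ (htlow q.2.1 hq q.1.1 q.1.2)
    have h2 := kk_bound β hβ0 hβ1 q.2.2 q.1
    have h3 := hh_nonneg β q.2.2
    calc _ ≤ (4 * hh β q.2.2) * ((1 + |q.1.1|) * (1 + |q.1.2|)) * Real.exp (-(q.2.1 * psR ν q.1.1 q.1.2 + (1 - q.2.1) * Bs ν q.1.1 q.1.2)) := by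
          gcongr
      _ = (4 * hh β q.2.2) * ((1 + |q.1.1|) * (1 + |q.1.2|) * Real.exp (-(q.2.1 * psR ν q.1.1 q.1.2 + (1 - q.2.1) * Bs ν q.1.1 q.1.2))) := by ring
      _ ≤ (4 * hh β q.2.2) * (Real.exp (2 * C1) * (ee c q.1.1 * ee c q.1.2)) :=
          mul_le_mul_of_nonneg_left h1 (by positivity)
      _ = _ := by ring
  have hD : ∀ z : ℝ × ℝ, Complex.exp (-(psR ν z.1 z.2 : ℂ)) - Complex.exp (-(Bs ν z.1 z.2 : ℂ)) =
      ∫ p, Θ (z, p) ∂ρ := by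
    intro z
    rw [exp_interp]
    have hBA : ((Bs ν z.1 z.2 - psR ν z.1 z.2 : ℝ) : ℂ) = ∫ y, kk y z ∂ν := by
      simp_rw [kk_eq]
      rw [integral_complex_ofReal]
      congr 1
      have i0 := cos_integrable β hβ0 hβ1 ν hhi z.1 z.2
      have i1 := cos_integrable β hβ0 hβ1 ν hhi z.1 0
      have i2 := cos_integrable β hβ0 hβ1 ν hhi 0 z.2
      unfold Bs psR
      rw [← integral_add i1 i2]
      refine (integral_sub (i1.add i2) i0).symm.trans ?_
      congr 1; ext y
      simp
    rw [hBA]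
    simp only [hΘ, hρ]
    have := integral_prod_mul (μ := (volume : Measure ℝ).restrict (Ioc (0:ℝ) 1)) (ν := ν)
      (fun t : ℝ => Complex.exp (-((t * psR ν z.1 z.2 + (1 - t) * Bs ν z.1 z.2 : ℝ) : ℂ))) (fun y => kk y z)
    rw [integral_const_mul, mul_comm, ← this]
    congr 1; ext p; ring
  simp_rw [hD]
  refine (WN_FI_integral β ρ Θ hΘm hΘi).trans ?_
  have hmm := mm_meas β
  calc _ ≤ ∫⁻ p, ENNReal.ofReal (9 * CB c (2 * C0) (2 * C1)) * ENNReal.ofReal (mm β p.2.1 * mm β p.2.2) ∂ρ := by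
        apply lintegral_mono_ae
        filter_upwards [hmem] with p hp
        have hq := WN_sa β hβ0 hβ1 (nut ν p.1) c (2 * C0) (2 * C1) hc (by positivity)
          (nut_hh β hβ0 ν C0 hC0 hν p.1 hp) (fun u v => by
            rw [nut_psR β hβ0 hβ1 ν C0 hν p.1 hp]; exact htlow p.1 hp u v)
        have hq1 := hq p.2.1 p.2.2
        have hq2 := hq (-p.2.1) (-p.2.2)
        have hmneg : ∀ a, mm β (-a) = mm β a := fun a => by unfold mm; rw [abs_neg]
        rw [hmneg, hmneg] at hq2
        have hintg : ∀ a b : ℝ, Integrable (fun z : ℝ × ℝ => sa a z.1 * sa b z.2 * Complex.exp (-(psR (nut ν p.1) z.1 z.2 : ℂ))) := by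
          intro a b
          have := (sa_diff a).continuous.measurable
          have := (sa_diff b).continuous.measurable
          refine q_integrable (fun z => psR (nut ν p.1) z.1 z.2) (psR_meas _) c (2 * C1) hc (fun z => by
            rw [nut_psR β hβ0 hβ1 ν C0 hν p.1 hp]; exact htlow p.1 hp _ _) _ (by fun_prop) 4 (by norm_num) (fun z => ?_)
          rw [norm_mul]
          calc _ ≤ 2 * (2:ℝ) := mul_le_mul (norm_sa_real2 _ _) (norm_sa_real2 _ _) (norm_nonneg _) (by norm_num)
            _ ≤ _ := by nlinarith [abs_nonneg z.1, abs_nonneg z.2, mul_nonneg (abs_nonneg z.1) (abs_nonneg z.2)]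
        have hmeas : ∀ a b : ℝ, Measurable (fun z : ℝ × ℝ => sa a z.1 * sa b z.2 * Complex.exp (-(psR (nut ν p.1) z.1 z.2 : ℂ))) := by
          intro a b
          have := (sa_diff a).continuous.measurable
          have := (sa_diff b).continuous.measurable
          have := psR_meas (nut ν p.1)
          fun_prop
        have hfun : (fun z => Θ (z, p)) = fun z => (2:ℂ)⁻¹ * (sa p.2.1 z.1 * sa p.2.2 z.2 * Complex.exp (-(psR (nut ν p.1) z.1 z.2 : ℂ))
            + sa (-p.2.1) z.1 * sa (-p.2.2) z.2 * Complex.exp (-(psR (nut ν p.1) z.1 z.2 : ℂ))) := by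
          ext z
          simp only [hΘ, kk]
          rw [nut_psR β hβ0 hβ1 ν C0 hν p.1 hp]
          ring
        have hfun2 := funext (FI_add _ _ (hintg p.2.1 p.2.2) (hintg (-p.2.1) (-p.2.2)))
        rw [hfun, WN_const_mul, hfun2]
        have h2 : ‖(2:ℂ)⁻¹‖ₑ = 2⁻¹ := by
          rw [enorm_inv (by norm_num)]
          simp [enorm_eq_nnnorm]
        rw [h2]
        calc _ ≤ 2⁻¹ * (ENNReal.ofReal (9 * CB c (2 * C0) (2 * C1) * (mm β p.2.1 * mm β p.2.2)) +
              ENNReal.ofReal (9 * CB c (2 * C0) (2 * C1) * (mm β p.2.1 * mm β p.2.2))) := by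
              refine mul_le_mul_right ((WN_add β _ _ (FI_meas _ (hmeas _ _))).trans ?_) _
              exact add_le_add hq1 hq2
          _ = _ := by
              rw [← two_mul, ← mul_assoc, ENNReal.inv_mul_cancel (by norm_num) (by norm_num), one_mul,
                ENNReal.ofReal_mul (by have := CB_nonneg c (2 * C0) (2 * C1); positivity)]
    _ = _ := by
        rw [lintegral_const_mul _ (by fun_prop), hρ, lintegral_prod _ (by fun_prop)]
        simp

lemma FI_inversion (Φ : ℝ × ℝ → ℂ) (hc : Continuous Φ) (hi : Integrable Φ) (hF : Integrable (FI Φ)) (z : ℝ × ℝ) :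
    ∫ x : ℝ × ℝ, Complex.exp (Complex.I * (z.1 * x.1 + z.2 * x.2)) * (((2 * π) ^ 2 : ℝ)⁻¹ * FI Φ x) = Φ z := by
  have hin : ∀ v w : WithLp 2 (ℝ × ℝ), inner ℝ v w = v.ofLp.1 * w.ofLp.1 + v.ofLp.2 * w.ofLp.2 := by
    intro v w
    rw [WithLp.prod_inner_apply]
    simp [mul_comm]
  have hmp := WithLp.volume_preserving_ofLp (U := ℝ) (V := ℝ)
  have hme : MeasurableEmbedding (@WithLp.ofLp 2 (ℝ × ℝ)) :=
    (MeasurableEquiv.toLp 2 (ℝ × ℝ)).symm.measurableEmbedding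
  let f : WithLp 2 (ℝ × ℝ) → ℂ := fun v => Φ v.ofLp
  have hfc : Continuous f := hc.comp (WithLp.prod_continuous_ofLp _ _ _)
  have hfi : Integrable f := (hmp.integrable_comp_emb hme).mpr hi
  have hfour : FourierTransform.fourier f = fun ξ : WithLp 2 (ℝ × ℝ) => FI Φ ((2 * π) • ξ.ofLp) := by
    ext ξ
    rw [Real.fourier_eq']
    unfold FI
    rw [← hmp.integral_comp hme]
    congr 1; ext v
    rw [smul_eq_mul]
    congr 2
    rw [hin]
    simp
    ring
  have h2pi : (2 * π) ≠ 0 := by positivity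
  have hF2 : Integrable (fun x : ℝ × ℝ => FI Φ ((2 * π) • x)) := hF.comp_smul h2pi
  have hfi2 : Integrable (FourierTransform.fourier f) := by
    rw [hfour]
    exact (hmp.integrable_comp_emb hme).mpr hF2
  have hinv := congrFun (hfc.fourierInv_fourier_eq hfi hfi2) (WithLp.toLp 2 z)
  rw [Real.fourierInv_eq', hfour] at hinv
  have e1 : f (WithLp.toLp 2 z) = Φ z := rfl
  rw [e1] at hinv
  rw [← hinv]
  have e2 : ∀ v : WithLp 2 (ℝ × ℝ), Complex.exp (((2 * π * inner ℝ v (WithLp.toLp 2 z) : ℝ) : ℂ) * Complex.I) • FI Φ ((2 * π) • v.ofLp)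
      = (fun x : ℝ × ℝ => Complex.exp (Complex.I * (z.1 * ((2 * π) • x).1 + z.2 * ((2 * π) • x).2)) * FI Φ ((2 * π) • x)) v.ofLp := by
    intro v
    simp only [smul_eq_mul]
    congr 2
    rw [hin]
    simp
    ring
  simp_rw [e2]
  rw [hmp.integral_comp hme (fun x : ℝ × ℝ => Complex.exp (Complex.I * (z.1 * ((2 * π) • x).1 + z.2 * ((2 * π) • x).2)) * FI Φ ((2 * π) • x))]
  rw [Measure.integral_comp_smul volume (fun x : ℝ × ℝ => Complex.exp (Complex.I * (z.1 * x.1 + z.2 * x.2)) * FI Φ x) (2 * π)]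
  have : Module.finrank ℝ (ℝ × ℝ) = 2 := by simp
  rw [this, abs_of_pos (by positivity), Complex.real_smul, ← integral_const_mul]
  congr 1; ext x
  push_cast; ring

lemma norm_kernel' (z x : ℝ × ℝ) : ‖Complex.exp (Complex.I * ((z.1 : ℂ) * x.1 + z.2 * x.2))‖ = 1 := by
  rw [Complex.norm_exp]; simp

lemma kernel_integrable (ρ : Measure (ℝ × ℝ)) [IsFiniteMeasure ρ] (z : ℝ × ℝ) :
    Integrable (fun x : ℝ × ℝ => Complex.exp (Complex.I * ((z.1 : ℂ) * x.1 + z.2 * x.2))) ρ := by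
  refine (integrable_const (1:ℝ)).mono' ?_ (Eventually.of_forall fun x => (norm_kernel' z x).le)
  apply Measurable.aestronglyMeasurable; fun_prop

lemma cf_cont (ρ : Measure (ℝ × ℝ)) [IsFiniteMeasure ρ] :
    Continuous (fun z : ℝ × ℝ => ∫ x, Complex.exp (Complex.I * ((z.1 : ℂ) * x.1 + z.2 * x.2)) ∂ρ) := by
  apply continuous_of_dominated (bound := fun _ => 1)
  · intro z; exact (kernel_integrable ρ z).1
  · intro z; exact Eventually.of_forall fun x => (norm_kernel' z x).le
  · exact integrable_const _
  · refine Eventually.of_forall fun x => ?_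
    fun_prop

lemma withDensity_int (d : ℝ × ℝ → ℝ) (hdm : Measurable d) {E : Type*} [NormedAddCommGroup E] [NormedSpace ℝ E] (H : ℝ × ℝ → E) :
    ∫ x, H x ∂((volume : Measure (ℝ × ℝ)).withDensity (fun x => ENNReal.ofReal (d x))) = ∫ x, (max (d x) 0) • H x := by
  rw [integral_withDensity_eq_integral_toReal_smul (by fun_prop) (Eventually.of_forall fun x => ENNReal.ofReal_lt_top)]
  simp only [ENNReal.toReal_ofReal']

lemma measure_compare (ρ1 ρ0 : Measure (ℝ × ℝ)) [IsFiniteMeasure ρ1] [IsFiniteMeasure ρ0] (d : ℝ × ℝ → ℝ)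
    (hdm : Measurable d) (hdi : Integrable d)
    (h : ∀ z : ℝ × ℝ, (∫ x, Complex.exp (Complex.I * ((z.1 : ℂ) * x.1 + z.2 * x.2)) ∂ρ1) -
      (∫ x, Complex.exp (Complex.I * ((z.1 : ℂ) * x.1 + z.2 * x.2)) ∂ρ0) =
      ∫ x : ℝ × ℝ, Complex.exp (Complex.I * ((z.1 : ℂ) * x.1 + z.2 * x.2)) * (d x : ℂ))
    (H : ℝ × ℝ → ℝ) (hH : Measurable H) (hH1 : Integrable H ρ1) (hH0 : Integrable H ρ0)
    (hHd : Integrable (fun x => d x * H x)) :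
    (∫ x, H x ∂ρ1) - ∫ x, H x ∂ρ0 = ∫ x, d x * H x := by
  have hdim := hdi.neg
  set w1 := (volume : Measure (ℝ × ℝ)).withDensity (fun x => ENNReal.ofReal (-d x)) with hw1
  set w0 := (volume : Measure (ℝ × ℝ)).withDensity (fun x => ENNReal.ofReal (d x)) with hw0
  have f1 : IsFiniteMeasure w1 := isFiniteMeasure_withDensity_ofReal hdim.2
  have f0 : IsFiniteMeasure w0 := isFiniteMeasure_withDensity_ofReal hdi.2
  have key : ∀ {E : Type} [NormedAddCommGroup E] [NormedSpace ℝ E] (G : ℝ × ℝ → E),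
      AEStronglyMeasurable G volume → Integrable (fun x => d x • G x) →
      (∫ x, G x ∂w0) - ∫ x, G x ∂w1 = ∫ x, d x • G x := by
    intro E _ _ G hGm hG
    rw [hw0, hw1, withDensity_int _ hdm, withDensity_int (fun x => -d x) hdm.neg, ← integral_sub]
    · congr 1; ext x
      rw [← sub_smul]; congr 1
      rcases le_total (d x) 0 with h | h
      · simp [h]
      · simp [h]
    · refine hG.norm.mono' (AEStronglyMeasurable.smul (by fun_prop) hGm) (Eventually.of_forall fun x => ?_)
      rw [norm_smul, norm_smul]
      gcongr
      rcases le_total (d x) 0 with h | h <;> simp [h]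
    · refine hG.norm.mono' (AEStronglyMeasurable.smul (by fun_prop) hGm) (Eventually.of_forall fun x => ?_)
      rw [norm_smul, norm_smul]
      gcongr
      rcases le_total (d x) 0 with h | h <;> simp [h]
  have hm : ρ1 + w1 = ρ0 + w0 := by
    apply Measure.ext_of_charFunDual
    ext L
    have hL : ∀ x : ℝ × ℝ, Complex.exp ((L x : ℂ) * Complex.I) =
        Complex.exp (Complex.I * (((L (1, 0), L (0, 1)) : ℝ × ℝ).1 * x.1 + ((L (1, 0), L (0, 1)) : ℝ × ℝ).2 * x.2)) := by
      intro x
      have : L x = L (1, 0) * x.1 + L (0, 1) * x.2 := by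
        have e : x = x.1 • ((1:ℝ), (0:ℝ)) + x.2 • ((0:ℝ), (1:ℝ)) := by ext <;> simp
        conv_lhs => rw [e]
        rw [map_add, map_smul, map_smul]
        simp [mul_comm]
      rw [this]; congr 1; push_cast; ring
    rw [charFunDual_apply, charFunDual_apply]
    simp_rw [hL]
    set z : ℝ × ℝ := (L (1, 0), L (0, 1))
    rw [integral_add_measure (kernel_integrable ρ1 z) (kernel_integrable w1 z),
      integral_add_measure (kernel_integrable ρ0 z) (kernel_integrable w0 z)]
    have hk := key (fun x : ℝ × ℝ => Complex.exp (Complex.I * ((z.1 : ℂ) * x.1 + z.2 * x.2)))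
      (by apply Measurable.aestronglyMeasurable; fun_prop) (by
        refine hdi.norm.mono' (by apply Measurable.aestronglyMeasurable; fun_prop) (Eventually.of_forall fun x => ?_)
        rw [norm_smul, norm_kernel', mul_one])
    have h' := h z
    have : ∫ x : ℝ × ℝ, Complex.exp (Complex.I * ((z.1 : ℂ) * x.1 + z.2 * x.2)) * (d x : ℂ) =
        ∫ x : ℝ × ℝ, d x • Complex.exp (Complex.I * ((z.1 : ℂ) * x.1 + z.2 * x.2)) := by
      congr 1; ext x; rw [Complex.real_smul, mul_comm]
    rw [this, ← hk] at h'
    linear_combination h'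
  have hmx : ∀ (e : ℝ × ℝ → ℝ), Measurable e → (∀ x, |max (e x) 0| ≤ |d x|) →
      Integrable H ((volume : Measure (ℝ × ℝ)).withDensity (fun x => ENNReal.ofReal (e x))) := by
    intro e hem he
    rw [integrable_withDensity_iff_integrable_smul' (by fun_prop) (Eventually.of_forall fun x => ENNReal.ofReal_lt_top)]
    refine hHd.norm.mono' (by apply Measurable.aestronglyMeasurable; fun_prop) (Eventually.of_forall fun x => ?_)
    rw [norm_smul, norm_mul, ENNReal.toReal_ofReal']
    exact mul_le_mul_of_nonneg_right (he x) (norm_nonneg _)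
  have i1 : Integrable H w1 := hmx (fun x => -d x) hdm.neg (fun x => by
    rcases le_total (d x) 0 with h | h <;> simp [h])
  have i0 : Integrable H w0 := hmx d hdm (fun x => by
    rcases le_total (d x) 0 with h | h <;> simp [h])
  have hfin := congrArg (fun m => ∫ x, H x ∂m) hm
  rw [integral_add_measure hH1 i1, integral_add_measure hH0 i0] at hfin
  have hk := key H hH.aestronglyMeasurable hHd
  simp only [smul_eq_mul] at hk
  linarith

lemma fourier_compare (β : ℝ) (hβ : 0 ≤ β) (ρ1 ρ0 : Measure (ℝ × ℝ)) [IsFiniteMeasure ρ1] [IsFiniteMeasure ρ0] (Φ : ℝ × ℝ → ℂ)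
    (hi : Integrable Φ) (W : ℝ) (hW0 : 0 ≤ W) (hW : WN β (FI Φ) ≤ ENNReal.ofReal W)
    (h : ∀ z : ℝ × ℝ, (∫ x, Complex.exp (Complex.I * ((z.1 : ℂ) * x.1 + z.2 * x.2)) ∂ρ1) -
      (∫ x, Complex.exp (Complex.I * ((z.1 : ℂ) * x.1 + z.2 * x.2)) ∂ρ0) = Φ z)
    (H : ℝ × ℝ → ℝ) (hH : Measurable H) (hH1 : Integrable H ρ1) (hH0 : Integrable H ρ0) (M : ℝ) (hM : 0 ≤ M)
    (hHb : ∀ᵐ x : ℝ × ℝ, |H x| ≤ M * wt β x) :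
    |(∫ x, H x ∂ρ1) - ∫ x, H x ∂ρ0| ≤ M * W := by
  have hc : Continuous Φ := by
    have : Φ = fun z => (∫ x, Complex.exp (Complex.I * ((z.1 : ℂ) * x.1 + z.2 * x.2)) ∂ρ1) -
      (∫ x, Complex.exp (Complex.I * ((z.1 : ℂ) * x.1 + z.2 * x.2)) ∂ρ0) := by ext z; exact (h z).symm
    rw [this]
    exact (cf_cont ρ1).sub (cf_cont ρ0)
  have hFm := FI_meas Φ hc.measurable
  have hwm := wt_meas β
  have hw1 : ∀ x, 1 ≤ wt β x := by
    intro x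
    unfold wt
    have h1 : 1 ≤ (1 + |x.1|) ^ β := Real.one_le_rpow (by linarith [abs_nonneg x.1]) hβ
    have h2 : 1 ≤ (1 + |x.2|) ^ β := Real.one_le_rpow (by linarith [abs_nonneg x.2]) hβ
    nlinarith
  have hwF : Integrable (fun x => wt β x * ‖FI Φ x‖) := by
    refine ⟨by fun_prop, ?_⟩
    rw [hasFiniteIntegral_iff_ofReal (Eventually.of_forall fun x => mul_nonneg (wt_nonneg β x) (norm_nonneg _))]
    refine lt_of_le_of_lt (le_trans (le_of_eq ?_) hW) ENNReal.ofReal_lt_top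
    unfold WN
    congr 1; ext x
    rw [ENNReal.ofReal_mul (wt_nonneg β x), ofReal_norm]
  have hwFle : ∫ x, wt β x * ‖FI Φ x‖ ≤ W := by
    rw [integral_eq_lintegral_of_nonneg_ae (Eventually.of_forall fun x => mul_nonneg (wt_nonneg β x) (norm_nonneg _)) hwF.1]
    refine ENNReal.toReal_le_of_le_ofReal hW0 (le_trans (le_of_eq ?_) hW)
    unfold WN
    congr 1; ext x
    rw [ENNReal.ofReal_mul (wt_nonneg β x), ofReal_norm]
  have hFi : Integrable (FI Φ) := by
    refine hwF.mono' hFm.aestronglyMeasurable (Eventually.of_forall fun x => ?_)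
    nlinarith [hw1 x, norm_nonneg (FI Φ x)]
  set k : ℝ := ((2 * π) ^ 2)⁻¹ with hk
  have hk0 : 0 ≤ k := by positivity
  have hk1 : k ≤ 1 := by
    apply inv_le_one_of_one_le₀
    nlinarith [Real.pi_gt_three]
  set d : ℝ × ℝ → ℝ := fun x => k * (FI Φ x).re with hd
  have hdm : Measurable d := by simp only [hd]; fun_prop
  have hdle : ∀ x, |d x| ≤ ‖FI Φ x‖ := by
    intro x
    simp only [hd]
    rw [abs_mul, abs_of_nonneg hk0]
    have := Complex.abs_re_le_norm (FI Φ x)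
    nlinarith [abs_nonneg (FI Φ x).re]
  have hdi : Integrable d := hFi.norm.mono' hdm.aestronglyMeasurable (Eventually.of_forall hdle)
  have hinv := FI_inversion Φ hc hi hFi
  have hsym : ∀ z, (starRingEnd ℂ) (Φ (-z)) = Φ z := by
    intro z
    rw [← h z, ← h (-z), map_sub, ← integral_conj, ← integral_conj]
    congr 1 <;>
    · congr 1; ext x
      rw [← Complex.exp_conj]
      congr 1
      simp
      ring
  have hintg : ∀ z, ∫ x : ℝ × ℝ, Complex.exp (Complex.I * ((z.1 : ℂ) * x.1 + z.2 * x.2)) * (d x : ℂ) = Φ z := by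
    intro z
    have a1 := hinv z
    have a2 : ∫ x : ℝ × ℝ, Complex.exp (Complex.I * (z.1 * x.1 + z.2 * x.2)) * (k * (starRingEnd ℂ) (FI Φ x)) = Φ z := by
      rw [← hsym z, ← hinv (-z), ← integral_conj]
      congr 1; ext x
      rw [map_mul, map_mul, ← Complex.exp_conj, Complex.conj_ofReal]
      congr 2
      simp
      ring
    have b1 : Integrable (fun x : ℝ × ℝ => Complex.exp (Complex.I * (z.1 * x.1 + z.2 * x.2)) * (k * FI Φ x)) := by
      refine hFi.norm.mono' (by apply Measurable.aestronglyMeasurable; fun_prop) (Eventually.of_forall fun x => ?_)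
      rw [norm_mul, norm_kernel', one_mul, norm_mul, Complex.norm_real, Real.norm_eq_abs, abs_of_nonneg hk0]
      nlinarith [norm_nonneg (FI Φ x)]
    have hcm : Measurable (fun x => (starRingEnd ℂ) (FI Φ x)) := Complex.continuous_conj.measurable.comp hFm
    have b2 : Integrable (fun x : ℝ × ℝ => Complex.exp (Complex.I * (z.1 * x.1 + z.2 * x.2)) * (k * (starRingEnd ℂ) (FI Φ x))) := by
      refine hFi.norm.mono' (by apply Measurable.aestronglyMeasurable; fun_prop) (Eventually.of_forall fun x => ?_)
      rw [norm_mul, norm_kernel', one_mul, norm_mul, Complex.norm_real, Real.norm_eq_abs, abs_of_nonneg hk0, RCLike.norm_conj]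
      nlinarith [norm_nonneg (FI Φ x)]
    have : ∀ x : ℝ × ℝ, Complex.exp (Complex.I * ((z.1 : ℂ) * x.1 + z.2 * x.2)) * (d x : ℂ) =
        (2:ℂ)⁻¹ * (Complex.exp (Complex.I * (z.1 * x.1 + z.2 * x.2)) * (k * FI Φ x) +
        Complex.exp (Complex.I * (z.1 * x.1 + z.2 * x.2)) * (k * (starRingEnd ℂ) (FI Φ x))) := by
      intro x
      have e := Complex.add_conj (FI Φ x)
      simp only [hd]
      push_cast at e ⊢
      linear_combination (-(2:ℂ)⁻¹ * Complex.exp (Complex.I * (z.1 * x.1 + z.2 * x.2)) * k) * e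
    simp_rw [this]
    rw [integral_const_mul, integral_add b1 b2, a1, a2]
    ring
  have hHd : Integrable (fun x => d x * H x) := by
    refine (hwF.const_mul M).mono' (by apply Measurable.aestronglyMeasurable; fun_prop) ?_
    filter_upwards [hHb] with x hx
    rw [Real.norm_eq_abs, abs_mul]
    calc _ ≤ ‖FI Φ x‖ * (M * wt β x) := mul_le_mul (hdle x) hx (abs_nonneg _) (norm_nonneg _)
      _ = _ := by ring
  rw [measure_compare ρ1 ρ0 d hdm hdi (fun z => by rw [h z, hintg z]) H hH hH1 hH0 hHd]
  calc |∫ x, d x * H x| ≤ ∫ x, M * (wt β x * ‖FI Φ x‖) := by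
        rw [← Real.norm_eq_abs]
        refine norm_integral_le_of_norm_le (hwF.const_mul M) ?_
        filter_upwards [hHb] with x hx
        rw [Real.norm_eq_abs, abs_mul]
        calc _ ≤ ‖FI Φ x‖ * (M * wt β x) := mul_le_mul (hdle x) hx (abs_nonneg _) (norm_nonneg _)
          _ = _ := by ring
    _ ≤ M * W := by
        rw [integral_const_mul]
        gcongr

lemma li_small (q R : ℝ) (hq : -1 < q) (hR : 0 < R) :
    ∫⁻ r in Ioc 0 R, ENNReal.ofReal (r ^ q) = ENNReal.ofReal (R ^ (q + 1) / (q + 1)) := by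
  have hi : IntegrableOn (fun r : ℝ => r ^ q) (Ioc 0 R) :=
    (intervalIntegrable_iff_integrableOn_Ioc_of_le hR.le).mp (intervalIntegral.intervalIntegrable_rpow' hq)
  rw [← ofReal_integral_eq_lintegral_ofReal hi]
  · congr 1
    rw [← intervalIntegral.integral_of_le hR.le, integral_rpow (Or.inl hq), Real.zero_rpow (by linarith), sub_zero]
  · filter_upwards [ae_restrict_mem measurableSet_Ioc] with r hr
    exact Real.rpow_nonneg hr.1.le _

lemma li_large (q R : ℝ) (hq : q < -1) (hR : 0 < R) :
    ∫⁻ r in Ioi R, ENNReal.ofReal (r ^ q) = ENNReal.ofReal (R ^ (q + 1) / (-(q + 1))) := by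
  have hi : IntegrableOn (fun r : ℝ => r ^ q) (Ioi R) := integrableOn_Ioi_rpow_of_lt hq hR
  rw [← ofReal_integral_eq_lintegral_ofReal hi]
  · congr 1
    rw [integral_Ioi_rpow_of_lt hq hR, div_neg, neg_div]
  · filter_upwards [ae_restrict_mem measurableSet_Ioi] with r hr
    exact Real.rpow_nonneg (hR.trans hr).le _

lemma two_power (F : ℝ → ℝ) (a b q1 q2 R : ℝ) (ha : 0 ≤ a) (hb : 0 ≤ b) (hq1 : -1 < q1) (hq2 : q2 < -1) (hR : 0 < R)
    (h1 : ∀ r > 0, F r ≤ a * r ^ q1) (h2 : ∀ r > 0, F r ≤ b * r ^ q2) :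
    ∫⁻ r in Ioi (0:ℝ), ENNReal.ofReal (F r) ≤
      ENNReal.ofReal (a * (R ^ (q1 + 1) / (q1 + 1)) + b * (R ^ (q2 + 1) / (-(q2 + 1)))) := by
  have p1 : 0 ≤ R ^ (q1 + 1) / (q1 + 1) := div_nonneg (by positivity) (by linarith)
  have p2 : 0 ≤ R ^ (q2 + 1) / (-(q2 + 1)) := div_nonneg (by positivity) (by linarith)
  have hset : Ioi (0:ℝ) = Ioc 0 R ∪ Ioi R := (Ioc_union_Ioi_eq_Ioi hR.le).symm
  rw [hset, ENNReal.ofReal_add (by positivity) (by positivity), ENNReal.ofReal_mul ha, ENNReal.ofReal_mul hb,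
    ← li_small q1 R hq1 hR, ← li_large q2 R hq2 hR]
  refine (lintegral_union_le _ _ _).trans (add_le_add ?_ ?_)
  · rw [← lintegral_const_mul _ (by fun_prop)]
    apply setLIntegral_mono (by fun_prop)
    intro r hr
    rw [← ENNReal.ofReal_mul ha]
    exact ENNReal.ofReal_le_ofReal (h1 r hr.1)
  · rw [← lintegral_const_mul _ (by fun_prop)]
    apply setLIntegral_mono (by fun_prop)
    intro r hr
    rw [← ENNReal.ofReal_mul hb]
    exact ENNReal.ofReal_le_ofReal (h2 r (hR.trans hr))

noncomputable def CJ (α β : ℝ) : ℝ := 1 / (2 - α) + 1 / (α - 2 * β)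

lemma CJ_nonneg (α β : ℝ) (hα2 : α < 2) (hβ : β < α / 2) : 0 ≤ CJ α β := by
  unfold CJ
  have : 0 < 2 - α := by linarith
  have : 0 < α - 2 * β := by linarith
  positivity

lemma Jlem (α β : ℝ) (hα1 : 1 < α) (hα2 : α < 2) (hβ0 : 0 < β) (hβ : β < α / 2) (P : ℝ) (hP : 0 ≤ P) :
    ∫⁻ r in Ioi (0:ℝ), ENNReal.ofReal (min (r ^ 2 * P) (r ^ (2 * β) * P ^ β) * r ^ (-1 - α))
      ≤ ENNReal.ofReal (CJ α β * P ^ (α / 2)) := by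
  rcases hP.eq_or_lt with h | h
  · rw [← h]
    simp [Real.zero_rpow hβ0.ne']
  · have hR : 0 < P ^ (-(1/2) : ℝ) := by positivity
    refine (two_power _ P (P ^ β) (1 - α) (2 * β - 1 - α) (P ^ (-(1/2) : ℝ)) hP (by positivity) (by linarith)
      (by linarith) hR ?_ ?_).trans (le_of_eq ?_)
    · intro r hr
      calc _ ≤ (r ^ 2 * P) * r ^ (-1 - α) := by
            gcongr; exact min_le_left _ _
        _ = P * (r ^ (2:ℝ) * r ^ (-1 - α)) := by rw [Real.rpow_two]; ring
        _ = _ := by rw [← Real.rpow_add hr]; congr 2; ring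
    · intro r hr
      calc _ ≤ (r ^ (2 * β) * P ^ β) * r ^ (-1 - α) := by
            gcongr; exact min_le_right _ _
        _ = P ^ β * (r ^ (2 * β) * r ^ (-1 - α)) := by ring
        _ = _ := by rw [← Real.rpow_add hr]; congr 2; ring
    · congr 1
      have e1 : P * (P ^ (-(1/2) : ℝ)) ^ (1 - α + 1) = P ^ (α / 2) := by
        rw [← Real.rpow_mul hP]
        nth_rewrite 1 [← Real.rpow_one P]
        rw [← Real.rpow_add h]; congr 1; ring
      have e2 : P ^ β * (P ^ (-(1/2) : ℝ)) ^ (2 * β - 1 - α + 1) = P ^ (α / 2) := by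
        rw [← Real.rpow_mul hP, ← Real.rpow_add h]; congr 1; ring
      rw [← mul_div_assoc, ← mul_div_assoc, e1, e2]
      unfold CJ
      have d1 : 1 - α + 1 = 2 - α := by ring
      have d2 : -(2 * β - 1 - α + 1) = α - 2 * β := by ring
      rw [d1, d2]; ring

noncomputable def cc (p : ℝ) : ℝ := ∫ r in Ioi (0:ℝ), (1 - Real.cos r) * r ^ (-1 - p)

lemma cos_pos (r : ℝ) : 0 ≤ 1 - Real.cos r := by linarith [Real.cos_le_one r]

lemma cc_integrable (p : ℝ) (hp0 : 0 < p) (hp2 : p < 2) :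
    IntegrableOn (fun r : ℝ => (1 - Real.cos r) * r ^ (-1 - p)) (Ioi 0) := by
  refine ⟨by apply Measurable.aestronglyMeasurable; fun_prop, ?_⟩
  rw [hasFiniteIntegral_iff_ofReal]
  · refine (two_power _ 1 2 (1 - p) (-1 - p) 1 zero_le_one zero_le_two (by linarith) (by linarith) one_pos ?_ ?_).trans_lt
      ENNReal.ofReal_lt_top
    · intro r hr
      have h1 := Real.one_sub_sq_div_two_le_cos (x := r)
      calc _ ≤ r ^ 2 * r ^ (-1 - p) := by gcongr; nlinarith [sq_nonneg r]
        _ = r ^ (2:ℝ) * r ^ (-1 - p) := by rw [Real.rpow_two]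
        _ = _ := by rw [← Real.rpow_add hr, one_mul]; congr 1; ring
    · intro r hr
      gcongr
      linarith [Real.neg_one_le_cos r]
  · filter_upwards [ae_restrict_mem measurableSet_Ioi] with r hr
    have := cos_pos r
    have := Real.rpow_nonneg (le_of_lt hr) (-1 - p)
    simp only [Pi.zero_apply]
    positivity

lemma cc_pos (p : ℝ) (hp0 : 0 < p) (hp2 : p < 2) : 0 < cc p := by
  unfold cc
  rw [setIntegral_pos_iff_support_of_nonneg_ae _ (cc_integrable p hp0 hp2)]
  · refine lt_of_lt_of_le ?_ (measure_mono (s := Ioo (0:ℝ) 1) ?_)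
    · simp
    · intro r hr
      refine ⟨?_, hr.1⟩
      simp only [Function.mem_support]
      have h1 : Real.cos r < 1 := by
        rw [← Real.cos_zero]
        exact Real.cos_lt_cos_of_nonneg_of_le_pi le_rfl (by linarith [hr.2, Real.pi_gt_three]) hr.1
      have h2 : 0 < r ^ (-1 - p) := Real.rpow_pos_of_pos hr.1 _
      have : 0 < 1 - Real.cos r := by linarith
      positivity
  · filter_upwards [ae_restrict_mem measurableSet_Ioi] with r hr
    have := cos_pos r
    have := Real.rpow_nonneg (le_of_lt hr) (-1 - p)
    simp only [Pi.zero_apply]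
    positivity

lemma cc_scale (p : ℝ) (hp0 : 0 < p) (hp2 : p < 2) (x : ℝ) :
    IntegrableOn (fun r : ℝ => (1 - Real.cos (r * x)) * r ^ (-1 - p)) (Ioi 0) ∧
    ∫ r in Ioi (0:ℝ), (1 - Real.cos (r * x)) * r ^ (-1 - p) = |x| ^ p * cc p := by
  have habs : ∀ r : ℝ, Real.cos (r * x) = Real.cos (|x| * r) := by
    intro r
    rcases le_total 0 x with h | h
    · rw [abs_of_nonneg h, mul_comm]
    · rw [abs_of_nonpos h, neg_mul, Real.cos_neg, mul_comm]
  simp_rw [habs]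
  rcases (abs_nonneg x).eq_or_lt with h | h
  · rw [← h]
    simp [Real.zero_rpow hp0.ne']
  · generalize |x| = y at h
    have e : ∀ r ∈ Ioi (0:ℝ), (1 - Real.cos (y * r)) * r ^ (-1 - p) =
        y ^ (1 + p) * ((fun r : ℝ => (1 - Real.cos r) * r ^ (-1 - p)) (y * r)) := by
      intro r hr
      have hr' : 0 < r := hr
      simp only
      rw [Real.mul_rpow h.le hr'.le]
      have : y ^ (1 + p) * y ^ (-1 - p) = 1 := by
        rw [← Real.rpow_add h]; ring_nf; exact Real.rpow_zero _
      linear_combination (-((1 - Real.cos (y * r)) * r ^ (-1 - p))) * this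
    have hi := cc_integrable p hp0 hp2
    constructor
    · rw [integrableOn_congr_fun e measurableSet_Ioi]
      apply Integrable.const_mul
      have := (integrableOn_Ioi_comp_mul_left_iff (fun r : ℝ => (1 - Real.cos r) * r ^ (-1 - p)) 0 h).mpr (by simpa using hi)
      exact this
    · rw [setIntegral_congr_fun measurableSet_Ioi e, integral_const_mul, integral_comp_mul_left_Ioi (fun r : ℝ => (1 - Real.cos r) * r ^ (-1 - p)) 0 h, mul_zero]
      unfold cc
      rw [smul_eq_mul, ← mul_assoc]
      congr 1
      rw [Real.rpow_add h, Real.rpow_one]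
      field_simp

lemma cc_scale_l (p : ℝ) (hp0 : 0 < p) (hp2 : p < 2) (x : ℝ) :
    ∫⁻ r in Ioi (0:ℝ), ENNReal.ofReal ((1 - Real.cos (r * x)) * r ^ (-1 - p)) = ENNReal.ofReal (|x| ^ p * cc p) := by
  have h := cc_scale p hp0 hp2 x
  rw [← h.2, ofReal_integral_eq_lintegral_ofReal h.1]
  filter_upwards [ae_restrict_mem measurableSet_Ioi] with r hr
  have := cos_pos (r * x)
  have := Real.rpow_nonneg (le_of_lt hr) (-1 - p)
  simp only [Pi.zero_apply]
  positivity

/-- moments from the characteristic function -/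
lemma moment_finite (α N p : ℝ) (hα1 : 1 < α) (hα2 : α < 2) (hN : 0 ≤ N) (hp0 : 0 < p) (hp : p < α)
    (ρ : Measure ℝ) [IsProbabilityMeasure ρ]
    (hcf : ∀ u : ℝ, ∫ x, Complex.exp (Complex.I * ((u * x : ℝ) : ℂ)) ∂ρ = Complex.exp (-((|u| ^ α * N : ℝ) : ℂ))) :
    Integrable (fun x => |x| ^ p) ρ := by
  have hp2 : p < 2 := by linarith
  have hcp := cc_pos p hp0 hp2
  suffices h : Integrable (fun x => |x| ^ p * cc p) ρ by
    have := h.mul_const (cc p)⁻¹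
    refine this.congr (Eventually.of_forall fun x => ?_)
    simp only
    field_simp
  refine ⟨by apply Measurable.aestronglyMeasurable; fun_prop, ?_⟩
  rw [hasFiniteIntegral_iff_ofReal (Eventually.of_forall fun x => by simp only [Pi.zero_apply]; positivity)]
  simp_rw [← cc_scale_l p hp0 hp2]
  rw [lintegral_lintegral_swap (by unfold Function.uncurry; fun_prop)]
  have hcos : ∀ r : ℝ, ∫ x, (1 - Real.cos (r * x)) ∂ρ = 1 - Real.exp (-(|r| ^ α * N)) := by
    intro r
    have h1 : Integrable (fun x : ℝ => Real.cos (r * x)) ρ := by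
      refine (integrable_const (1:ℝ)).mono' (by apply Measurable.aestronglyMeasurable; fun_prop)
        (Eventually.of_forall fun x => Real.abs_cos_le_one _)
    have h2 : Integrable (fun x : ℝ => Complex.exp (Complex.I * ((r * x : ℝ) : ℂ))) ρ := by
      refine (integrable_const (1:ℝ)).mono' (by apply Measurable.aestronglyMeasurable; fun_prop)
        (Eventually.of_forall fun x => by rw [Complex.norm_exp]; simp)
    rw [integral_sub (integrable_const _) h1]
    have h3 := congrArg Complex.re (hcf r)
    have h4 := integral_re h2
    simp only [RCLike.re_eq_complex_re] at h4
    rw [← h4] at h3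
    have h5 : ∀ x : ℝ, (Complex.exp (Complex.I * ((r * x : ℝ) : ℂ))).re = Real.cos (r * x) := by
      intro x; rw [mul_comm, Complex.exp_ofReal_mul_I_re]
    simp_rw [h5] at h3
    rw [h3, ← Complex.ofReal_neg, Complex.exp_ofReal_re]
    simp
  have hin : ∀ r ∈ Ioi (0:ℝ), ∫⁻ x, ENNReal.ofReal ((1 - Real.cos (r * x)) * r ^ (-1 - p)) ∂ρ =
      ENNReal.ofReal ((1 - Real.exp (-(|r| ^ α * N))) * r ^ (-1 - p)) := by
    intro r hr
    rw [← hcos, ← integral_mul_const, ofReal_integral_eq_lintegral_ofReal]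
    · apply Integrable.mul_const
      apply (integrable_const (1:ℝ)).sub
      exact (integrable_const (1:ℝ)).mono' (by apply Measurable.aestronglyMeasurable; fun_prop)
        (Eventually.of_forall fun x => Real.abs_cos_le_one _)
    · refine Eventually.of_forall fun x => ?_
      have := cos_pos (r * x)
      have := Real.rpow_nonneg (le_of_lt hr) (-1 - p)
      simp only [Pi.zero_apply]
      positivity
  rw [setLIntegral_congr_fun measurableSet_Ioi hin]
  refine (two_power _ N 1 (α - 1 - p) (-1 - p) 1 hN zero_le_one (by linarith) (by linarith) one_pos ?_ ?_).trans_lt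
      ENNReal.ofReal_lt_top
  · intro r hr
    have h1 := Real.add_one_le_exp (-(|r| ^ α * N))
    rw [abs_of_pos hr] at h1 ⊢
    calc _ ≤ (r ^ α * N) * r ^ (-1 - p) := by gcongr; linarith
      _ = N * (r ^ α * r ^ (-1 - p)) := by ring
      _ = _ := by rw [← Real.rpow_add hr]; congr 2; ring
  · intro r hr
    gcongr
    linarith [Real.exp_pos (-(|r| ^ α * N))]

noncomputable def kap (α : ℝ) : Measure ℝ :=
  (volume.restrict (Ioi (0:ℝ))).withDensity (fun r => ENNReal.ofReal (r ^ (-1 - α)))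

noncomputable def lev (α : ℝ) {S : Type*} [MeasurableSpace S] (μ : Measure S) (f g : S → ℝ) : Measure (ℝ × ℝ) :=
  ((ENNReal.ofReal (1 / cc α)) • (μ.prod (kap α))).map (fun p : S × ℝ => (p.2 * f p.1, p.2 * g p.1))

instance kap_sfinite (α : ℝ) : SFinite (kap α) := by unfold kap; infer_instance

instance lev_sfinite (α : ℝ) {S : Type*} [MeasurableSpace S] (μ : Measure S) [SigmaFinite μ] (f g : S → ℝ) :
    SFinite (lev α μ f g) := by unfold lev; infer_instance

lemma lev_lintegral (α : ℝ) {S : Type*} [MeasurableSpace S] (μ : Measure S) [SigmaFinite μ] (f g : S → ℝ)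
    (hf : Measurable f) (hg : Measurable g) (F : ℝ × ℝ → ℝ≥0∞) (hF : Measurable F) :
    ∫⁻ x, F x ∂(lev α μ f g) = ENNReal.ofReal (1 / cc α) *
      ∫⁻ s, (∫⁻ r in Ioi (0:ℝ), ENNReal.ofReal (r ^ (-1 - α)) * F (r * f s, r * g s)) ∂μ := by
  have hm : Measurable (fun p : S × ℝ => (p.2 * f p.1, p.2 * g p.1)) := by fun_prop
  unfold lev
  rw [lintegral_map hF hm, lintegral_smul_measure, smul_eq_mul,
    lintegral_prod (fun p : S × ℝ => F (p.2 * f p.1, p.2 * g p.1)) (hF.comp hm).aemeasurable]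
  congr 1
  refine lintegral_congr fun s => ?_
  unfold kap
  rw [lintegral_withDensity_eq_lintegral_mul _ (by fun_prop)]
  · rfl
  · exact hF.comp (by fun_prop)

lemma nrm_pow (α : ℝ) (hα : 0 < α) {S : Type*} [MeasurableSpace S] (μ : Measure S) (f : S → ℝ) :
    nrm α μ f ^ α = ∫ s, |f s| ^ α ∂μ := by
  unfold nrm
  have : 0 ≤ ∫ s, |f s| ^ α ∂μ := integral_nonneg fun s => by positivity
  rw [← Real.rpow_mul this, one_div, inv_mul_cancel₀ hα.ne', Real.rpow_one]

lemma lev_psR (α : ℝ) (hα1 : 1 < α) (hα2 : α < 2) {S : Type*} [MeasurableSpace S] (μ : Measure S) [SigmaFinite μ]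
    (f g : S → ℝ) (hf : Measurable f) (hg : Measurable g) (u v : ℝ) :
    psR (lev α μ f g) u v = ∫ s, |u * f s + v * g s| ^ α ∂μ := by
  have hc := cc_pos α (by linarith) hα2
  unfold psR
  rw [integral_eq_lintegral_of_nonneg_ae (Eventually.of_forall fun x => cos_pos _)
    (by apply Measurable.aestronglyMeasurable; fun_prop),
    integral_eq_lintegral_of_nonneg_ae (Eventually.of_forall fun x => by simp only [Pi.zero_apply]; positivity)
    (by apply Measurable.aestronglyMeasurable; fun_prop)]
  congr 1
  rw [lev_lintegral α μ f g hf hg _ (by fun_prop)]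
  rw [← lintegral_const_mul' _ _ ENNReal.ofReal_ne_top]
  refine lintegral_congr fun s => ?_
  have : ∫⁻ r in Ioi (0:ℝ), ENNReal.ofReal (r ^ (-1 - α)) *
      ENNReal.ofReal (1 - Real.cos (u * (r * f s) + v * (r * g s))) =
      ∫⁻ r in Ioi (0:ℝ), ENNReal.ofReal ((1 - Real.cos (r * (u * f s + v * g s))) * r ^ (-1 - α)) := by
    refine lintegral_congr fun r => ?_
    rw [ENNReal.ofReal_mul (cos_pos _), mul_comm]
    congr 4
    ring
  rw [this, cc_scale_l α (by linarith) hα2, ← ENNReal.ofReal_mul (by positivity)]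
  congr 1
  field_simp

lemma add_pow_le4 (α a b : ℝ) (hα0 : 0 < α) (hα2 : α < 2) (ha : 0 ≤ a) (hb : 0 ≤ b) :
    (a + b) ^ α ≤ 4 * (a ^ α + b ^ α) := by
  have h2 : (2:ℝ) ^ α ≤ 4 := by
    calc (2:ℝ) ^ α ≤ 2 ^ (2:ℝ) := Real.rpow_le_rpow_of_exponent_le (by norm_num) hα2.le
      _ = 4 := by norm_num
  have h3 : a ^ α ≤ a ^ α + b ^ α := by have := Real.rpow_nonneg hb α; linarith
  have h4 : b ^ α ≤ a ^ α + b ^ α := by have := Real.rpow_nonneg ha α; linarith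
  have key : ∀ m : ℝ, 0 ≤ m → a + b ≤ 2 * m → m ^ α ≤ a ^ α + b ^ α → (a + b) ^ α ≤ 4 * (a ^ α + b ^ α) := by
    intro m hm h1 h5
    calc (a + b) ^ α ≤ (2 * m) ^ α := Real.rpow_le_rpow (by positivity) h1 (by linarith)
      _ = 2 ^ α * m ^ α := Real.mul_rpow (by norm_num) hm
      _ ≤ 4 * (a ^ α + b ^ α) := mul_le_mul h2 h5 (by positivity) (by norm_num)
  rcases le_total a b with h | h
  · exact key b hb (by linarith) h4
  · exact key a ha (by linarith) h3

lemma lev_hh (α β : ℝ) (hα1 : 1 < α) (hα2 : α < 2) (hβ0 : 0 < β) (hβ : β < α / 2)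
    {S : Type*} [MeasurableSpace S] (μ : Measure S) [SigmaFinite μ]
    (f g : S → ℝ) (hf : Measurable f) (hg : Measurable g)
    (hfi : Integrable (fun s => |f s| ^ α) μ) (hgi : Integrable (fun s => |g s| ^ α) μ) :
    ∫⁻ x, ENNReal.ofReal (hh β x) ∂(lev α μ f g) ≤
      ENNReal.ofReal (4 * CJ α β / cc α * ((∫ s, |f s| ^ α ∂μ) + ∫ s, |g s| ^ α ∂μ)) := by
  have hc := cc_pos α (by linarith) hα2
  have hJ := CJ_nonneg α β hα2 hβ
  rw [lev_lintegral α μ f g hf hg _ (hh_meas β).ennreal_ofReal]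
  have key : ∀ s, (∫⁻ r in Ioi (0:ℝ), ENNReal.ofReal (r ^ (-1 - α)) * ENNReal.ofReal (hh β (r * f s, r * g s))) ≤
      ENNReal.ofReal (4 * CJ α β * (|f s| ^ α + |g s| ^ α)) := by
    intro s
    set N := |f s| + |g s| with hN
    have hN0 : 0 ≤ N := by positivity
    calc _ = ∫⁻ r in Ioi (0:ℝ), ENNReal.ofReal (min (r ^ 2 * N ^ 2) (r ^ (2 * β) * (N ^ 2) ^ β) * r ^ (-1 - α)) := by
          refine setLIntegral_congr_fun measurableSet_Ioi fun r hr => ?_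
          have hr' : 0 < r := hr
          rw [← ENNReal.ofReal_mul (by positivity), mul_comm]
          congr 2
          unfold hh nn
          simp only [abs_mul, abs_of_pos hr', ← mul_add]
          rw [← hN, mul_pow, Real.mul_rpow hr'.le hN0, ← Real.rpow_natCast N 2, ← Real.rpow_mul hN0]
          norm_num
      _ ≤ ENNReal.ofReal (CJ α β * (N ^ 2) ^ (α / 2)) := Jlem α β hα1 hα2 hβ0 hβ (N ^ 2) (by positivity)
      _ ≤ _ := by
          apply ENNReal.ofReal_le_ofReal
          have e : (N ^ 2) ^ (α / 2) = N ^ α := by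
            rw [← Real.rpow_natCast N 2, ← Real.rpow_mul hN0]; congr 1; push_cast; ring
          rw [e]
          have := mul_le_mul_of_nonneg_left (add_pow_le4 α _ _ (by linarith) hα2 (abs_nonneg (f s)) (abs_nonneg (g s))) hJ
          rw [← hN] at this
          linarith
  calc _ ≤ ENNReal.ofReal (1 / cc α) * ∫⁻ s, ENNReal.ofReal (4 * CJ α β * (|f s| ^ α + |g s| ^ α)) ∂μ := by
        gcongr with s; exact key s
    _ = ENNReal.ofReal (1 / cc α) * ENNReal.ofReal (∫ s, 4 * CJ α β * (|f s| ^ α + |g s| ^ α) ∂μ) := by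
        have hi : Integrable (fun s => 4 * CJ α β * (|f s| ^ α + |g s| ^ α)) μ := (hfi.add hgi).const_mul _
        rw [ofReal_integral_eq_lintegral_ofReal hi]
        exact Eventually.of_forall fun s => by simp only [Pi.zero_apply]; positivity
    _ = _ := by
        rw [← ENNReal.ofReal_mul (by positivity), integral_const_mul, integral_add hfi hgi]
        congr 1
        ring

lemma dep2_integrable (α : ℝ) {S : Type*} [MeasurableSpace S] (μ : Measure S)
    (f g : S → ℝ) (hf : Measurable f) (hg : Measurable g)
    (hfi : Integrable (fun s => |f s| ^ α) μ) (hgi : Integrable (fun s => |g s| ^ α) μ) :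
    Integrable (fun s => |f s * g s| ^ (α / 2)) μ := by
  refine (hfi.add hgi).mono' (by apply Measurable.aestronglyMeasurable; fun_prop) (Eventually.of_forall fun s => ?_)
  rw [Real.norm_of_nonneg (by positivity), abs_mul, Real.mul_rpow (abs_nonneg _) (abs_nonneg _)]
  have e : ∀ x : ℝ, |x| ^ α = (|x| ^ (α / 2)) ^ 2 := by
    intro x
    rw [← Real.rpow_natCast, ← Real.rpow_mul (abs_nonneg _)]
    congr 1; push_cast; ring
  simp only [Pi.add_apply]
  rw [e, e]
  have := Real.rpow_nonneg (abs_nonneg (f s)) (α / 2)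
  have := Real.rpow_nonneg (abs_nonneg (g s)) (α / 2)
  nlinarith [sq_nonneg (|f s| ^ (α / 2) - |g s| ^ (α / 2))]

lemma lev_mm (α β : ℝ) (hα1 : 1 < α) (hα2 : α < 2) (hβ0 : 0 < β) (hβ : β < α / 2)
    {S : Type*} [MeasurableSpace S] (μ : Measure S) [SigmaFinite μ]
    (f g : S → ℝ) (hf : Measurable f) (hg : Measurable g)
    (hfi : Integrable (fun s => |f s| ^ α) μ) (hgi : Integrable (fun s => |g s| ^ α) μ) :
    ∫⁻ x, ENNReal.ofReal (mm β x.1 * mm β x.2) ∂(lev α μ f g) ≤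
      ENNReal.ofReal (CJ α β / cc α * dep2 α μ f g) := by
  have hc := cc_pos α (by linarith) hα2
  have hJ := CJ_nonneg α β hα2 hβ
  have hmm := mm_meas β
  rw [lev_lintegral α μ f g hf hg _ (by fun_prop)]
  have key : ∀ s, (∫⁻ r in Ioi (0:ℝ), ENNReal.ofReal (r ^ (-1 - α)) * ENNReal.ofReal (mm β (r * f s) * mm β (r * g s))) ≤
      ENNReal.ofReal (CJ α β * |f s * g s| ^ (α / 2)) := by
    intro s
    refine le_trans ?_ (Jlem α β hα1 hα2 hβ0 hβ (|f s * g s|) (by positivity))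
    refine setLIntegral_mono' measurableSet_Ioi fun r hr => ?_
    have hr' : 0 < r := hr
    rw [← ENNReal.ofReal_mul (by positivity), mul_comm]
    apply ENNReal.ofReal_le_ofReal
    refine mul_le_mul_of_nonneg_right ?_ (by positivity)
    unfold mm
    rw [abs_mul, abs_mul, abs_mul, abs_of_pos hr']
    apply le_min
    · calc _ ≤ (r * |f s|) * (r * |g s|) := mul_le_mul (min_le_left _ _) (min_le_left _ _) (by positivity) (by positivity)
        _ = _ := by ring
    · calc _ ≤ (r * |f s|) ^ β * (r * |g s|) ^ β := mul_le_mul (min_le_right _ _) (min_le_right _ _) (by positivity) (by positivity)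
        _ = _ := by
          rw [Real.mul_rpow hr'.le (abs_nonneg _), Real.mul_rpow hr'.le (abs_nonneg _),
            Real.mul_rpow (abs_nonneg _) (abs_nonneg _), two_mul, Real.rpow_add hr']
          ring
  calc _ ≤ ENNReal.ofReal (1 / cc α) * ∫⁻ s, ENNReal.ofReal (CJ α β * |f s * g s| ^ (α / 2)) ∂μ := by
        gcongr with s; exact key s
    _ = ENNReal.ofReal (1 / cc α) * ENNReal.ofReal (∫ s, CJ α β * |f s * g s| ^ (α / 2) ∂μ) := by
        rw [ofReal_integral_eq_lintegral_ofReal ((dep2_integrable α μ f g hf hg hfi hgi).const_mul _)]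
        exact Eventually.of_forall fun s => by simp only [Pi.zero_apply]; positivity
    _ = _ := by
        rw [← ENNReal.ofReal_mul (by positivity), integral_const_mul]
        unfold dep2
        congr 1
        ring

lemma rpow_ge_sub_one (α : ℝ) (hα1 : 1 < α) (u : ℝ) : |u| - 1 ≤ |u| ^ α := by
  rcases le_total |u| 1 with h | h
  · have := Real.rpow_nonneg (abs_nonneg u) α
    linarith
  · have := Real.rpow_le_rpow_of_exponent_le h hα1.le
    rw [Real.rpow_one] at this
    linarith

lemma no_atom (α N : ℝ) (hα1 : 1 < α) (hN : 0 < N) (ρ : Measure ℝ) [IsProbabilityMeasure ρ]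
    (hcf : ∀ u : ℝ, ∫ x, Complex.exp (Complex.I * ((u * x : ℝ) : ℂ)) ∂ρ = Complex.exp (-((|u| ^ α * N : ℝ) : ℂ)))
    (x0 : ℝ) : ρ {x0} = 0 := by
  have hAi : Integrable (fun u : ℝ => Real.exp N * Real.exp (-N * |u|)) := (exp_abs_integrable N hN).const_mul _
  set A := ∫ u : ℝ, Real.exp N * Real.exp (-N * |u|) with hA
  have key : ∀ t : ℝ, 0 < t → t * ρ.real {x0} ≤ A := by
    intro t ht
    set b : ℝ := π / t ^ 2 with hb
    have hb0 : 0 < b := by positivity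
    have hintg : Integrable (Function.uncurry fun (x : ℝ) (u : ℝ) =>
        Complex.exp (Complex.I * ((x - x0 : ℝ) : ℂ) * u) * Complex.exp (-(b : ℂ) * u ^ 2)) (ρ.prod volume) := by
      refine ((integrable_const (1:ℝ) (μ := ρ)).mul_prod (integrable_exp_neg_mul_sq hb0)).mono' ?_
        (Eventually.of_forall fun p => ?_)
      · apply Measurable.aestronglyMeasurable
        unfold Function.uncurry
        fun_prop
      · simp only [Function.uncurry]
        rw [norm_mul, Complex.norm_exp, Complex.norm_exp]
        simp [← Complex.ofReal_pow]
    have hsw := integral_integral_swap hintg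
    have hL : (∫ x, (∫ u : ℝ, Complex.exp (Complex.I * ((x - x0 : ℝ) : ℂ) * u) * Complex.exp (-(b : ℂ) * u ^ 2)) ∂ρ) =
        ((∫ x, t * Real.exp (-(x - x0) ^ 2 / (4 * b)) ∂ρ : ℝ) : ℂ) := by
      rw [← integral_complex_ofReal]
      refine integral_congr_ae (Eventually.of_forall fun x => ?_)
      simp only
      rw [fourierIntegral_gaussian (by simpa using hb0)]
      have e : ((π : ℂ) / (b : ℂ)) ^ (1 / 2 : ℂ) = (t : ℂ) := by
        have e1 : (π : ℂ) / (b : ℂ) = ((t ^ 2 : ℝ) : ℂ) := by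
          rw [← Complex.ofReal_div]
          congr 1
          rw [hb]; field_simp
        rw [e1, show (1 / 2 : ℂ) = ((1 / 2 : ℝ) : ℂ) by push_cast; rfl, ← Complex.ofReal_cpow (by positivity)]
        congr 1
        rw [← Real.sqrt_eq_rpow, Real.sqrt_sq ht.le]
      rw [e]
      push_cast
      rfl
    rw [hL] at hsw
    have hgi : Integrable (fun x : ℝ => t * Real.exp (-(x - x0) ^ 2 / (4 * b))) ρ := by
      refine (integrable_const t).mono' (by apply Measurable.aestronglyMeasurable; fun_prop)
        (Eventually.of_forall fun x => ?_)
      rw [Real.norm_of_nonneg (by positivity)]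
      have : Real.exp (-(x - x0) ^ 2 / (4 * b)) ≤ 1 := by
        rw [Real.exp_le_one_iff]
        apply div_nonpos_of_nonpos_of_nonneg
        · nlinarith [sq_nonneg (x - x0)]
        · positivity
      nlinarith
    have h1 : t * ρ.real {x0} ≤ ∫ x, t * Real.exp (-(x - x0) ^ 2 / (4 * b)) ∂ρ := by
      have := setIntegral_le_integral (s := {x0}) hgi (Eventually.of_forall fun x => by simp only [Pi.zero_apply]; positivity)
      rw [integral_singleton] at this
      simp only [sub_self, smul_eq_mul] at this
      norm_num at this
      linarith
    refine h1.trans ((le_abs_self _).trans ?_)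
    rw [← Real.norm_eq_abs, ← Complex.norm_real, hsw]
    refine norm_integral_le_of_norm_le hAi (Eventually.of_forall fun u => ?_)
    have e2 : (∫ x, Complex.exp (Complex.I * ((x - x0 : ℝ) : ℂ) * u) * Complex.exp (-(b : ℂ) * u ^ 2) ∂ρ) =
        Complex.exp (-((|u| ^ α * N : ℝ) : ℂ)) * (Complex.exp (-(Complex.I * x0 * u)) * Complex.exp (-(b : ℂ) * u ^ 2)) := by
      rw [← hcf u, ← integral_mul_const]
      refine integral_congr_ae (Eventually.of_forall fun x => ?_)
      simp only
      rw [← Complex.exp_add, ← Complex.exp_add, ← Complex.exp_add]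
      congr 1
      push_cast
      ring
    rw [e2, norm_mul, norm_mul, Complex.norm_exp, Complex.norm_exp, Complex.norm_exp]
    have e3 : Real.exp (-(b : ℂ) * u ^ 2).re ≤ 1 := by
      rw [Real.exp_le_one_iff]
      simp only [← Complex.ofReal_pow, ← Complex.ofReal_neg, ← Complex.ofReal_mul, Complex.ofReal_re]
      nlinarith [sq_nonneg u, mul_nonneg hb0.le (sq_nonneg u)]
    have e4 : Real.exp (-(Complex.I * x0 * u)).re = 1 := by
      simp
    rw [e4, one_mul]
    calc _ ≤ Real.exp (-((|u| ^ α * N : ℝ) : ℂ)).re * 1 := by gcongr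
      _ ≤ _ := by
        rw [mul_one, ← Complex.ofReal_neg, Complex.ofReal_re, ← Real.exp_add]
        apply Real.exp_le_exp.mpr
        nlinarith [rpow_ge_sub_one α hα1 u]
  by_contra hne
  have hp : 0 < ρ.real {x0} := by
    rw [measureReal_def]
    exact ENNReal.toReal_pos hne (measure_ne_top _ _)
  have hA0 : 0 ≤ A := integral_nonneg fun u => by positivity
  have := key ((A + 1) / ρ.real {x0}) (by positivity)
  rw [div_mul_cancel₀ _ hp.ne'] at this
  linarith

lemma K_bound (K : ℝ → ℝ) (β β' x₀ c : ℝ) (hβ0 : 0 < β) (hββ : β ≤ β')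
    (hK1 : ∀ x : ℝ, x₀ < |x| → |K x| ≤ c * |x| ^ β)
    (hK3 : ∃ T : Finset ℝ, (∃ M : ℝ, ∀ x : ℝ, |x| ≤ x₀ → x ∉ T → |K x| ≤ M) ∧
      ∀ x ∈ T, ∃ δ > (0:ℝ), IntegrableOn K (Set.Ioo (x - δ) (x + δ)) volume) :
    ∃ (C : ℝ) (T : Finset ℝ), 0 ≤ C ∧ ∀ x, x ∉ T → |K x| ≤ C * (1 + |x|) ^ β' := by
  obtain ⟨T, ⟨M, hM⟩, -⟩ := hK3
  refine ⟨|c| + |M|, T, by positivity, fun x hx => ?_⟩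
  have h1 : 1 ≤ (1 + |x|) ^ β' := Real.one_le_rpow (by linarith [abs_nonneg x]) (by linarith)
  rcases le_or_gt |x| x₀ with h | h
  · calc |K x| ≤ M := hM x h hx
      _ ≤ |M| * 1 := by rw [mul_one]; exact le_abs_self M
      _ ≤ (|c| + |M|) * (1 + |x|) ^ β' := mul_le_mul (by linarith [abs_nonneg c]) h1 (by norm_num) (by positivity)
  · calc |K x| ≤ c * |x| ^ β := hK1 x h
      _ ≤ |c| * |x| ^ β := by gcongr; exact le_abs_self c
      _ ≤ (|c| + |M|) * (1 + |x|) ^ β' := by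
        refine mul_le_mul (by linarith [abs_nonneg M]) ?_ (by positivity) (by positivity)
        calc |x| ^ β ≤ (1 + |x|) ^ β := Real.rpow_le_rpow (abs_nonneg _) (by linarith) hβ0.le
          _ ≤ _ := Real.rpow_le_rpow_of_exponent_le (by linarith [abs_nonneg x]) hββ

lemma sq_int (α β N : ℝ) (hα1 : 1 < α) (hα2 : α < 2) (hN : 0 < N) (hβ0 : 0 < β) (hβ : β < α / 2)
    (ρ : Measure ℝ) [IsProbabilityMeasure ρ]
    (hcf : ∀ u : ℝ, ∫ x, Complex.exp (Complex.I * ((u * x : ℝ) : ℂ)) ∂ρ = Complex.exp (-((|u| ^ α * N : ℝ) : ℂ)))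
    (K : ℝ → ℝ) (hK : Measurable K) (C : ℝ) (hC : 0 ≤ C) (T : Finset ℝ)
    (hb : ∀ x, x ∉ T → |K x| ≤ C * (1 + |x|) ^ β) : Integrable (fun x => K x ^ 2) ρ := by
  have hm := moment_finite α N (2 * β) hα1 hα2 hN.le (by linarith) (by linarith) ρ hcf
  have hT : ∀ᵐ x ∂ρ, x ∉ T := by
    have : NullSingletonClass ρ := ⟨fun x => no_atom α N hα1 hN ρ hcf x⟩
    have : ρ (T : Set ℝ) = 0 := T.finite_toSet.measure_zero ρ
    exact measure_eq_zero_iff_ae_notMem.mp this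
  refine (((integrable_const (1:ℝ)).add hm).const_mul (C ^ 2 * 4)).mono'
    (by apply Measurable.aestronglyMeasurable; fun_prop) ?_
  filter_upwards [hT] with x hx
  have h1 : (0:ℝ) ≤ 1 + |x| := by positivity
  have h := add_pow_le4 (2 * β) 1 |x| (by linarith) (by linarith) (by norm_num) (abs_nonneg x)
  rw [Real.one_rpow] at h
  rw [Real.norm_of_nonneg (by positivity), ← sq_abs]
  calc |K x| ^ 2 ≤ (C * (1 + |x|) ^ β) ^ 2 := pow_le_pow_left₀ (abs_nonneg _) (hb x hx) 2
    _ = C ^ 2 * (1 + |x|) ^ (2 * β) := by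
      rw [mul_pow, ← Real.rpow_natCast ((1 + |x|) ^ β) 2, ← Real.rpow_mul h1]
      congr 2; push_cast; ring
    _ ≤ C ^ 2 * (4 * (1 + |x| ^ (2 * β))) := by gcongr
    _ = _ := by simp only [Pi.add_apply]; ring

lemma core (α ε₂ a b β : ℝ) (hα1 : 1 < α) (hα2 : α < 2) (hε : 0 < ε₂) (ha : 0 < a) (hb : 0 < b)
    (hβ0 : 0 < β) (hβ : β < α / 2)
    {S : Type*} [MeasurableSpace S] (μ : Measure S) [SigmaFinite μ]
    (f g : S → ℝ) (hf : Measurable f) (hg : Measurable g)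
    (hfi : Integrable (fun s => |f s| ^ α) μ) (hgi : Integrable (fun s => |g s| ^ α) μ)
    (hfa : ∫ s, |f s| ^ α ∂μ = a) (hgb : ∫ s, |g s| ^ α ∂μ = b)
    (hA2 : ∀ u v : ℝ, ε₂ * (|u| ^ α * a + |v| ^ α * b) ≤ ∫ s, |u * f s + v * g s| ^ α ∂μ)
    (ρ1 : Measure (ℝ × ℝ)) [IsProbabilityMeasure ρ1] (ρξ ρη : Measure ℝ) [IsProbabilityMeasure ρξ]
    [IsProbabilityMeasure ρη]
    (h1 : ∀ u v : ℝ, ∫ x, Complex.exp (Complex.I * ((u * x.1 + v * x.2 : ℝ) : ℂ)) ∂ρ1 =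
      Complex.exp (-((∫ s, |u * f s + v * g s| ^ α ∂μ : ℝ) : ℂ)))
    (hξ : ∀ u : ℝ, ∫ x, Complex.exp (Complex.I * ((u * x : ℝ) : ℂ)) ∂ρξ = Complex.exp (-((|u| ^ α * a : ℝ) : ℂ)))
    (hη : ∀ u : ℝ, ∫ x, Complex.exp (Complex.I * ((u * x : ℝ) : ℂ)) ∂ρη = Complex.exp (-((|u| ^ α * b : ℝ) : ℂ)))
    (K L : ℝ → ℝ) (hK : Measurable K) (hL : Measurable L) (CK CL : ℝ) (hCK : 0 ≤ CK) (hCL : 0 ≤ CL)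
    (TK TL : Finset ℝ) (hKb : ∀ x, x ∉ TK → |K x| ≤ CK * (1 + |x|) ^ β)
    (hLb : ∀ x, x ∉ TL → |L x| ≤ CL * (1 + |x|) ^ β)
    (hKL : Integrable (fun x : ℝ × ℝ => K x.1 * L x.2) ρ1) (hKi : Integrable K ρξ) (hLi : Integrable L ρη) :
    |(∫ x, K x.1 * L x.2 ∂ρ1) - (∫ x, K x ∂ρξ) * ∫ x, L x ∂ρη| ≤ (CK * CL) *
      (9 * CB (ε₂ * min a b) (2 * (4 * CJ α β / cc α * (a + b))) (2 * (2 * (ε₂ * min a b))) *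
        (CJ α β / cc α * dep2 α μ f g)) := by
  have hcc := cc_pos α (by linarith) hα2
  have hJ := CJ_nonneg α β hα2 hβ
  set c := ε₂ * min a b with hc
  have hc0 : 0 < c := by positivity
  set C0 := 4 * CJ α β / cc α * (a + b) with hC0
  have hd2 : 0 ≤ dep2 α μ f g := integral_nonneg fun s => by positivity
  have hps := lev_psR α hα1 hα2 μ f g hf hg
  set ν := lev α μ f g with hν
  have hB : ∀ u v : ℝ, Bs ν u v = |u| ^ α * a + |v| ^ α * b := by
    intro u v
    unfold Bs
    rw [hps, hps, ← hfa, ← hgb, ← integral_const_mul, ← integral_const_mul]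
    congr 1
    · refine integral_congr_ae (Eventually.of_forall fun s => ?_)
      simp only [zero_mul, add_zero, abs_mul]
      exact Real.mul_rpow (abs_nonneg _) (abs_nonneg _)
    · refine integral_congr_ae (Eventually.of_forall fun s => ?_)
      simp only [zero_mul, zero_add, abs_mul]
      exact Real.mul_rpow (abs_nonneg _) (abs_nonneg _)
  have hlow0 : ∀ u v : ℝ, min a b * (|u| + |v|) - 2 * min a b ≤ |u| ^ α * a + |v| ^ α * b := by
    intro u v
    have i1 := rpow_ge_sub_one α hα1 u
    have i2 := rpow_ge_sub_one α hα1 v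
    have p1 := Real.rpow_nonneg (abs_nonneg u) α
    have p2 := Real.rpow_nonneg (abs_nonneg v) α
    have m1 := min_le_left a b
    have m2 := min_le_right a b
    have m0 : 0 < min a b := by positivity
    have j1 : min a b * (|u| - 1) ≤ min a b * |u| ^ α := mul_le_mul_of_nonneg_left i1 m0.le
    have j2 : min a b * (|v| - 1) ≤ min a b * |v| ^ α := mul_le_mul_of_nonneg_left i2 m0.le
    have k1 := mul_le_mul_of_nonneg_right m1 p1
    have k2 := mul_le_mul_of_nonneg_right m2 p2
    linarith
  have hlow : ∀ u v : ℝ, c * (|u| + |v|) - 2 * c ≤ psR ν u v := by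
    intro u v
    rw [hps]
    refine le_trans ?_ (hA2 u v)
    have := mul_le_mul_of_nonneg_left (hlow0 u v) hε.le
    rw [hc]
    linarith
  have hhh := lev_hh α β hα1 hα2 hβ0 hβ μ f g hf hg hfi hgi
  rw [hfa, hgb, ← hν, ← hC0] at hhh
  have hW := WN_diff β hβ0 (by linarith) ν c C0 (2 * c) hc0 (by positivity) (by positivity) hhh hlow
  have hmmb := lev_mm α β hα1 hα2 hβ0 hβ μ f g hf hg hfi hgi
  have hW' := hW.trans (mul_le_mul_right hmmb _)
  have hCB := CB_nonneg c (2 * C0) (2 * (2 * c))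
  rw [← ENNReal.ofReal_mul (by positivity)] at hW'
  have hAm := psR_meas ν
  have hBm : Measurable (fun z : ℝ × ℝ => Bs ν z.1 z.2) := by
    simp_rw [hB]; fun_prop
  have hone : ∀ z : ℝ × ℝ, ‖(1:ℂ)‖ ≤ 1 * ((1 + |z.1|) * (1 + |z.2|)) := by
    intro z
    rw [norm_one]
    nlinarith [abs_nonneg z.1, abs_nonneg z.2, mul_nonneg (abs_nonneg z.1) (abs_nonneg z.2)]
  have hi1 := q_integrable (fun z => psR ν z.1 z.2) hAm c (2 * c) hc0 (fun z => hlow z.1 z.2) (fun _ => 1)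
    measurable_const 1 zero_le_one hone
  have hi2 := q_integrable (fun z => Bs ν z.1 z.2) hBm (min a b) (2 * min a b) (by positivity)
    (fun z => by rw [hB]; exact hlow0 z.1 z.2) (fun _ => 1) measurable_const 1 zero_le_one hone
  simp only [one_mul] at hi1 hi2
  have hcfs : ∀ z : ℝ × ℝ, (∫ x, Complex.exp (Complex.I * ((z.1 : ℂ) * x.1 + z.2 * x.2)) ∂ρ1) -
      (∫ x, Complex.exp (Complex.I * ((z.1 : ℂ) * x.1 + z.2 * x.2)) ∂(ρξ.prod ρη)) =
      Complex.exp (-(psR ν z.1 z.2 : ℂ)) - Complex.exp (-(Bs ν z.1 z.2 : ℂ)) := by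
    intro z
    congr 1
    · rw [hps, ← h1]
      refine integral_congr_ae (Eventually.of_forall fun x => ?_)
      simp only
      push_cast
      rfl
    · have e : ∀ x : ℝ × ℝ, Complex.exp (Complex.I * ((z.1 : ℂ) * x.1 + z.2 * x.2)) =
          Complex.exp (Complex.I * ((z.1 * x.1 : ℝ) : ℂ)) * Complex.exp (Complex.I * ((z.2 * x.2 : ℝ) : ℂ)) := by
        intro x
        rw [← Complex.exp_add]
        congr 1
        push_cast
        ring
      simp_rw [e]
      rw [integral_prod_mul (fun x : ℝ => Complex.exp (Complex.I * ((z.1 * x : ℝ) : ℂ)))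
        (fun x : ℝ => Complex.exp (Complex.I * ((z.2 * x : ℝ) : ℂ))), hξ, hη, ← Complex.exp_add, hB]
      congr 1
      push_cast
      ring
  have hae : ∀ᵐ x : ℝ × ℝ, |K x.1 * L x.2| ≤ (CK * CL) * wt β x := by
    have hnull : ∀ T : Finset ℝ, ∀ᵐ x : ℝ, x ∉ T := fun T =>
      measure_eq_zero_iff_ae_notMem.mp (T.finite_toSet.measure_zero volume)
    have q1 : ∀ᵐ x : ℝ × ℝ, x.1 ∉ TK := Measure.quasiMeasurePreserving_fst.ae (hnull TK)
    have q2 : ∀ᵐ x : ℝ × ℝ, x.2 ∉ TL := Measure.quasiMeasurePreserving_snd.ae (hnull TL)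
    filter_upwards [q1, q2] with x hx1 hx2
    rw [abs_mul]
    unfold wt
    calc _ ≤ (CK * (1 + |x.1|) ^ β) * (CL * (1 + |x.2|) ^ β) :=
          mul_le_mul (hKb _ hx1) (hLb _ hx2) (abs_nonneg _) (by positivity)
      _ = _ := by ring
  have hfin := fourier_compare β hβ0.le ρ1 (ρξ.prod ρη) _ (hi1.sub hi2) _ (by positivity) hW' hcfs
    (fun x : ℝ × ℝ => K x.1 * L x.2) (by fun_prop) hKL (hKi.mul_prod hLi) (CK * CL) (by positivity) hae
  rw [integral_prod_mul] at hfin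
  exact hfin

/-- Paper's Theorem 2.4. -/
theorem stmt5 (α ε₁ ε₂ nf ng : ℝ) (hα1 : 1 < α) (hα2 : α < 2)
    (hε₁ : 0 < ε₁) (hε₂ : 0 < ε₂) (hnf : 0 < nf) (hng : 0 < ng)
    (K L : ℝ → ℝ) (hKm : Measurable K) (hLm : Measurable L)
    (βK x₀K cK : ℝ) (hβK0 : 0 < βK) (hβK : βK < α / 2) (hx₀K : 0 < x₀K)
    (hK1 : ∀ x : ℝ, x₀K < |x| → |K x| ≤ cK * |x| ^ βK)
    (hK2a : AntitoneOn (fun x => K x / x) (Set.Ioi x₀K))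
    (hK2b : MonotoneOn (fun x => K x / x) (Set.Iio (-x₀K)))
    (hK3 : ∃ T : Finset ℝ, (∃ M : ℝ, ∀ x : ℝ, |x| ≤ x₀K → x ∉ T → |K x| ≤ M) ∧
      ∀ x ∈ T, ∃ δ > (0:ℝ), IntegrableOn K (Set.Ioo (x - δ) (x + δ)) volume)
    (βL x₀L cL : ℝ) (hβL0 : 0 < βL) (hβL : βL < α / 2) (hx₀L : 0 < x₀L)
    (hL1 : ∀ x : ℝ, x₀L < |x| → |L x| ≤ cL * |x| ^ βL)
    (hL2a : AntitoneOn (fun x => L x / x) (Set.Ioi x₀L))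
    (hL2b : MonotoneOn (fun x => L x / x) (Set.Iio (-x₀L)))
    (hL3 : ∃ T : Finset ℝ, (∃ M : ℝ, ∀ x : ℝ, |x| ≤ x₀L → x ∉ T → |L x| ≤ M) ∧
      ∀ x ∈ T, ∃ δ > (0:ℝ), IntegrableOn L (Set.Ioo (x - δ) (x + δ)) volume) :
    ∃ C > (0:ℝ), ∀ (S : Type) [MeasurableSpace S] (μ : Measure S) [SigmaFinite μ]
      (f g : S → ℝ), MemLalpha α μ f → MemLalpha α μ g →
      nrm α μ f = nf → nrm α μ g = ng → A1 α ε₁ μ f g → A2 α ε₂ μ f g →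
      ∀ (Ω : Type) [MeasurableSpace Ω] (P : Measure Ω) [IsProbabilityMeasure P]
        (ξ η : Ω → ℝ), Measurable ξ → Measurable η → JointSAS α μ f g P ξ η →
          Integrable (fun ω => (K (ξ ω)) ^ 2) P ∧
          Integrable (fun ω => (L (η ω)) ^ 2) P ∧
          |(∫ ω, K (ξ ω) * L (η ω) ∂P) - (∫ ω, K (ξ ω) ∂P) * (∫ ω, L (η ω) ∂P)|
            ≤ C * (dep1 α μ f g + dep2 α μ f g) := by
  have hα0 : 0 < α := by linarith
  have hβ0 : 0 < max βK βL := lt_max_of_lt_left hβK0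
  have hβ : max βK βL < α / 2 := max_lt hβK hβL
  obtain ⟨CK, TK, hCK, hKb⟩ := K_bound K βK (max βK βL) x₀K cK hβK0 (le_max_left _ _) hK1 hK3
  obtain ⟨CL, TL, hCL, hLb⟩ := K_bound L βL (max βK βL) x₀L cL hβL0 (le_max_right _ _) hL1 hL3
  generalize max βK βL = β at *
  have ha : 0 < nf ^ α := by positivity
  have hb : 0 < ng ^ α := by positivity
  generalize haa : nf ^ α = a at *
  generalize hbb : ng ^ α = b at *
  have hcc := cc_pos α (by linarith) hα2
  have hJ := CJ_nonneg α β hα2 hβ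
  have hCB := CB_nonneg (ε₂ * min a b) (2 * (4 * CJ α β / cc α * (a + b))) (2 * (2 * (ε₂ * min a b)))
  generalize hB : CB (ε₂ * min a b) (2 * (4 * CJ α β / cc α * (a + b))) (2 * (2 * (ε₂ * min a b))) = B at *
  have hC00 : 0 ≤ (CK * CL) * (9 * B * (CJ α β / cc α)) := by positivity
  refine ⟨(CK * CL) * (9 * B * (CJ α β / cc α)) + 1, by positivity, ?_⟩
  intro S _ μ _ f g hf hg hnf' hng' _ hA2 Ω _ P _ ξ η hξ hη hJS
  obtain ⟨f', hf'm, hff'⟩ := hf.1.aemeasurable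
  obtain ⟨g', hg'm, hgg'⟩ := hg.1.aemeasurable
  have hfi' : Integrable (fun s => |f' s| ^ α) μ := hf.2.congr (by filter_upwards [hff'] with s hs; rw [hs])
  have hgi' : Integrable (fun s => |g' s| ^ α) μ := hg.2.congr (by filter_upwards [hgg'] with s hs; rw [hs])
  have huv : ∀ u v : ℝ, nrm α μ (fun s => u * f s + v * g s) ^ α = ∫ s, |u * f' s + v * g' s| ^ α ∂μ := by
    intro u v
    rw [nrm_pow α hα0]
    refine integral_congr_ae ?_
    filter_upwards [hff', hgg'] with s hs1 hs2
    rw [hs1, hs2]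
  have hfa : ∫ s, |f' s| ^ α ∂μ = a := by
    rw [← haa, ← hnf', nrm_pow α hα0]
    refine integral_congr_ae ?_
    filter_upwards [hff'] with s hs1
    rw [hs1]
  have hgb : ∫ s, |g' s| ^ α ∂μ = b := by
    rw [← hbb, ← hng', nrm_pow α hα0]
    refine integral_congr_ae ?_
    filter_upwards [hgg'] with s hs1
    rw [hs1]
  have hd2 : dep2 α μ f g = dep2 α μ f' g' := by
    unfold dep2
    refine integral_congr_ae ?_
    filter_upwards [hff', hgg'] with s hs1 hs2
    rw [hs1, hs2]
  have hA2' : ∀ u v : ℝ, ε₂ * (|u| ^ α * a + |v| ^ α * b) ≤ ∫ s, |u * f' s + v * g' s| ^ α ∂μ := by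
    intro u v
    have := hA2 u v
    rw [huv, hnf', hng', haa, hbb] at this
    exact this
  have hu0 : ∀ u : ℝ, ∫ s, |u * f' s + 0 * g' s| ^ α ∂μ = |u| ^ α * a := by
    intro u
    rw [← hfa, ← integral_const_mul]
    refine integral_congr_ae (Eventually.of_forall fun s => ?_)
    simp only [zero_mul, add_zero, abs_mul]
    exact Real.mul_rpow (abs_nonneg _) (abs_nonneg _)
  have hv0 : ∀ v : ℝ, ∫ s, |0 * f' s + v * g' s| ^ α ∂μ = |v| ^ α * b := by
    intro v
    rw [← hgb, ← integral_const_mul]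
    refine integral_congr_ae (Eventually.of_forall fun s => ?_)
    simp only [zero_mul, zero_add, abs_mul]
    exact Real.mul_rpow (abs_nonneg _) (abs_nonneg _)
  have hm : Measurable (fun ω => (ξ ω, η ω)) := hξ.prodMk hη
  haveI i1 : IsProbabilityMeasure (P.map (fun ω => (ξ ω, η ω))) := Measure.isProbabilityMeasure_map hm.aemeasurable
  haveI i2 : IsProbabilityMeasure (P.map ξ) := Measure.isProbabilityMeasure_map hξ.aemeasurable
  haveI i3 : IsProbabilityMeasure (P.map η) := Measure.isProbabilityMeasure_map hη.aemeasurable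
  have c1 : ∀ u v : ℝ, ∫ x, Complex.exp (Complex.I * ((u * x.1 + v * x.2 : ℝ) : ℂ)) ∂(P.map (fun ω => (ξ ω, η ω))) =
      Complex.exp (-((∫ s, |u * f' s + v * g' s| ^ α ∂μ : ℝ) : ℂ)) := by
    intro u v
    rw [integral_map hm.aemeasurable (by apply Measurable.aestronglyMeasurable; fun_prop), ← huv]
    exact hJS u v
  have c2 : ∀ u : ℝ, ∫ x, Complex.exp (Complex.I * ((u * x : ℝ) : ℂ)) ∂(P.map ξ) =
      Complex.exp (-((|u| ^ α * a : ℝ) : ℂ)) := by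
    intro u
    rw [integral_map hξ.aemeasurable (by apply Measurable.aestronglyMeasurable; fun_prop), ← hu0, ← huv, ← hJS u 0]
    simp
  have c3 : ∀ u : ℝ, ∫ x, Complex.exp (Complex.I * ((u * x : ℝ) : ℂ)) ∂(P.map η) =
      Complex.exp (-((|u| ^ α * b : ℝ) : ℂ)) := by
    intro u
    rw [integral_map hη.aemeasurable (by apply Measurable.aestronglyMeasurable; fun_prop), ← hv0, ← huv, ← hJS 0 u]
    simp
  have sK := sq_int α β a hα1 hα2 ha hβ0 hβ (P.map ξ) c2 K hKm CK hCK TK hKb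
  have sL := sq_int α β b hα1 hα2 hb hβ0 hβ (P.map η) c3 L hLm CL hCL TL hLb
  have sK' : Integrable (fun ω => (K (ξ ω)) ^ 2) P := sK.comp_measurable hξ
  have sL' : Integrable (fun ω => (L (η ω)) ^ 2) P := sL.comp_measurable hη
  have lK : Integrable K (P.map ξ) := ((memLp_two_iff_integrable_sq hKm.aestronglyMeasurable).mpr sK).integrable (by norm_num)
  have lL : Integrable L (P.map η) := ((memLp_two_iff_integrable_sq hLm.aestronglyMeasurable).mpr sL).integrable (by norm_num)
  have hKL' : Integrable (fun ω => K (ξ ω) * L (η ω)) P :=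
    ((memLp_two_iff_integrable_sq (hKm.comp hξ).aestronglyMeasurable).mpr sK').integrable_mul
      ((memLp_two_iff_integrable_sq (hLm.comp hη).aestronglyMeasurable).mpr sL')
  have hHm : Measurable (fun x : ℝ × ℝ => K x.1 * L x.2) := by fun_prop
  have hKL : Integrable (fun x : ℝ × ℝ => K x.1 * L x.2) (P.map (fun ω => (ξ ω, η ω))) :=
    (integrable_map_measure hHm.aestronglyMeasurable hm.aemeasurable).mpr hKL'
  refine ⟨sK', sL', ?_⟩
  have hfin := core α ε₂ a b β hα1 hα2 hε₂ ha hb hβ0 hβ μ f' g' hf'm hg'm hfi' hgi' hfa hgb hA2'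
    (P.map (fun ω => (ξ ω, η ω))) (P.map ξ) (P.map η) c1 c2 c3 K L hKm hLm CK CL hCK hCL TK TL hKb hLb hKL lK lL
  rw [integral_map hm.aemeasurable hHm.aestronglyMeasurable, integral_map hξ.aemeasurable hKm.aestronglyMeasurable,
    integral_map hη.aemeasurable hLm.aestronglyMeasurable, ← hd2, hB] at hfin
  refine hfin.trans ?_
  have p2 : 0 ≤ dep2 α μ f g := integral_nonneg fun s => by positivity
  have p1 : 0 ≤ dep1 α μ f g := add_nonneg (integral_nonneg fun s => by positivity) (integral_nonneg fun s => by positivity)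
  have := mul_nonneg hC00 p1
  nlinarith
end

section
/- Let α ∈ (1,2) and f, g ∈ L^α(S, μ). Then for all u, v ∈ ℝ the partial derivative ∂U/∂u(u,v) exists and equals D₁(u,v). Moreover, at every (u,v) for which ∫_S |uf+vg|^{α−2}|f||g| dμ < ∞ (with the convention that the integrand is 0 at points where f(s) = 0 or g(s) = 0), the mixed partial derivative ∂²U/(∂u∂v)(u,v) exists and equals D₂(u,v). (Paper's Lemma 3.2.) -/
open MeasureTheory Real Set Filter
open scoped ENNReal Topology

lemma spow_eq' (a p : ℝ) : spow a p = |a| ^ (p - 1) * a := by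
  unfold spow
  rcases lt_trichotomy a 0 with h | h | h
  · rw [Real.sign_of_neg h, abs_of_neg h, Real.rpow_sub_one (by linarith)]
    have : a ≠ 0 := h.ne
    field_simp
  · subst h; simp
  · rw [Real.sign_of_pos h, abs_of_pos h, Real.rpow_sub_one (by linarith)]
    field_simp

lemma spow_neg' (a p : ℝ) : spow (-a) p = - spow a p := by
  simp [spow_eq']

lemma spow_of_pos' {a : ℝ} (p : ℝ) (h : 0 < a) : spow a p = a ^ p := by
  simp [spow, Real.sign_of_pos h, abs_of_pos h]

lemma spow_abs_le (a p : ℝ) : |spow a p| ≤ |a| ^ p := by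
  unfold spow
  rw [abs_mul, abs_of_nonneg (Real.rpow_nonneg (abs_nonneg a) p)]
  have h0 : 0 ≤ |a| ^ p := Real.rpow_nonneg (abs_nonneg a) p
  rcases Real.sign_apply_eq a with h | h | h <;> simp [h, h0]

lemma spow_measurable (p : ℝ) : Measurable (fun a : ℝ => spow a p) := by
  simp_rw [spow_eq']
  fun_prop

lemma spow_hasDerivAt_pos {a : ℝ} (p : ℝ) (ha : 0 < a) :
    HasDerivAt (fun x => spow x p) (p * |a| ^ (p - 1)) a := by
  rw [abs_of_pos ha]
  refine (Real.hasDerivAt_rpow_const (p := p) (Or.inl ha.ne')).congr_of_eventuallyEq ?_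
  filter_upwards [lt_mem_nhds ha] with x hx
  exact spow_of_pos' p hx

lemma spow_hasDerivAt {a : ℝ} (p : ℝ) (ha : a ≠ 0) :
    HasDerivAt (fun x => spow x p) (p * |a| ^ (p - 1)) a := by
  rcases lt_or_gt_of_ne ha with h | h
  · have h1 : HasDerivAt (fun x => spow x p) (p * |(-a)| ^ (p - 1)) (-a) :=
      spow_hasDerivAt_pos p (by linarith)
    have h2 := (h1.comp a (hasDerivAt_neg a)).neg
    have e : (fun x => spow x p) = -(fun x => spow x p) ∘ Neg.neg := by
      funext x; simp [spow_neg']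
    rw [e]
    exact h2.congr_deriv (by simp)
  · exact spow_hasDerivAt_pos p h

lemma spow_lip_pos {a p : ℝ} (hp0 : 0 < p) (hp1 : p < 1) (ha : 0 < a) (x : ℝ) :
    |spow x p - spow a p| ≤ 2 * a ^ (p - 1) * |x - a| := by
  have key : ∀ y : ℝ, 0 < y → y ^ p = y * y ^ (p - 1) := by
    intro y hy
    rw [Real.rpow_sub_one hy.ne']; field_simp
  have mono : ∀ y z : ℝ, 0 < y → y ≤ z → z ^ (p - 1) ≤ y ^ (p - 1) := by
    intro y z hy hyz
    exact Real.rpow_le_rpow_of_nonpos hy hyz (by linarith)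
  have hA : 0 < a ^ (p - 1) := Real.rpow_pos_of_pos ha _
  rw [spow_of_pos' p ha, key a ha]
  rcases lt_trichotomy x 0 with h | h | h
  · obtain ⟨y, rfl⟩ : ∃ y, x = -y := ⟨-x, by ring⟩
    have hy : 0 < y := by linarith
    rw [spow_neg', spow_of_pos' p hy]
    have hyp : 0 < y ^ p := Real.rpow_pos_of_pos hy _
    have e1 : |-y ^ p - a * a ^ (p - 1)| = y ^ p + a * a ^ (p - 1) := by
      rw [abs_of_neg (by nlinarith [mul_pos ha hA])]; ring
    have e2 : |-y - a| = y + a := by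
      rw [abs_of_neg (by linarith)]; ring
    rw [e1, e2]
    rcases le_total a y with hay | hay
    · have := mono a y ha hay
      have h2 := mul_le_mul_of_nonneg_left this hy.le
      rw [← key y hy] at h2
      nlinarith [mul_pos ha hA, mul_pos hy hA]
    · have := Real.rpow_le_rpow hy.le hay hp0.le
      rw [key a ha] at this
      nlinarith [mul_pos ha hA, mul_pos hy hA]
  · subst h
    have : spow 0 p = 0 := by simp [spow]
    rw [this, zero_sub, zero_sub, abs_neg, abs_neg, abs_of_pos (mul_pos ha hA), abs_of_pos ha]
    nlinarith [mul_pos ha hA]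
  · rw [spow_of_pos' p h]
    rcases le_total a x with hax | hax
    · have h1 := mono a x ha hax
      have h3 := Real.rpow_le_rpow ha.le hax hp0.le
      rw [key a ha] at h3
      rw [abs_of_nonneg (by linarith), abs_of_nonneg (by linarith : (0:ℝ) ≤ x - a)]
      rw [key x h]
      nlinarith [mul_le_mul_of_nonneg_left h1 h.le, mul_nonneg hA.le (sub_nonneg.2 hax)]
    · have h1 := mono x a h hax
      have h3 := Real.rpow_le_rpow h.le hax hp0.le
      rw [key a ha] at h3
      rw [abs_of_nonpos (by linarith), abs_of_nonpos (by linarith : x - a ≤ 0)]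
      rw [key x h]
      nlinarith [mul_le_mul_of_nonneg_left h1 h.le, mul_nonneg hA.le (sub_nonneg.2 hax)]

lemma spow_lip {a p : ℝ} (hp0 : 0 < p) (hp1 : p < 1) (ha : a ≠ 0) (x : ℝ) :
    |spow x p - spow a p| ≤ 2 * |a| ^ (p - 1) * |x - a| := by
  rcases lt_or_gt_of_ne ha with h | h
  · have := spow_lip_pos hp0 hp1 (neg_pos.2 h) (-x)
    rw [spow_neg', spow_neg'] at this
    rw [abs_of_neg h, abs_sub_comm (spow x p), abs_sub_comm x]
    rwa [neg_sub_neg, neg_sub_neg] at this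
  · rw [abs_of_pos h]; exact spow_lip_pos hp0 hp1 h x

lemma memLalpha_iff' {S : Type*} [MeasurableSpace S] {μ : Measure S} {α : ℝ} (hα : 1 < α)
    {f : S → ℝ} : MemLalpha α μ f ↔ MemLp f (ENNReal.ofReal α) μ := by
  have h0 : ENNReal.ofReal α ≠ 0 := by simp; linarith
  constructor
  · rintro ⟨h1, h2⟩
    refine (integrable_norm_rpow_iff h1 h0 ENNReal.ofReal_ne_top).1 ?_
    rw [ENNReal.toReal_ofReal (by linarith)]
    exact h2
  · intro h
    refine ⟨h.1, ?_⟩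
    have := (integrable_norm_rpow_iff h.1 h0 ENNReal.ofReal_ne_top).2 h
    rwa [ENNReal.toReal_ofReal (by linarith)] at this

lemma key1 {S : Type*} [MeasurableSpace S] {μ : Measure S} {α : ℝ} (hα : 1 < α)
    {a b : S → ℝ} (ha : MemLalpha α μ a) (hb : MemLalpha α μ b) (t : ℝ) :
    Integrable (fun s => spow (a s + t * b s) (α - 1) * b s) μ ∧
    HasDerivAt (fun t => ∫ s, |a s + t * b s| ^ α ∂μ)
      (α * ∫ s, spow (a s + t * b s) (α - 1) * b s ∂μ) t := by
  have hmA := (memLalpha_iff' hα).1 ha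
  have hmB := (memLalpha_iff' hα).1 hb
  have hB : Integrable (fun s => α * |(|a s| + (|t| + 2) * |b s|)| ^ α) μ := by
    have : MemLalpha α μ (fun s => |a s| + (|t| + 2) * |b s|) :=
      (memLalpha_iff' hα).2 (hmA.abs.add (hmB.abs.const_mul _))
    exact this.2.const_mul α
  have hF0 : Integrable (fun s => |a s + t * b s| ^ α) μ :=
    ((memLalpha_iff' hα).2 (hmA.add (hmB.const_mul t)) :
      MemLalpha α μ (fun s => a s + t * b s)).2
  have hmeas : ∀ x : ℝ, AEMeasurable (fun s => a s + x * b s) μ := fun x =>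
    ha.1.aemeasurable.add (hb.1.aemeasurable.const_mul x)
  have main := hasDerivAt_integral_of_dominated_loc_of_deriv_le (μ := μ) (𝕜 := ℝ)
    (F := fun x s => |a s + x * b s| ^ α)
    (F' := fun x s => α * (spow (a s + x * b s) (α - 1) * b s))
    (x₀ := t) (s := Metric.ball t 1)
    (bound := fun s => α * |(|a s| + (|t| + 2) * |b s|)| ^ α)
    (Metric.ball_mem_nhds t one_pos)
    (Eventually.of_forall fun x => ((hmeas x).norm.pow_const α).aestronglyMeasurable)
    hF0
    ((((spow_measurable (α - 1)).comp_aemeasurable (hmeas t)).mul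
      hb.1.aemeasurable).const_mul α).aestronglyMeasurable
    (Eventually.of_forall ?_) hB (Eventually.of_forall ?_)
  · obtain ⟨h1, h2⟩ := main
    refine ⟨?_, ?_⟩
    · have := h1.const_mul α⁻¹
      refine this.congr (Eventually.of_forall fun s => ?_)
      have : α ≠ 0 := by linarith
      field_simp
    · rwa [integral_const_mul] at h2
  · intro s x hx
    have hx' : |x| ≤ |t| + 1 := by
      have h1 : |x - t| < 1 := by simpa [Real.dist_eq] using hx
      have h2 := abs_sub_abs_le_abs_sub x t
      linarith
    set M := |a s| + (|t| + 2) * |b s| with hM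
    have hM0 : 0 ≤ M := by positivity
    have hw : |a s + x * b s| ≤ M := by
      refine (abs_add_le _ _).trans ?_
      rw [abs_mul]
      have := mul_le_mul_of_nonneg_right (show |x| ≤ |t| + 2 by linarith) (abs_nonneg (b s))
      linarith
    have hbM : |b s| ≤ M := by
      nlinarith [abs_nonneg (a s), abs_nonneg (b s), mul_nonneg (abs_nonneg t) (abs_nonneg (b s))]
    have hMα : M ^ α = M ^ (α - 1) * M := by
      rcases hM0.eq_or_lt with h | h
      · rw [← h, Real.zero_rpow (by linarith)]; simp
      · rw [Real.rpow_sub_one h.ne']; field_simp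
    rw [Real.norm_eq_abs, abs_mul, abs_mul, abs_of_pos (by linarith : 0 < α), abs_of_nonneg hM0, hMα]
    refine mul_le_mul_of_nonneg_left ?_ (by linarith)
    refine mul_le_mul ?_ hbM (abs_nonneg _) (Real.rpow_nonneg hM0 _)
    exact (spow_abs_le _ _).trans (Real.rpow_le_rpow (abs_nonneg _) hw (by linarith))
  · intro s x _
    have h1 := hasDerivAt_abs_rpow (a s + x * b s) hα
    have h2 : HasDerivAt (fun x : ℝ => a s + x * b s) (b s) x := by
      simpa using ((hasDerivAt_id x).mul_const (b s)).const_add (a s)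
    have h3 := h1.comp x h2
    refine HasDerivAt.congr_deriv h3 ?_
    rw [spow_eq', show α - 1 - 1 = α - 2 by ring]; ring

lemma nrm_rpow {S : Type*} [MeasurableSpace S] (μ : Measure S) {α : ℝ} (hα : 1 < α)
    (f : S → ℝ) : nrm α μ f ^ α = ∫ s, |f s| ^ α ∂μ := by
  unfold nrm
  rw [← Real.rpow_mul (integral_nonneg fun s => Real.rpow_nonneg (abs_nonneg _) _),
    one_div_mul_cancel (by linarith), Real.rpow_one]

lemma key2 {S : Type*} [MeasurableSpace S] {μ : Measure S} {α : ℝ} (hα1 : 1 < α) (hα2 : α < 2)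
    {f g : S → ℝ} (hf : MemLalpha α μ f) (hg : MemLalpha α μ g) (u v : ℝ)
    (hfin : (∫⁻ s, (if f s = 0 ∨ g s = 0 then (0:ℝ≥0∞) else
        (ENNReal.ofReal |u * f s + v * g s|) ^ (α - 2) *
          ENNReal.ofReal (|f s| * |g s|)) ∂μ) < ⊤) :
    HasDerivAt (fun v => ∫ s, spow (u * f s + v * g s) (α - 1) * f s ∂μ)
      ((α - 1) * ∫ s, (if f s = 0 ∨ g s = 0 then (0:ℝ) else
        |u * f s + v * g s| ^ (α - 2) * (f s * g s)) ∂μ) v := by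
  have hfm := hf.1.aemeasurable
  have hgm := hg.1.aemeasurable
  have hmeas : ∀ x : ℝ, AEMeasurable (fun s => u * f s + x * g s) μ := fun x =>
    (hfm.const_mul u).add (hgm.const_mul x)
  -- get rid of the case distinction up to a.e. measurability
  have hF0 : Integrable (fun s => spow (u * f s + v * g s) (α - 1) * f s) μ := by
    have := (key1 (μ := μ) hα1 (a := fun s => v * g s) (b := f)
      ((memLalpha_iff' hα1).2 (((memLalpha_iff' hα1).1 hg).const_mul v)) hf u).1
    refine this.congr (Eventually.of_forall fun s => ?_)
    simp only [add_comm]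
  have measK : AEMeasurable (fun s => if f s = 0 ∨ g s = 0 then (0:ℝ) else
        |u * f s + v * g s| ^ (α - 2) * (f s * g s)) μ := by
    have : (fun s => if f s = 0 ∨ g s = 0 then (0:ℝ) else
        |u * f s + v * g s| ^ (α - 2) * (f s * g s)) =
        fun s => |u * f s + v * g s| ^ (α - 2) * (f s * g s) := by
      funext s
      split_ifs with h
      · rcases h with h | h <;> simp [h]
      · rfl
    rw [this]
    exact ((hmeas v).norm.pow_const (α - 2)).mul (hfm.mul hgm)
  have measE : AEMeasurable (fun s => if f s = 0 ∨ g s = 0 then (0:ℝ≥0∞) else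
        (ENNReal.ofReal |u * f s + v * g s|) ^ (α - 2) *
          ENNReal.ofReal (|f s| * |g s|)) μ := by
    classical
    have h1 : Measurable (fun q : ℝ × ℝ => if q.1 = 0 ∨ q.2 = 0 then (0:ℝ≥0∞) else
        (ENNReal.ofReal |u * q.1 + v * q.2|) ^ (α - 2) *
          ENNReal.ofReal (|q.1| * |q.2|)) := by
      refine Measurable.ite ?_ measurable_const ?_
      · exact (measurableSet_eq_fun measurable_fst measurable_const).union
          (measurableSet_eq_fun measurable_snd measurable_const)
      · refine Measurable.mul ?_ ?_
        · refine Measurable.pow_const (ENNReal.measurable_ofReal.comp ?_) _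
          exact Measurable.norm (by fun_prop : Measurable fun q : ℝ × ℝ => u * q.1 + v * q.2)
        · exact ENNReal.measurable_ofReal.comp (measurable_fst.norm.mul measurable_snd.norm)
    exact h1.comp_aemeasurable (hfm.prodMk hgm)
  have hne : ∀ᵐ s ∂μ, f s = 0 ∨ g s = 0 ∨ u * f s + v * g s ≠ 0 := by
    filter_upwards [ae_lt_top' measE hfin.ne] with s hs
    by_contra! hcon
    obtain ⟨h1, h2, h3⟩ := hcon
    rw [if_neg (by tauto), h3] at hs
    rw [abs_zero, ENNReal.ofReal_zero, ENNReal.zero_rpow_of_neg (by linarith),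
      ENNReal.top_mul] at hs
    · exact lt_irrefl _ hs
    · have : 0 < |f s| * |g s| := by positivity
      exact (ENNReal.ofReal_pos.2 this).ne'
  have hK : Integrable (fun s => if f s = 0 ∨ g s = 0 then (0:ℝ) else
        |u * f s + v * g s| ^ (α - 2) * (f s * g s)) μ := by
    refine ⟨measK.aestronglyMeasurable, ?_⟩
    refine lt_of_le_of_lt (le_of_eq (lintegral_congr_ae ?_)) hfin
    filter_upwards [hne] with s hs
    split_ifs with h
    · simp
    · have h3 : u * f s + v * g s ≠ 0 := by tauto
      rw [ENNReal.ofReal_rpow_of_pos (abs_pos.2 h3), ← ENNReal.ofReal_mul (by positivity),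
        ← ofReal_norm, Real.norm_eq_abs, abs_mul, abs_mul,
        abs_of_nonneg (Real.rpow_nonneg (abs_nonneg _) _)]
  have main := hasFDerivAt_integral_of_dominated_loc_of_lip' (μ := μ) (𝕜 := ℝ)
    (F := fun x s => spow (u * f s + x * g s) (α - 1) * f s)
    (F' := fun s => ContinuousLinearMap.toSpanSingleton ℝ ((α - 1) *
      (if f s = 0 ∨ g s = 0 then (0:ℝ) else |u * f s + v * g s| ^ (α - 2) * (f s * g s))))
    (x₀ := v) (s := Set.univ)
    (bound := fun s => 2 * ‖(if f s = 0 ∨ g s = 0 then (0:ℝ) else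
        |u * f s + v * g s| ^ (α - 2) * (f s * g s))‖)
    univ_mem
    (fun x _ => (((spow_measurable (α - 1)).comp_aemeasurable (hmeas x)).mul
      hfm).aestronglyMeasurable) hF0
    ?_ ?_ (hK.norm.const_mul 2) ?_
  · have h2 := main.2
    have h3 := h2.hasDerivAt
    rw [ContinuousLinearMap.integral_apply main.1] at h3
    refine h3.congr_deriv ?_
    simp only [ContinuousLinearMap.toSpanSingleton_apply, one_smul]
    rw [integral_const_mul]
  · exact (ContinuousLinearMap.toSpanSingletonCLE (𝕜 := ℝ) (E := ℝ)).continuous.comp_aestronglyMeasurable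
      (measK.const_mul (α - 1)).aestronglyMeasurable
  · filter_upwards [hne] with s hs x _
    split_ifs with h
    · rcases h with h | h <;> simp [h]
    · have h3 : u * f s + v * g s ≠ 0 := by tauto
      have := spow_lip (p := α - 1) (by linarith) (by linarith) h3 (u * f s + x * g s)
      rw [← sub_mul, Real.norm_eq_abs, Real.norm_eq_abs, Real.norm_eq_abs, abs_mul, abs_mul, abs_mul,
        abs_of_nonneg (Real.rpow_nonneg (abs_nonneg _) _)]
      rw [show α - 1 - 1 = α - 2 by ring,
        show u * f s + x * g s - (u * f s + v * g s) = (x - v) * g s by ring, abs_mul] at this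
      have := mul_le_mul_of_nonneg_right this (abs_nonneg (f s))
      linarith
  · filter_upwards [hne] with s hs
    rw [← hasDerivAt_iff_hasFDerivAt]
    split_ifs with h
    · rcases h with h | h
      · simpa [h] using hasDerivAt_const v (0:ℝ)
      · simpa [h] using hasDerivAt_const v (spow (u * f s) (α - 1) * f s)
    · have h3 : u * f s + v * g s ≠ 0 := by tauto
      have h1 := spow_hasDerivAt (α - 1) h3
      have h2 : HasDerivAt (fun x : ℝ => u * f s + x * g s) (g s) v := by
        simpa using ((hasDerivAt_id v).mul_const (g s)).const_add (u * f s)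
      have h4 := (h1.comp v h2).mul_const (f s)
      refine HasDerivAt.congr_deriv h4 ?_
      rw [show α - 1 - 1 = α - 2 by ring]; ring

/-- Paper's Lemma 3.2. -/
theorem stmt7 {S : Type*} [MeasurableSpace S] (μ : Measure S) [SigmaFinite μ]
    (α : ℝ) (hα1 : 1 < α) (hα2 : α < 2) (f g : S → ℝ)
    (hf : MemLalpha α μ f) (hg : MemLalpha α μ g) (u v : ℝ) :
    HasDerivAt (fun u' => Ufun α μ f g u' v) (D1 α μ f g u v) u ∧
    ((∫⁻ s, (if f s = 0 ∨ g s = 0 then (0:ℝ≥0∞) else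
        (ENNReal.ofReal |u * f s + v * g s|) ^ (α - 2) *
          ENNReal.ofReal (|f s| * |g s|)) ∂μ) < ⊤ →
      HasDerivAt (fun v' => D1 α μ f g u v') (D2 α μ f g u v) v) := by
  have z : MemLalpha α μ (fun _ => (0:ℝ)) :=
    (memLalpha_iff' hα1).2 (MemLp.zero' )
  have cm : ∀ (c : ℝ) (h : S → ℝ), MemLalpha α μ h → MemLalpha α μ (fun s => c * h s) :=
    fun c h hh => (memLalpha_iff' hα1).2 (((memLalpha_iff' hα1).1 hh).const_mul c)
  have dG1 := (key1 hα1 (cm v g hg) hf u).2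
  have dG2 := (key1 hα1 (cm u f hf) hg v).2
  have dF := (key1 hα1 z hf u).2
  have dH := (key1 hα1 z hg v).2
  simp only [zero_add] at dF dH
  constructor
  · unfold Ufun D1
    simp only [nrm_rpow μ hα1]
    have e : ∀ x s, v * g s + x * f s = x * f s + v * g s := fun x s => add_comm _ _
    simp only [e] at dG1
    have h := (dG1.neg.exp).sub ((dF.neg.sub_const (∫ s, |v * g s| ^ α ∂μ)).exp)
    refine HasDerivAt.congr_deriv h ?_
    simp only [Pi.neg_apply]
    ring
  · intro hfin
    have dJ := key2 hα1 hα2 hf hg u v hfin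
    unfold D1 D2
    simp only [nrm_rpow μ hα1]
    have h := ((dJ.const_mul (-α)).mul (dG2.neg.exp)).add
      (((dH.const_sub (-∫ s, |u * f s| ^ α ∂μ)).exp).const_mul
        (α * (∫ s, spow (u * f s) (α - 1) * f s ∂μ)))
    refine HasDerivAt.congr_deriv h ?_
    simp only [Pi.neg_apply]
    ring
end
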